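/- Let Ω ⊂ ℝⁿ be a bounded, open, connected set of class C², and let ν be the inner unit normal to ∂Ω. For i = 1,…,m let u_i ∈ C²(cl Ω) with u_i > 0 in Ω solve −Δu_i = f_i(u_i) in Ω, u_i = 0 on ∂Ω, together with the overdetermined condition F(∂u₁/∂ν, …, ∂u_m/∂ν) = c on ∂Ω for a constant c ∈ ℝ. Assume: (i) each f_i = g_i + h_i where g_i is locally Lipschitz on ℝ and h_i is non-decreasing; (ii) F : [0,∞)^m → ℝ is C¹ on (0,∞)^m; (iii) F is non-decreasing in each variable on [0,∞)^m; (iv) there exists j ∈ {1,…,m} with ∂F/∂x_j > 0 on (0,∞)^m. Then Ω is a ball of some radius R, each u_i is radially symmetric about its center, and ∂u_i/∂r < 0 for 0 < r < R and every i. -/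

import Mathlib

/-!
The proof is the method of moving planes. For a unit vector `e`, the plane `{⟪x, e⟫ = μ}` is moved
in from infinity. A position is good (`GoodPlane`) if the part of `closure Ω` beyond it reflects into
`Ω` with strictly larger values of every `u i`, and `e` points strictly outwards where the plane meets
`∂Ω`. Good positions form an open set, so there is a first bad position `l` (`exists_critical`).
Openness rests on Hopf's lemma at interior points of the plane and on the fact that `u i` decreases in
the direction `e` near boundary points at which `e` points outwards (`PosSol.deriv_neg_near`). The
latter holds even if the normal derivative vanishes: then `f i 0` is effectively negative, the Hessian
at the boundary point is a positive multiple of `ν ⊗ ν`, and it controls the sign of the derivative.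
Because the monotone part of `f i` has the favourable sign, the difference
`w i = u i ∘ refl - u i ≥ 0` satisfies `Δ (w i) ≤ L * w i` on the cap, with no regularity of that
part needed.

At the critical position suppose every `w i` were positive inside the cap. Then either the reflected
boundary touches `∂Ω`, where Hopf's lemma makes every normal derivative strictly larger at the
reflected point than at the original one (`normal_lt`), which is incompatible with
`F(∂u₁/∂ν, …, ∂u_m/∂ν) = c`; or the plane meets `∂Ω` orthogonally. In the latter case Serrin's corner
lemma (`hopf_corner`) yields `∂²(u i)/∂e∂ν < 0` for all `i` (`mixed_neg`), and differentiating the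
Neumann condition along the boundary in the direction `e` is contradictory. If some normal derivative
vanishes at the corner, it is a boundary minimum, which is contradictory as well.

Hence some `w i` vanishes inside the cap (`exists_touching`), and the strong maximum principle with
the connectedness of `Ω` shows that `Ω` is symmetric about the critical plane
(`PosSol.symmetric_of_touching`). Using `e` and `-e`, all `u i` are symmetric as well, and every
critical plane passes through a maximum point `x₀` of `u j` (`exists_center`). Points at equal
distance from `x₀` are exchanged by such a reflection, so `Ω` and all `u i` are radial about `x₀`, and
a radial bounded connected open set containing its centre is a ball.
-/

open Metric Set MeasureTheory Filter Bornology
open scoped RealInnerProductSpace Topology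

noncomputable section

/-- The Laplacian of `u : ℝⁿ → ℝ`, as the sum of the pure second partial derivatives. -/
def lap {n : ℕ} (u : EuclideanSpace ℝ (Fin n) → ℝ) (x : EuclideanSpace ℝ (Fin n)) : ℝ :=
  ∑ i : Fin n, iteratedFDeriv ℝ 2 u x ![EuclideanSpace.single i 1, EuclideanSpace.single i 1]

/-- `Ω` is a domain of class `C²`, with `ν` its inward unit normal on `∂Ω`. -/
def IsC2DomainWithInnerNormal {n : ℕ} (Ω : Set (EuclideanSpace ℝ (Fin n)))
    (ν : EuclideanSpace ℝ (Fin n) → EuclideanSpace ℝ (Fin n)) : Prop :=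
  ∀ x ∈ frontier Ω, ∃ (U : Set (EuclideanSpace ℝ (Fin n))) (φ : EuclideanSpace ℝ (Fin n) → ℝ),
    IsOpen U ∧ x ∈ U ∧ ContDiffOn ℝ 2 φ U ∧ (∀ y ∈ U, gradient φ y ≠ 0) ∧
    Ω ∩ U = {y ∈ U | φ y < 0} ∧ frontier Ω ∩ U = {y ∈ U | φ y = 0} ∧
    ∀ y ∈ frontier Ω ∩ U, ν y = -(‖gradient φ y‖⁻¹ • gradient φ y)

/-! ### Second-order expansions and the comparison principle -/

/-- One-sided second-order Taylor expansion of a real function, where only the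
derivative `ψ` of `φ` is assumed differentiable, and only at `0` from the right. -/
lemma taylor_right (φ ψ : ℝ → ℝ) (c δ : ℝ) (hδ : 0 < δ)
    (h1 : ∀ τ ∈ Icc 0 δ, HasDerivWithinAt φ (ψ τ) (Icc 0 δ) τ)
    (h2 : HasDerivWithinAt ψ c (Ici 0) 0) :
    Tendsto (fun τ => (φ τ - φ 0 - τ * ψ 0) / τ ^ 2) (𝓝[>] 0) (𝓝 (c / 2)) := by
  rw [Metric.tendsto_nhds]
  intro ε hε
  have h3 := (hasDerivWithinAt_iff_isLittleO.1 h2).def (half_pos hε)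
  obtain ⟨η, hη, h4⟩ := Metric.mem_nhdsWithin_iff.1 h3
  have : ∀ᶠ τ in 𝓝[>] (0:ℝ), τ ∈ Ioo 0 (min η δ) := Ioo_mem_nhdsGT (lt_min hη hδ)
  filter_upwards [this] with T hT
  have hT0 : 0 < T := hT.1
  have hTη : T < η := hT.2.trans_le (min_le_left _ _)
  have hTδ : T < δ := hT.2.trans_le (min_le_right _ _)
  have hk : ∀ τ ∈ Icc 0 T, HasDerivWithinAt (fun τ => φ τ - τ * ψ 0 - c / 2 * τ ^ 2)
      (ψ τ - ψ 0 - c * τ) (Icc 0 T) τ := by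
    intro τ hτ
    have a1 := (h1 τ ⟨hτ.1, hτ.2.trans hTδ.le⟩).mono (Icc_subset_Icc_right hTδ.le)
    have a2 : HasDerivAt (fun τ : ℝ => τ * ψ 0 + c / 2 * τ ^ 2) (ψ 0 + c * τ) τ := by
      have := ((hasDerivAt_id τ).mul_const (ψ 0)).add (((hasDerivAt_id τ).pow 2).const_mul (c/2))
      refine this.congr_deriv ?_
      simp; ring
    refine ((a1.sub a2.hasDerivWithinAt).congr_deriv (by ring)).congr_of_eventuallyEq_of_mem ?_ hτ
    exact Eventually.of_forall fun x => by simp only [Pi.sub_apply]; ring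
  have hb : ∀ τ ∈ Icc 0 T, ‖ψ τ - ψ 0 - c * τ‖ ≤ ε / 2 * T := by
    intro τ hτ
    have := h4 ⟨(by
      rw [Metric.mem_ball, dist_zero_right, Real.norm_eq_abs, abs_of_nonneg hτ.1]
      linarith [hτ.2] : τ ∈ ball (0:ℝ) η), hτ.1⟩
    simp only [mem_ofPred_eq, sub_zero, smul_eq_mul] at this
    rw [mul_comm c τ]
    refine this.trans ?_
    rw [Real.norm_eq_abs, abs_of_nonneg hτ.1]
    have := hτ.2
    gcongr
  have := (convex_Icc 0 T).norm_image_sub_le_of_norm_hasDerivWithin_le hk hb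
    (left_mem_Icc.2 hT0.le) (right_mem_Icc.2 hT0.le)
  simp only [zero_mul, sub_zero, Real.norm_eq_abs, abs_of_pos hT0] at this
  rw [Real.dist_eq]
  have e1 : (φ T - φ 0 - T * ψ 0) / T ^ 2 - c / 2
      = (φ T - T * ψ 0 - c / 2 * T ^ 2 - (φ 0 - c/2 * 0 ^ 2)) / T ^ 2 := by
    field_simp; ring
  rw [e1, abs_div, abs_of_pos (by positivity : 0 < T ^ 2), div_lt_iff₀ (by positivity)]
  refine this.trans_lt ?_
  nlinarith [mul_pos hT0 hT0]

/-- Second-order expansion of `u` at `x` along a segment that starts at `x` and runs inside `S`;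
`x` may be a boundary point of `S`. -/
lemma taylor_seg {n : ℕ} (S : Set (EuclideanSpace ℝ (Fin n))) (u : EuclideanSpace ℝ (Fin n) → ℝ)
    (D : EuclideanSpace ℝ (Fin n) → EuclideanSpace ℝ (Fin n) →L[ℝ] ℝ)
    (D2 : EuclideanSpace ℝ (Fin n) →L[ℝ] EuclideanSpace ℝ (Fin n) →L[ℝ] ℝ)
    (x v : EuclideanSpace ℝ (Fin n)) (hx : x ∈ S)
    (hseg : ∀ᶠ τ in 𝓝[>] (0:ℝ), x + τ • v ∈ S)
    (h1 : ∀ y ∈ S, HasFDerivWithinAt u (D y) S y) (h2 : HasFDerivWithinAt D D2 S x) :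
    Tendsto (fun τ : ℝ => (u (x + τ • v) - u x - τ * D x v) / τ ^ 2) (𝓝[>] 0)
      (𝓝 (D2 v v / 2)) := by
  obtain ⟨δ, hδ, h3⟩ := mem_nhdsGT_iff_exists_Ioo_subset.1 hseg
  have hδ0 : (0:ℝ) < δ := hδ
  have hmem : ∀ τ ∈ Icc 0 (δ / 2), x + τ • v ∈ S := by
    intro τ hτ
    rcases hτ.1.eq_or_lt with h | h
    · simpa [← h] using hx
    · exact h3 ⟨h, by linarith [hτ.2]⟩
  have hl : ∀ τ : ℝ, HasDerivAt (fun τ : ℝ => x + τ • v) v τ := fun τ => by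
    simpa using ((hasDerivAt_id τ).smul_const v).const_add x
  have := taylor_right (fun τ => u (x + τ • v)) (fun τ => D (x + τ • v) v) (D2 v v) (δ / 2)
    (by linarith) ?_ ?_
  · simpa using this
  · intro τ hτ
    exact (h1 _ (hmem τ hτ)).comp_hasDerivWithinAt τ (hl τ).hasDerivWithinAt
      (fun s hs => hmem s hs)
  · have a : HasDerivWithinAt (fun τ : ℝ => D (x + τ • v)) (D2 v) (Icc 0 (δ/2)) 0 := by
      refine HasFDerivWithinAt.comp_hasDerivWithinAt (t := S) 0 ?_ (hl 0).hasDerivWithinAt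
        (fun s hs => hmem s hs)
      simpa using h2
    have b := a.clm_apply (hasDerivWithinAt_const (0:ℝ) (Icc 0 (δ/2)) v)
    simp only [map_zero, add_zero] at b
    exact b.mono_of_mem_nhdsWithin (Icc_mem_nhdsGE (by linarith))

/-- Pure second derivatives as limits of symmetric second difference quotients. -/
lemma symm_diff_tendsto {n : ℕ} {w : EuclideanSpace ℝ (Fin n) → ℝ}
    {x : EuclideanSpace ℝ (Fin n)} (hw : ContDiffAt ℝ 2 w x) (v : EuclideanSpace ℝ (Fin n)) :
    Tendsto (fun τ : ℝ => (w (x + τ • v) + w (x - τ • v) - 2 * w x) / τ ^ 2) (𝓝[>] 0)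
      (𝓝 (iteratedFDeriv ℝ 2 w x ![v, v])) := by
  obtain ⟨S, hS, hxS, hw2⟩ := hw.contDiffOn' (m := 2) le_rfl (by simp)
  have hw3 : ContDiffOn ℝ 2 w S := by simpa using hw2
  have h1 : ∀ y ∈ S, HasFDerivWithinAt w (fderiv ℝ w y) S y := fun y hy =>
    ((hw3.contDiffAt (hS.mem_nhds hy)).differentiableAt (by simp)).hasFDerivAt.hasFDerivWithinAt
  have h2 : HasFDerivWithinAt (fderiv ℝ w) (fderiv ℝ (fderiv ℝ w) x) S x :=
    ((hw.fderiv_right (m := 1) (by norm_num)).differentiableAt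
      (by simp)).hasFDerivAt.hasFDerivWithinAt
  have hseg : ∀ v : EuclideanSpace ℝ (Fin n), ∀ᶠ τ in 𝓝[>] (0:ℝ), x + τ • v ∈ S := by
    intro v
    have : Continuous (fun τ : ℝ => x + τ • v) := by fun_prop
    exact nhdsWithin_le_nhds (this.continuousAt.preimage_mem_nhds
      (by simpa using hS.mem_nhds hxS))
  have t1 := taylor_seg S w _ _ x v hxS (hseg v) h1 h2
  have t2 := taylor_seg S w _ _ x (-v) hxS (hseg (-v)) h1 h2
  rw [iteratedFDeriv_two_apply]
  refine ((t1.add t2).congr fun τ => ?_).trans_eq ?_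
  · simp only [smul_neg, map_neg, ← sub_eq_add_neg]; ring
  · congr 1; simp

lemma lap_eq_laplacian {n : ℕ} (u : EuclideanSpace ℝ (Fin n) → ℝ) :
    lap u = Laplacian.laplacian u := by
  rw [InnerProductSpace.laplacian_eq_iteratedFDeriv_orthonormalBasis u
    (EuclideanSpace.basisFun (Fin n) ℝ)]
  ext x; simp [lap]

lemma lap_sub {n : ℕ} {u v : EuclideanSpace ℝ (Fin n) → ℝ} {x : EuclideanSpace ℝ (Fin n)}
    (hu : ContDiffAt ℝ 2 u x) (hv : ContDiffAt ℝ 2 v x) :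
    lap (fun y => u y - v y) x = lap u x - lap v x := by
  simp only [lap_eq_laplacian]
  exact hu.laplacian_sub hv

/-- The Laplacian read off from the even part of the function along the coordinate axes. -/
lemma lap_eq_of_expansion {n : ℕ} {z : EuclideanSpace ℝ (Fin n) → ℝ}
    {x : EuclideanSpace ℝ (Fin n)} (hz : ContDiffAt ℝ 2 z x) (c d : Fin n → ℝ)
    (h : ∀ i, ∀ τ : ℝ, z (x + τ • EuclideanSpace.single i 1)
      + z (x - τ • EuclideanSpace.single i 1) - 2 * z x = c i * τ ^ 2 + d i * τ ^ 4) :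
    lap z x = ∑ i, c i := by
  unfold lap
  refine Finset.sum_congr rfl fun i _ => ?_
  refine tendsto_nhds_unique (symm_diff_tendsto hz (EuclideanSpace.single i 1)) ?_
  have : Tendsto (fun τ : ℝ => c i + d i * τ ^ 2) (𝓝[>] 0) (𝓝 (c i)) := by
    have : Continuous (fun τ : ℝ => c i + d i * τ ^ 2) := by fun_prop
    exact tendsto_nhdsWithin_of_tendsto_nhds (by simpa using this.tendsto 0)
  refine this.congr' ?_
  filter_upwards [self_mem_nhdsWithin] with τ hτ
  have : (τ:ℝ) ≠ 0 := ne_of_gt hτ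
  rw [h]; field_simp

lemma lap_nonneg_of_isLocalMin {n : ℕ} {v : EuclideanSpace ℝ (Fin n) → ℝ}
    {x : EuclideanSpace ℝ (Fin n)} (hv : ContDiffAt ℝ 2 v x) (hmin : IsLocalMin v x) :
    0 ≤ lap v x := by
  refine Finset.sum_nonneg fun i _ => ?_
  refine ge_of_tendsto (symm_diff_tendsto hv (EuclideanSpace.single i 1)) ?_
  have c1 : Continuous (fun τ : ℝ => x + τ • (EuclideanSpace.single i 1 :
    EuclideanSpace ℝ (Fin n))) := by fun_prop
  have c2 : Continuous (fun τ : ℝ => x - τ • (EuclideanSpace.single i 1 :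
    EuclideanSpace ℝ (Fin n))) := by fun_prop
  have e1 : ∀ᶠ τ in 𝓝 (0:ℝ), v x ≤ v (x + τ • EuclideanSpace.single i 1) :=
    (c1.tendsto' 0 x (by simp)).eventually hmin
  have e2 : ∀ᶠ τ in 𝓝 (0:ℝ), v x ≤ v (x - τ • EuclideanSpace.single i 1) :=
    (c2.tendsto' 0 x (by simp)).eventually hmin
  filter_upwards [nhdsWithin_le_nhds e1, nhdsWithin_le_nhds e2] with τ h1 h2
  apply div_nonneg _ (by positivity)
  linarith

/-- Comparison principle: a strict subsolution `z` of `Δz > C z` stays below a supersolution `w`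
of `Δw ≤ C w` on the compact set `A` if it does so wherever the differential inequalities are not
available, in particular on the boundary of `A`. -/
lemma comparison {n : ℕ} {A : Set (EuclideanSpace ℝ (Fin n))} (hA : IsCompact A)
    {w z : EuclideanSpace ℝ (Fin n) → ℝ} (hw : ContinuousOn w A) (hz : ContinuousOn z A)
    {C : ℝ} (hC : 0 ≤ C)
    (h : ∀ x ∈ A, z x ≤ w x ∨ (A ∈ 𝓝 x ∧ ContDiffAt ℝ 2 w x ∧ lap w x ≤ C * w x ∧
      ContDiffAt ℝ 2 z x ∧ C * z x < lap z x)) :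
    ∀ x ∈ A, z x ≤ w x := by
  intro x hx
  obtain ⟨p, hp, hmin⟩ := hA.exists_isMinOn ⟨x, hx⟩ (hw.sub hz)
  suffices z p ≤ w p by
    have h1 := hmin hx
    simp only [mem_ofPred_eq, Pi.sub_apply] at h1
    linarith
  by_contra! hneg
  rcases h p hp with h0 | ⟨hn, hw2, hlw, hz2, hlz⟩
  · linarith
  · have h1 := lap_nonneg_of_isLocalMin (hw2.sub hz2) (hmin.isLocalMin hn)
    have h2 := lap_sub hw2 hz2
    rw [h2] at h1
    nlinarith

/-! ### Barriers, Hopf's lemma and the strong maximum principle -/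

lemma norm_sq_add_single {n : ℕ} (x : EuclideanSpace ℝ (Fin n)) (i : Fin n) (τ : ℝ) :
    ‖x + τ • EuclideanSpace.single i (1:ℝ)‖ ^ 2 = ‖x‖ ^ 2 + 2 * τ * x i + τ ^ 2 := by
  rw [norm_add_sq_real, inner_smul_right, EuclideanSpace.inner_single_right, norm_smul]
  simp; ring

lemma norm_sq_sub_single {n : ℕ} (x : EuclideanSpace ℝ (Fin n)) (i : Fin n) (τ : ℝ) :
    ‖x - τ • EuclideanSpace.single i (1:ℝ)‖ ^ 2 = ‖x‖ ^ 2 - 2 * τ * x i + τ ^ 2 := by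
  rw [norm_sub_sq_real, inner_smul_right, EuclideanSpace.inner_single_right, norm_smul]
  simp; ring

/-- The radial barrier `s + K s²`, where `s = r² - |x - y|²` vanishes on the sphere. -/
def barrier {n : ℕ} (y : EuclideanSpace ℝ (Fin n)) (r K : ℝ) (x : EuclideanSpace ℝ (Fin n)) : ℝ :=
  (r ^ 2 - ‖x - y‖ ^ 2) + K * (r ^ 2 - ‖x - y‖ ^ 2) ^ 2

lemma barrier_contDiff {n : ℕ} (y : EuclideanSpace ℝ (Fin n)) (r K : ℝ) :
    ContDiff ℝ 2 (barrier y r K) := by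
  have : ContDiff ℝ 2 (fun x : EuclideanSpace ℝ (Fin n) => ‖x - y‖ ^ 2) :=
    (contDiff_norm_sq ℝ).comp (contDiff_id.sub contDiff_const)
  unfold barrier
  fun_prop

lemma lap_smul_barrier {n : ℕ} (x y : EuclideanSpace ℝ (Fin n)) (r K ε : ℝ) :
    lap (fun x => ε * barrier y r K x) x = ε * (-2 * n + 8 * K * r ^ 2
      - K * (r ^ 2 - ‖x - y‖ ^ 2) * (8 + 4 * n)) := by
  have hz : ContDiffAt ℝ 2 (fun x => ε * barrier y r K x) x :=
    (contDiff_const.mul (barrier_contDiff y r K)).contDiffAt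
  rw [lap_eq_of_expansion hz (fun i => ε * (-2 - 4 * K * (r ^ 2 - ‖x - y‖ ^ 2)
    + 8 * K * ((x - y) i) ^ 2)) (fun _ => ε * (2 * K))]
  · rw [← Finset.mul_sum, Finset.sum_add_distrib, ← Finset.mul_sum]
    have : ∑ i, ((x - y) i) ^ 2 = ‖x - y‖ ^ 2 := (EuclideanSpace.real_norm_sq_eq _).symm
    rw [this, Finset.sum_const, Finset.card_univ, Fintype.card_fin, nsmul_eq_mul]
    ring
  · intro i τ
    unfold barrier
    rw [add_sub_right_comm x, sub_right_comm x, norm_sq_add_single, norm_sq_sub_single]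
    ring

/-- The Laplacian of the barrier for a corner: the product of the radial barrier and of the
height above a hyperplane through the centre. The radial part behaves as in dimension `n + 2`. -/
lemma lap_corner_barrier {n : ℕ} (x y e : EuclideanSpace ℝ (Fin n)) (r K ε : ℝ) :
    lap (fun x => ε * (⟪x - y, e⟫ * barrier y r K x)) x = ε * (⟪x - y, e⟫ *
      (-2 * ((n:ℝ) + 2) + 8 * K * r ^ 2
      - K * (r ^ 2 - ‖x - y‖ ^ 2) * (8 + 4 * ((n:ℝ) + 2)))) := by
  have hz : ContDiffAt ℝ 2 (fun x => ε * (⟪x - y, e⟫ * barrier y r K x)) x := by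
    have := (barrier_contDiff y r K)
    have h2 : ContDiff ℝ 2 (fun x => ⟪x - y, e⟫) :=
      (contDiff_id.sub contDiff_const).inner ℝ contDiff_const
    exact (contDiff_const.mul (h2.mul this)).contDiffAt
  rw [lap_eq_of_expansion hz (fun i => ε * (⟪x - y, e⟫ * (-2 - 4 * K * (r ^ 2 - ‖x - y‖ ^ 2))
    + ⟪x - y, e⟫ * (8 * K) * ((x - y) i) ^ 2
    - (4 + 8 * K * (r ^ 2 - ‖x - y‖ ^ 2)) * (((x - y) i) * e i)))
    (fun i => ε * (2 * K * ⟪x - y, e⟫ + 8 * K * (((x - y) i) * e i)))]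
  · rw [← Finset.mul_sum, Finset.sum_sub_distrib, Finset.sum_add_distrib, ← Finset.mul_sum,
      ← Finset.mul_sum _ _ (4 + 8 * K * (r ^ 2 - ‖x - y‖ ^ 2)), ← Finset.mul_sum]
    have : ∑ i, ((x - y) i) ^ 2 = ‖x - y‖ ^ 2 := (EuclideanSpace.real_norm_sq_eq _).symm
    rw [this]
    have : ∑ i, ((x - y) i) * e i = ⟪x - y, e⟫ := by
      rw [PiLp.inner_apply]; simp [mul_comm]
    rw [this, Finset.sum_const, Finset.card_univ, Fintype.card_fin, nsmul_eq_mul]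
    ring
  · intro i τ
    unfold barrier
    rw [add_sub_right_comm x, sub_right_comm x, norm_sq_add_single, norm_sq_sub_single]
    have h1 : ⟪x - y + τ • EuclideanSpace.single i (1:ℝ), e⟫ = ⟪x - y, e⟫ + τ * e i := by
      rw [inner_add_left, inner_smul_left, EuclideanSpace.inner_single_left]; simp
    have h2 : ⟪x - y - τ • EuclideanSpace.single i (1:ℝ), e⟫ = ⟪x - y, e⟫ - τ * e i := by
      rw [inner_sub_left, inner_smul_left, EuclideanSpace.inner_single_left]; simp
    rw [h1, h2]
    ring

/-- Constants for which `s + K s²` is a strict subsolution in the shell `0 ≤ s ≤ δ`. -/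
lemma barrier_constants {N C r : ℝ} (hN : 0 ≤ N) (hC : 0 ≤ C) (hr : 0 < r) :
    ∃ K > 0, ∃ δ > 0, K * δ ≤ 1 ∧ ∀ s, 0 ≤ s → s ≤ δ →
      C * (s + K * s ^ 2) < -2 * N + 8 * K * r ^ 2 - K * s * (8 + 4 * N) := by
  set K := (2 * N + 2 * C + 2) / (8 * r ^ 2) with hK
  have hK0 : 0 < K := by positivity
  have hKr : 8 * K * r ^ 2 = 2 * N + 2 * C + 2 := by rw [hK]; field_simp
  refine ⟨K, hK0, min 1 (1 / (K * (8 + 4 * N))), by positivity, ?_, ?_⟩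
  · calc K * min 1 (1 / (K * (8 + 4 * N))) ≤ K * (1 / (K * (8 + 4 * N))) := by
          gcongr; exact min_le_right _ _
      _ = 1 / (8 + 4 * N) := by field_simp
      _ ≤ 1 := by rw [div_le_one (by positivity)]; linarith
  · intro s hs0 hs
    have h1 : s ≤ 1 := hs.trans (min_le_left _ _)
    have h2 : s * (K * (8 + 4 * N)) ≤ 1 := by
      have := hs.trans (min_le_right _ _)
      rwa [le_div_iff₀ (by positivity)] at this
    have h3 : K * s ≤ 1 := by nlinarith [mul_nonneg hK0.le hs0, mul_nonneg (mul_nonneg hK0.le hs0) hN]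
    have h4 : s + K * s ^ 2 ≤ 2 := by nlinarith
    nlinarith [mul_le_mul_of_nonneg_left h4 hC]

/-- Hopf's lemma in quantitative form: a positive supersolution on a ball grows at least linearly
away from the sphere. -/
lemma hopf_ball {n : ℕ} {w : EuclideanSpace ℝ (Fin n) → ℝ} {y : EuclideanSpace ℝ (Fin n)}
    {r C : ℝ} (hr : 0 < r) (hC : 0 ≤ C) (hw : ContinuousOn w (closedBall y r))
    (hw2 : ∀ x ∈ ball y r, ContDiffAt ℝ 2 w x) (hpos : ∀ x ∈ ball y r, 0 < w x)
    (hlap : ∀ x ∈ ball y r, lap w x ≤ C * w x) :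
    ∃ ε > 0, ∀ x ∈ closedBall y r, ε * (r ^ 2 - ‖x - y‖ ^ 2) ≤ w x := by
  obtain ⟨K, hK, δ, hδ, hKδ, hcon⟩ := barrier_constants (Nat.cast_nonneg n) hC hr
  have hball : ∀ x, 0 < r ^ 2 - ‖x - y‖ ^ 2 → x ∈ ball y r := by
    intro x hx
    rw [mem_ball_iff_norm]
    exact lt_of_pow_lt_pow_left₀ 2 hr.le (by linarith)
  have hcb : ∀ x ∈ closedBall y r, 0 ≤ r ^ 2 - ‖x - y‖ ^ 2 := by
    intro x hx
    rw [mem_closedBall_iff_norm] at hx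
    nlinarith [norm_nonneg (x - y)]
  have hw0 : ∀ x ∈ closedBall y r, 0 ≤ w x := by
    rw [← closure_ball y hr.ne'] at hw ⊢
    intro x hx
    exact ContinuousWithinAt.closure_le hx continuousWithinAt_const
      ((hw x hx).mono subset_closure) (fun z hz => (hpos z hz).le)
  have hsc : Continuous (fun x : EuclideanSpace ℝ (Fin n) => r ^ 2 - ‖x - y‖ ^ 2) := by fun_prop
  -- the inner region `s ≥ δ`, where `w` is bounded below by a positive constant
  have hKc : IsCompact (closedBall y r ∩ {x | δ ≤ r ^ 2 - ‖x - y‖ ^ 2}) :=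
    (isCompact_closedBall y r).inter_right (isClosed_le continuous_const hsc)
  obtain ⟨m, hm, hmw⟩ : ∃ m > 0, ∀ x ∈ closedBall y r ∩ {x | δ ≤ r ^ 2 - ‖x - y‖ ^ 2}, m ≤ w x := by
    rcases (closedBall y r ∩ {x | δ ≤ r ^ 2 - ‖x - y‖ ^ 2}).eq_empty_or_nonempty with h | h
    · exact ⟨1, one_pos, by simp [h]⟩
    · obtain ⟨p, hp, hpm⟩ := hKc.exists_isMinOn h (hw.mono inter_subset_left)
      exact ⟨w p, hpos p (hball p (hδ.trans_le hp.2)), fun x hx => hpm hx⟩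
  set ε := min (m / (2 * δ)) (m / r ^ 2) with hε
  have hε0 : 0 < ε := by positivity
  have hε1 : ε * (2 * δ) ≤ m := by
    have := min_le_left (m / (2 * δ)) (m / r ^ 2)
    rwa [← hε, le_div_iff₀ (by positivity)] at this
  have hε2 : ε * r ^ 2 ≤ m := by
    have := min_le_right (m / (2 * δ)) (m / r ^ 2)
    rwa [← hε, le_div_iff₀ (by positivity)] at this
  have hA : IsCompact (closedBall y r ∩ {x | r ^ 2 - ‖x - y‖ ^ 2 ≤ δ}) :=
    (isCompact_closedBall y r).inter_right (isClosed_le hsc continuous_const)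
  have key := comparison hA (hw.mono inter_subset_left)
    (z := fun x => ε * barrier y r K x) (by
      have := (barrier_contDiff y r K).continuous
      exact (continuous_const.mul this).continuousOn) hC ?_
  · refine ⟨ε, hε0, fun x hx => ?_⟩
    have hs := hcb x hx
    rcases le_total (r ^ 2 - ‖x - y‖ ^ 2) δ with h | h
    · refine le_trans ?_ (key x ⟨hx, h⟩)
      simp only [barrier]
      have : 0 ≤ K * (r ^ 2 - ‖x - y‖ ^ 2) ^ 2 := by positivity
      nlinarith
    · refine le_trans ?_ (hmw x ⟨hx, h⟩)
      nlinarith [sq_nonneg ‖x - y‖]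
  · rintro x ⟨hx, hxδ⟩
    simp only [mem_ofPred_eq] at hxδ
    have hs := hcb x hx
    rcases hs.eq_or_lt with h0 | h0
    · left
      simp only [barrier, ← h0]
      simpa using hw0 x hx
    rcases hxδ.eq_or_lt with h1 | h1
    · left
      refine le_trans ?_ (hmw x ⟨hx, h1.ge⟩)
      simp only [barrier, h1]
      nlinarith [mul_le_mul_of_nonneg_left hKδ (mul_pos hε0 hδ).le]
    right
    have hxb := hball x h0
    refine ⟨?_, hw2 x hxb, hlap x hxb, (contDiff_const.mul (barrier_contDiff y r K)).contDiffAt, ?_⟩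
    · refine inter_mem (mem_of_superset (isOpen_ball.mem_nhds hxb) ball_subset_closedBall) ?_
      exact mem_of_superset ((isOpen_lt hsc continuous_const).mem_nhds h1)
        (fun z hz => le_of_lt (mem_ofPred_eq ▸ hz))
    · rw [lap_smul_barrier]
      have := hcon _ hs hxδ
      simp only [barrier]
      nlinarith [mul_lt_mul_of_pos_left this hε0]

/-- Hopf's lemma as a lower bound along the inner normal at a point `p` of the sphere. -/
lemma hopf_normal {n : ℕ} {w : EuclideanSpace ℝ (Fin n) → ℝ} {p ν : EuclideanSpace ℝ (Fin n)}
    {r C : ℝ} (hr : 0 < r) (hC : 0 ≤ C) (hν : ‖ν‖ = 1)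
    (hw : ContinuousOn w (closedBall (p + r • ν) r))
    (hw2 : ∀ x ∈ ball (p + r • ν) r, ContDiffAt ℝ 2 w x)
    (hpos : ∀ x ∈ ball (p + r • ν) r, 0 < w x)
    (hlap : ∀ x ∈ ball (p + r • ν) r, lap w x ≤ C * w x) :
    ∃ κ > 0, ∀ᶠ τ in 𝓝[>] (0:ℝ), κ * τ ≤ w (p + τ • ν) := by
  obtain ⟨ε, hε, h⟩ := hopf_ball hr hC hw hw2 hpos hlap
  refine ⟨ε * r, by positivity, ?_⟩
  filter_upwards [Ioo_mem_nhdsGT hr] with τ hτ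
  have e1 : p + τ • ν - (p + r • ν) = (τ - r) • ν := by module
  have e2 : ‖p + τ • ν - (p + r • ν)‖ = r - τ := by
    rw [e1, norm_smul, hν, Real.norm_eq_abs, abs_of_neg (by linarith [hτ.2])]; ring
  refine le_trans ?_ (h _ (by rw [mem_closedBall_iff_norm, e2]; linarith [hτ.1]))
  rw [e2, mul_assoc]
  have := hτ.1
  have := hτ.2
  gcongr
  nlinarith

/-- Strong maximum principle, local form: a nonnegative supersolution that vanishes at the centre
of a ball vanishes on the concentric ball of half the radius. -/
lemma strong_max {n : ℕ} {w : EuclideanSpace ℝ (Fin n) → ℝ} {x₀ : EuclideanSpace ℝ (Fin n)}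
    {ρ C : ℝ} (hC : 0 ≤ C)
    (hw2 : ∀ x ∈ ball x₀ (2 * ρ), ContDiffAt ℝ 2 w x)
    (hpos : ∀ x ∈ ball x₀ (2 * ρ), 0 ≤ w x)
    (hlap : ∀ x ∈ ball x₀ (2 * ρ), lap w x ≤ C * w x) (h0 : w x₀ = 0) :
    ∀ x ∈ ball x₀ ρ, w x = 0 := by
  intro x₁ hx₁
  by_contra hne
  have hcont : ContinuousOn w (ball x₀ (2 * ρ)) :=
    fun x hx => (hw2 x hx).continuousAt.continuousWithinAt
  rw [mem_ball] at hx₁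
  have hρ : 0 < ρ := dist_nonneg.trans_lt hx₁
  have hsub : closedBall x₁ (dist x₀ x₁) ⊆ ball x₀ (2 * ρ) := by
    intro z hz
    rw [mem_closedBall] at hz
    rw [mem_ball]
    have := dist_triangle z x₁ x₀
    rw [dist_comm x₀ x₁] at hz
    linarith
  -- the zero of `w` nearest to `x₁`
  have hZ : IsCompact (closedBall x₁ (dist x₀ x₁) ∩ w ⁻¹' {0}) := by
    refine (isCompact_closedBall _ _).of_isClosed_subset ?_ inter_subset_left
    exact (hcont.mono hsub).preimage_isClosed_of_isClosed isClosed_closedBall isClosed_singleton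
  obtain ⟨p, hp, hpmin⟩ := hZ.exists_isMinOn ⟨x₀, by simp, h0⟩
    (continuous_id.dist continuous_const : Continuous fun z => dist z x₁).continuousOn
  have hp0 : w p = 0 := hp.2
  have hpx : p ≠ x₁ := by rintro rfl; exact hne hp0
  set r := dist p x₁ with hr
  have hr0 : 0 < r := dist_pos.2 hpx
  have hrle : r ≤ dist x₀ x₁ := hp.1
  have hsub2 : closedBall x₁ r ⊆ ball x₀ (2 * ρ) := (closedBall_subset_closedBall hrle).trans hsub
  set ν : EuclideanSpace ℝ (Fin n) := r⁻¹ • (x₁ - p) with hν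
  have hν1 : ‖ν‖ = 1 := by
    rw [hν, norm_smul, ← dist_eq_norm, dist_comm x₁ p, ← hr, norm_inv, Real.norm_eq_abs,
      abs_of_pos hr0, inv_mul_cancel₀ hr0.ne']
  have hcen : p + r • ν = x₁ := by
    rw [hν, smul_smul, mul_inv_cancel₀ hr0.ne']; simp
  obtain ⟨κ, hκ, hgrow⟩ := hopf_normal (w := w) (p := p) (ν := ν) hr0 hC hν1
    (by rw [hcen]; exact hcont.mono hsub2)
    (by rw [hcen]; exact fun x hx => hw2 x (hsub2 (ball_subset_closedBall hx)))
    (by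
      rw [hcen]
      intro x hx
      refine lt_of_le_of_ne (hpos x (hsub2 (ball_subset_closedBall hx))) fun hx0 => ?_
      have hxr : dist x x₁ < r := hx
      have : r ≤ dist x x₁ := hpmin ⟨mem_closedBall.2 (hxr.le.trans hrle), hx0.symm⟩
      linarith)
    (by rw [hcen]; exact fun x hx => hlap x (hsub2 (ball_subset_closedBall hx)))
  have hpball : p ∈ ball x₀ (2 * ρ) := hsub hp.1
  have hmin : IsLocalMin w p := by
    filter_upwards [isOpen_ball.mem_nhds hpball] with z hz
    rw [hp0]; exact hpos z hz
  have hd : HasFDerivAt w (0 : EuclideanSpace ℝ (Fin n) →L[ℝ] ℝ) p := by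
    rw [← hmin.fderiv_eq_zero]
    exact ((hw2 p hpball).differentiableAt (by simp)).hasFDerivAt
  have hl : HasDerivAt (fun τ : ℝ => p + τ • ν) ν 0 := by
    simpa using ((hasDerivAt_id (0:ℝ)).smul_const ν).const_add p
  have hd2 : HasDerivAt (fun τ : ℝ => w (p + τ • ν)) 0 0 := by
    have := HasFDerivAt.comp_hasDerivAt (0:ℝ) (f := fun τ : ℝ => p + τ • ν) (l := w)
      (by simpa using hd) hl
    rw [zero_apply] at this
    exact this
  have hlim := hd2.tendsto_slope_zero_right
  have : κ ≤ 0 := by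
    refine ge_of_tendsto hlim ?_
    filter_upwards [hgrow, self_mem_nhdsWithin] with τ h1 h2
    have h2 : 0 < τ := h2
    simp only [zero_add, zero_smul, add_zero, hp0, sub_zero, smul_eq_mul]
    rw [← div_eq_inv_mul, le_div_iff₀ h2]
    exact h1
  linarith

/-! ### Hopf's lemma at flat boundary points and at corners -/

lemma slope_tendsto {n : ℕ} {u : EuclideanSpace ℝ (Fin n) → ℝ} {S : Set (EuclideanSpace ℝ (Fin n))}
    {L : EuclideanSpace ℝ (Fin n) →L[ℝ] ℝ} {p v : EuclideanSpace ℝ (Fin n)}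
    (h : HasFDerivWithinAt u L S p) (hS : ∀ᶠ τ in 𝓝[>] (0:ℝ), p + τ • v ∈ S) :
    Tendsto (fun τ : ℝ => (u (p + τ • v) - u p) / τ) (𝓝[>] 0) (𝓝 (L v)) := by
  have hl : HasDerivAt (fun τ : ℝ => p + τ • v) v 0 := by
    simpa using ((hasDerivAt_id (0:ℝ)).smul_const v).const_add p
  have h1 : HasDerivWithinAt (fun τ : ℝ => u (p + τ • v)) (L v)
      ((fun τ : ℝ => p + τ • v) ⁻¹' S) 0 := by
    refine HasFDerivWithinAt.comp_hasDerivWithinAt (t := S) 0 ?_ hl.hasDerivWithinAt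
      (mapsTo_preimage _ _)
    simpa using h
  have h2 : HasDerivWithinAt (fun τ : ℝ => u (p + τ • v)) (L v) (Ioi 0) 0 :=
    h1.mono_of_mem_nhdsWithin hS
  rw [hasDerivWithinAt_iff_tendsto_slope' (by simp)] at h2
  refine h2.congr fun τ => ?_
  simp [slope_def_field]

lemma le_deriv_of_growth {n : ℕ} {u : EuclideanSpace ℝ (Fin n) → ℝ}
    {S : Set (EuclideanSpace ℝ (Fin n))}
    {L : EuclideanSpace ℝ (Fin n) →L[ℝ] ℝ} {p v : EuclideanSpace ℝ (Fin n)} {κ : ℝ}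
    (h : HasFDerivWithinAt u L S p) (hS : ∀ᶠ τ in 𝓝[>] (0:ℝ), p + τ • v ∈ S)
    (hg : ∀ᶠ τ in 𝓝[>] (0:ℝ), κ * τ ≤ u (p + τ • v) - u p) : κ ≤ L v := by
  refine ge_of_tendsto (slope_tendsto h hS) ?_
  filter_upwards [hg, self_mem_nhdsWithin] with τ h1 h2
  rwa [le_div_iff₀ h2]

/-- The open ball of radius `ρ` about `p + ρ e` lies strictly above the hyperplane through `p`
orthogonal to `e`. -/
lemma height_pos_of_mem_ball {n : ℕ} {p e x : EuclideanSpace ℝ (Fin n)} {ρ : ℝ} (he : ‖e‖ = 1)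
    (hx : x ∈ ball (p + ρ • e) ρ) : 0 < ⟪x - p, e⟫ := by
  rw [mem_ball_iff_norm] at hx
  have h1 : ⟪x - p, e⟫ = ρ + ⟪x - (p + ρ • e), e⟫ := by
    have : x - p = ρ • e + (x - (p + ρ • e)) := by module
    rw [this, inner_add_left, inner_smul_left, real_inner_self_eq_norm_sq, he]; simp
  have h2 := abs_real_inner_le_norm (x - (p + ρ • e)) e
  rw [he, mul_one] at h2
  linarith [neg_abs_le ⟪x - (p + ρ • e), e⟫]

/-- Hopf's lemma at a flat boundary point: if `w` vanishes at `p` and is a positive supersolution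
near `p` above the hyperplane through `p` orthogonal to `e`, then `∂w/∂e (p) > 0`. -/
lemma hopf_flat {n : ℕ} {w : EuclideanSpace ℝ (Fin n) → ℝ} {p e : EuclideanSpace ℝ (Fin n)}
    {ρ C : ℝ} (hρ : 0 < ρ) (hC : 0 ≤ C) (he : ‖e‖ = 1)
    (hw2 : ∀ x ∈ ball p ρ, ContDiffAt ℝ 2 w x)
    (hpos : ∀ x ∈ ball p ρ, 0 < ⟪x - p, e⟫ → 0 < w x)
    (hlap : ∀ x ∈ ball p ρ, 0 < ⟪x - p, e⟫ → lap w x ≤ C * w x) (h0 : w p = 0) :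
    0 < fderiv ℝ w p e := by
  have hsub : closedBall (p + (ρ / 3) • e) (ρ / 3) ⊆ ball p ρ := by
    intro x hx
    rw [mem_closedBall_iff_norm] at hx
    rw [mem_ball_iff_norm]
    have : x - p = (x - (p + (ρ / 3) • e)) + (ρ / 3) • e := by module
    rw [this]
    have h1 := norm_add_le (x - (p + (ρ / 3) • e)) ((ρ / 3) • e)
    rw [norm_smul, he, Real.norm_eq_abs, abs_of_pos (by positivity)] at h1
    linarith
  obtain ⟨κ, hκ, hg⟩ := hopf_normal (w := w) (p := p) (ν := e) (r := ρ / 3) (by positivity) hC he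
    (fun x hx => (hw2 x (hsub hx)).continuousAt.continuousWithinAt)
    (fun x hx => hw2 x (hsub (ball_subset_closedBall hx)))
    (fun x hx => hpos x (hsub (ball_subset_closedBall hx)) (height_pos_of_mem_ball he hx))
    (fun x hx => hlap x (hsub (ball_subset_closedBall hx)) (height_pos_of_mem_ball he hx))
  have hd := ((hw2 p (mem_ball_self hρ)).differentiableAt (by simp)).hasFDerivAt.hasFDerivWithinAt
    (s := univ)
  refine lt_of_lt_of_le hκ (le_deriv_of_growth hd (by simp) ?_)
  simpa [h0] using hg

/-- Serrin's corner lemma in quantitative form: on a half ball, a positive supersolution that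
vanishes on the flat part dominates a multiple of `t · s`, with `t` the height over the flat part
and `s = r² - |x - y|²`. -/
lemma hopf_corner {n : ℕ} {w : EuclideanSpace ℝ (Fin n) → ℝ} {y e : EuclideanSpace ℝ (Fin n)}
    {r C : ℝ} (hr : 0 < r) (hC : 0 ≤ C) (he : ‖e‖ = 1) (hw : ContinuousOn w (closedBall y r))
    (hw2 : ∀ x ∈ ball y r, ContDiffAt ℝ 2 w x)
    (hpos : ∀ x ∈ ball y r, 0 < ⟪x - y, e⟫ → 0 < w x)
    (hlap : ∀ x ∈ ball y r, 0 < ⟪x - y, e⟫ → lap w x ≤ C * w x)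
    (hT : ∀ x ∈ closedBall y r, ⟪x - y, e⟫ = 0 → w x = 0) :
    ∃ ε > 0, ∀ x ∈ closedBall y r, 0 ≤ ⟪x - y, e⟫ →
      ε * (⟪x - y, e⟫ * (r ^ 2 - ‖x - y‖ ^ 2)) ≤ w x := by
  obtain ⟨K, hK, δ, hδ, hKδ, hcon⟩ := barrier_constants (N := (n:ℝ) + 2) (by positivity) hC hr
  have hball : ∀ x, 0 < r ^ 2 - ‖x - y‖ ^ 2 → x ∈ ball y r := by
    intro x hx
    rw [mem_ball_iff_norm]
    exact lt_of_pow_lt_pow_left₀ 2 hr.le (by linarith)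
  have hcb : ∀ x ∈ closedBall y r, 0 ≤ r ^ 2 - ‖x - y‖ ^ 2 := by
    intro x hx
    rw [mem_closedBall_iff_norm] at hx
    nlinarith [norm_nonneg (x - y)]
  have hsc : Continuous (fun x : EuclideanSpace ℝ (Fin n) => r ^ 2 - ‖x - y‖ ^ 2) := by fun_prop
  have htc : Continuous (fun x : EuclideanSpace ℝ (Fin n) => ⟪x - y, e⟫) := by fun_prop
  have hw0 : ∀ x ∈ closedBall y r, 0 ≤ ⟪x - y, e⟫ → 0 ≤ w x := by
    intro x hx hx0
    rcases hx0.eq_or_lt with h | h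
    · exact (hT x hx h.symm).ge
    · -- approach `x` from the inside of the half ball
      have hxc : x ∈ closure (ball y r ∩ {x | 0 < ⟪x - y, e⟫}) := by
        rw [← closure_ball y hr.ne'] at hx
        exact mem_closure_iff_nhdsWithin_neBot.2 (by
          have := mem_closure_iff_nhdsWithin_neBot.1 hx
          rwa [nhdsWithin_inter_of_mem']
          exact nhdsWithin_le_nhds ((isOpen_lt continuous_const htc).mem_nhds h))
      exact ContinuousWithinAt.closure_le hxc continuousWithinAt_const
        ((hw x hx).mono (inter_subset_left.trans ball_subset_closedBall))
        (fun z hz => (hpos z hz.1 hz.2).le)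
  -- on the inner region, Hopf's lemma on the flat part and compactness give `w ≥ m t`
  have hKc : IsCompact (closedBall y r ∩ {x | δ ≤ r ^ 2 - ‖x - y‖ ^ 2}) :=
    (isCompact_closedBall y r).inter_right (isClosed_le continuous_const hsc)
  obtain ⟨m, hm, hmw⟩ : ∃ m > 0, ∀ x ∈ closedBall y r ∩ {x | δ ≤ r ^ 2 - ‖x - y‖ ^ 2},
      0 ≤ ⟪x - y, e⟫ → m * ⟪x - y, e⟫ ≤ w x := by
    refine hKc.induction_on (p := fun S => ∃ m > 0, ∀ x ∈ S, 0 ≤ ⟪x - y, e⟫ →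
      m * ⟪x - y, e⟫ ≤ w x) ⟨1, one_pos, by simp⟩ ?_ ?_ ?_
    · rintro S T hST ⟨m, hm, h⟩
      exact ⟨m, hm, fun x hx => h x (hST hx)⟩
    · rintro S T ⟨m, hm, h⟩ ⟨m', hm', h'⟩
      refine ⟨min m m', lt_min hm hm', ?_⟩
      rintro x (hx | hx) h0
      · exact (mul_le_mul_of_nonneg_right (min_le_left _ _) h0).trans (h x hx h0)
      · exact (mul_le_mul_of_nonneg_right (min_le_right _ _) h0).trans (h' x hx h0)
    · rintro p ⟨hp, hpδ⟩
      have hpb : p ∈ ball y r := hball p (hδ.trans_le hpδ)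
      suffices h : ∃ m > 0, ∀ᶠ x in 𝓝 p, 0 ≤ ⟪x - y, e⟫ → m * ⟪x - y, e⟫ ≤ w x by
        obtain ⟨m, hm, h⟩ := h
        exact ⟨_, nhdsWithin_le_nhds h, m, hm, fun x hx => hx⟩
      rcases lt_trichotomy ⟪p - y, e⟫ 0 with h | h | h
      · refine ⟨1, one_pos, ?_⟩
        filter_upwards [(isOpen_lt htc continuous_const).mem_nhds h] with x hx h0
        linarith
      · obtain ⟨ρ, hρ, hρs⟩ := Metric.isOpen_iff.1 isOpen_ball p hpb
        have hshift : ∀ x, ⟪x - p, e⟫ = ⟪x - y, e⟫ := fun x => by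
          have : x - p = (x - y) - (p - y) := by abel
          rw [this, inner_sub_left, h, sub_zero]
        have hder : 0 < fderiv ℝ w p e := hopf_flat hρ hC he (fun x hx => hw2 x (hρs hx))
          (fun x hx hx0 => hpos x (hρs hx) (hshift x ▸ hx0))
          (fun x hx hx0 => hlap x (hρs hx) (hshift x ▸ hx0)) (hT p hp h)
        have hdc : ContinuousAt (fun x => fderiv ℝ w x e) p :=
          (((hw2 p hpb).fderiv_right (m := 1) (by norm_num)).continuousAt).clm_apply
            continuousAt_const
        have hev := hdc.eventually (lt_mem_nhds (half_lt_self hder))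
        obtain ⟨η, hη, hηs⟩ := Metric.eventually_nhds_iff_ball.1
          (hev.and (isOpen_ball.mem_nhds hpb))
        refine ⟨fderiv ℝ w p e / 2, half_pos hder, ?_⟩
        filter_upwards [ball_mem_nhds p hη] with x hx h0
        set t := ⟪x - y, e⟫ with ht
        -- the segment from the foot point `x - t e` up to `x` stays in the ball about `p`
        have hseg : ∀ σ ∈ Icc 0 t, x - t • e + σ • e ∈ ball p η := by
          intro σ hσ
          rw [mem_ball_iff_norm] at hx ⊢
          refine lt_of_le_of_lt ?_ hx
          refine le_of_sq_le_sq ?_ (norm_nonneg _)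
          have e1 : x - t • e + σ • e - p = (x - p) + (σ - t) • e := by module
          rw [e1, norm_add_sq_real, inner_smul_right, hshift, norm_smul, he, ← ht]
          simp only [Real.norm_eq_abs, mul_one, sq_abs]
          nlinarith [hσ.1, hσ.2]
        have hfoot : w (x - t • e) = 0 := by
          have h1 := hseg 0 ⟨le_rfl, h0⟩
          simp only [zero_smul, add_zero] at h1
          refine hT _ (ball_subset_closedBall (hηs _ h1).2) ?_
          have : x - t • e - y = (x - y) - t • e := by abel
          rw [this, inner_sub_left, inner_smul_left, real_inner_self_eq_norm_sq, he, ← ht]; simp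
        have hl : ∀ τ : ℝ, HasDerivAt (fun τ : ℝ => x - t • e + τ • e) e τ := fun τ => by
          simpa using ((hasDerivAt_id τ).smul_const e).const_add (x - t • e)
        have hder2 : ∀ σ ∈ Icc 0 t, HasDerivAt (fun τ : ℝ => w (x - t • e + τ • e))
            (fderiv ℝ w (x - t • e + σ • e) e) σ := fun σ hσ =>
          HasFDerivAt.comp_hasDerivAt σ (f := fun τ : ℝ => x - t • e + τ • e) (l := w)
            ((hw2 _ (hηs _ (hseg σ hσ)).2).differentiableAt (by simp)).hasFDerivAt (hl σ)
        have hmv := (convex_Icc 0 t).mul_sub_le_image_sub_of_le_deriv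
          (f := fun τ : ℝ => w (x - t • e + τ • e))
          (fun σ hσ => (hder2 σ hσ).continuousAt.continuousWithinAt)
          (fun σ hσ => (hder2 σ (interior_subset hσ)).differentiableAt.differentiableWithinAt)
          (C := fderiv ℝ w p e / 2)
          (fun σ hσ => by
            rw [(hder2 σ (interior_subset hσ)).deriv]
            exact (hηs _ (hseg σ (interior_subset hσ))).1.le)
          0 (left_mem_Icc.2 h0) t (right_mem_Icc.2 h0) h0
        simpa [hfoot] using hmv
      · have hwp := hpos p hpb h
        refine ⟨w p / (4 * ⟪p - y, e⟫), by positivity, ?_⟩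
        have c1 := (hw2 p hpb).continuousAt.eventually (lt_mem_nhds (half_lt_self hwp))
        have c2 := htc.continuousAt.eventually
          (gt_mem_nhds (show ⟪p - y, e⟫ < 2 * ⟪p - y, e⟫ by linarith))
        filter_upwards [c1, c2] with x h1 h2 h0
        refine le_trans ?_ h1.le
        rw [div_mul_eq_mul_div, div_le_iff₀ (by positivity)]
        nlinarith
  set ε := min (m / (2 * δ)) (m / r ^ 2) with hε
  have hε0 : 0 < ε := by positivity
  have hε1 : ε * (2 * δ) ≤ m := by
    have := min_le_left (m / (2 * δ)) (m / r ^ 2)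
    rwa [← hε, le_div_iff₀ (by positivity)] at this
  have hε2 : ε * r ^ 2 ≤ m := by
    have := min_le_right (m / (2 * δ)) (m / r ^ 2)
    rwa [← hε, le_div_iff₀ (by positivity)] at this
  have hA : IsCompact ((closedBall y r ∩ {x | r ^ 2 - ‖x - y‖ ^ 2 ≤ δ}) ∩ {x | 0 ≤ ⟪x - y, e⟫}) :=
    ((isCompact_closedBall y r).inter_right (isClosed_le hsc continuous_const)).inter_right
      (isClosed_le continuous_const htc)
  have hbc := (barrier_contDiff y r K)
  have htd : ContDiff ℝ 2 (fun x => ⟪x - y, e⟫) :=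
      (contDiff_id.sub contDiff_const).inner ℝ contDiff_const
  have hzc : ContDiff ℝ 2 (fun x => ε * (⟪x - y, e⟫ * barrier y r K x)) :=
    contDiff_const.mul (htd.mul hbc)
  have key := comparison hA (hw.mono (inter_subset_left.trans inter_subset_left))
    (z := fun x => ε * (⟪x - y, e⟫ * barrier y r K x)) hzc.continuous.continuousOn hC ?_
  · refine ⟨ε, hε0, fun x hx hx0 => ?_⟩
    have hs := hcb x hx
    rcases le_total (r ^ 2 - ‖x - y‖ ^ 2) δ with h | h
    · refine le_trans ?_ (key x ⟨⟨hx, h⟩, hx0⟩)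
      simp only [barrier]
      have : 0 ≤ K * (r ^ 2 - ‖x - y‖ ^ 2) ^ 2 := by positivity
      gcongr
      linarith
    · refine le_trans ?_ (hmw x ⟨hx, h⟩ hx0)
      have : ε * (r ^ 2 - ‖x - y‖ ^ 2) ≤ m := by nlinarith [sq_nonneg ‖x - y‖]
      nlinarith
  · rintro x ⟨⟨hx, hxδ⟩, hxt⟩
    simp only [mem_ofPred_eq] at hxδ hxt
    have hs := hcb x hx
    rcases hxt.eq_or_lt with ht0 | ht0
    · left
      simp only [← ht0]
      simpa using (hT x hx ht0.symm).ge
    rcases hs.eq_or_lt with h0 | h0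
    · left
      simp only [barrier, ← h0]
      simpa using hw0 x hx hxt
    rcases hxδ.eq_or_lt with h1 | h1
    · left
      refine le_trans ?_ (hmw x ⟨hx, h1.ge⟩ hxt)
      simp only [barrier, h1]
      have : ε * (δ + K * δ ^ 2) ≤ m := by
        nlinarith [mul_le_mul_of_nonneg_left hKδ (mul_pos hε0 hδ).le]
      nlinarith
    right
    have hxb := hball x h0
    refine ⟨?_, hw2 x hxb, hlap x hxb ht0, hzc.contDiffAt, ?_⟩
    · refine inter_mem (inter_mem
        (mem_of_superset (isOpen_ball.mem_nhds hxb) ball_subset_closedBall) ?_) ?_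
      · exact mem_of_superset ((isOpen_lt hsc continuous_const).mem_nhds h1)
          (fun z hz => le_of_lt (mem_ofPred_eq ▸ hz))
      · exact mem_of_superset ((isOpen_lt continuous_const htc).mem_nhds ht0)
          (fun z hz => le_of_lt (mem_ofPred_eq ▸ hz))
    · rw [lap_corner_barrier]
      have := hcon _ hs hxδ
      simp only [barrier]
      have h5 := mul_lt_mul_of_pos_left this (mul_pos hε0 ht0)
      nlinarith

/-! ### Reflections and the local geometry of `C²` domains -/

/-- Reflection in the hyperplane `{x | ⟪x, e⟫ = l}`, for a unit vector `e`. -/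
def planeRefl {n : ℕ} (e : EuclideanSpace ℝ (Fin n)) (l : ℝ) (x : EuclideanSpace ℝ (Fin n)) :
    EuclideanSpace ℝ (Fin n) := x + (2 * (l - ⟪x, e⟫)) • e

/-- The linear part of `planeRefl e l`. -/
def reflDir {n : ℕ} (e v : EuclideanSpace ℝ (Fin n)) : EuclideanSpace ℝ (Fin n) :=
  v - (2 * ⟪v, e⟫) • e

section Reflection

variable {n : ℕ} {e : EuclideanSpace ℝ (Fin n)} {l : ℝ}

lemma inner_refl (he : ‖e‖ = 1) (x : EuclideanSpace ℝ (Fin n)) :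
    ⟪planeRefl e l x, e⟫ = 2 * l - ⟪x, e⟫ := by
  simp only [planeRefl, inner_add_left, inner_smul_left, real_inner_self_eq_norm_sq, he]
  simp; ring

lemma refl_refl (he : ‖e‖ = 1) (x : EuclideanSpace ℝ (Fin n)) : planeRefl e l (planeRefl e l x) = x := by
  have h := inner_refl (l := l) he x
  rw [planeRefl, h]
  simp only [planeRefl]
  module

lemma refl_of_mem {x : EuclideanSpace ℝ (Fin n)} (hx : ⟪x, e⟫ = l) : planeRefl e l x = x := by
  simp [planeRefl, hx]

lemma refl_add_smul (x v : EuclideanSpace ℝ (Fin n)) (τ : ℝ) :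
    planeRefl e l (x + τ • v) = planeRefl e l x + τ • reflDir e v := by
  simp only [planeRefl, reflDir, inner_add_left, inner_smul_left]
  simp only [conj_trivial]
  module

lemma refl_sub_smul (x v : EuclideanSpace ℝ (Fin n)) (τ : ℝ) :
    planeRefl e l (x - τ • v) = planeRefl e l x - τ • reflDir e v := by
  have := refl_add_smul (e := e) (l := l) x v (-τ)
  simpa [sub_eq_add_neg] using this

lemma refl_eq_sub (x : EuclideanSpace ℝ (Fin n)) :
    planeRefl e l x = x - (2 * (⟪x, e⟫ - l)) • e := by
  simp only [planeRefl]; module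

lemma reflDir_eq (he : ‖e‖ = 1) (v : EuclideanSpace ℝ (Fin n)) :
    reflDir e v = (Submodule.span ℝ {e})ᗮ.reflection v := by
  rw [Submodule.reflection_orthogonal_apply, Submodule.reflection_singleton_apply, he]
  simp only [reflDir, real_inner_comm]
  simp
  module

lemma norm_reflDir (he : ‖e‖ = 1) (v : EuclideanSpace ℝ (Fin n)) : ‖reflDir e v‖ = ‖v‖ := by
  rw [reflDir_eq he]; exact LinearIsometryEquiv.norm_map _ v

lemma refl_sub_refl (x y : EuclideanSpace ℝ (Fin n)) :
    planeRefl e l x - planeRefl e l y = reflDir e (x - y) := by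
  simp only [planeRefl, reflDir, inner_sub_left]; module

lemma continuous_refl : Continuous (planeRefl e l) := by
  unfold planeRefl; fun_prop

lemma continuous_refl_prod (e : EuclideanSpace ℝ (Fin n)) :
    Continuous (fun p : ℝ × EuclideanSpace ℝ (Fin n) => planeRefl e p.1 p.2) := by
  unfold planeRefl; fun_prop

lemma contDiff_refl : ContDiff ℝ 2 (planeRefl e l) := by
  unfold planeRefl
  have : ContDiff ℝ 2 (fun x : EuclideanSpace ℝ (Fin n) => ⟪x, e⟫) :=
    contDiff_id.inner ℝ contDiff_const
  exact contDiff_id.add ((contDiff_const.mul (contDiff_const.sub this)).smul contDiff_const)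

lemma lap_refl (he : ‖e‖ = 1) {u : EuclideanSpace ℝ (Fin n) → ℝ} {x : EuclideanSpace ℝ (Fin n)}
    (hu : ContDiffAt ℝ 2 u (planeRefl e l x)) :
    lap (fun y => u (planeRefl e l y)) x = lap u (planeRefl e l x) := by
  have hc : ContDiffAt ℝ 2 (fun y => u (planeRefl e l y)) x := hu.comp x contDiff_refl.contDiffAt
  rw [lap_eq_laplacian u, InnerProductSpace.laplacian_eq_iteratedFDeriv_orthonormalBasis u
    ((EuclideanSpace.basisFun (Fin n) ℝ).map (Submodule.span ℝ {e})ᗮ.reflection)]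
  refine Finset.sum_congr rfl fun i _ => ?_
  simp only [OrthonormalBasis.map_apply, EuclideanSpace.basisFun_apply, ← reflDir_eq he]
  refine tendsto_nhds_unique (symm_diff_tendsto hc _) ?_
  refine (symm_diff_tendsto hu (reflDir e (EuclideanSpace.single i 1))).congr fun τ => ?_
  rw [refl_add_smul, refl_sub_smul]

end Reflection

section Domain

variable {n : ℕ} {Ω : Set (EuclideanSpace ℝ (Fin n))}
  {ν : EuclideanSpace ℝ (Fin n) → EuclideanSpace ℝ (Fin n)}

/-- `φ` is a defining function of `Ω` on the ball of radius `ρ` about the boundary point `q`. -/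
structure LocalDef (Ω : Set (EuclideanSpace ℝ (Fin n)))
    (ν : EuclideanSpace ℝ (Fin n) → EuclideanSpace ℝ (Fin n))
    (q : EuclideanSpace ℝ (Fin n)) (φ : EuclideanSpace ℝ (Fin n) → ℝ) (ρ : ℝ) : Prop where
  pos : 0 < ρ
  smooth : ContDiffOn ℝ 2 φ (ball q ρ)
  grad_ne : ∀ y ∈ ball q ρ, gradient φ y ≠ 0
  mem_iff : ∀ y ∈ ball q ρ, (y ∈ Ω ↔ φ y < 0)
  frontier_iff : ∀ y ∈ ball q ρ, (y ∈ frontier Ω ↔ φ y = 0)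
  closure_iff : ∀ y ∈ ball q ρ, (y ∈ closure Ω ↔ φ y ≤ 0)
  normal : ∀ y ∈ ball q ρ, y ∈ frontier Ω → ν y = -(‖gradient φ y‖⁻¹ • gradient φ y)

lemma exists_localDef (_hΩo : IsOpen Ω) (hΩ : IsC2DomainWithInnerNormal Ω ν)
    {q : EuclideanSpace ℝ (Fin n)} (hq : q ∈ frontier Ω) :
    ∃ φ ρ, LocalDef Ω ν q φ ρ := by
  obtain ⟨U, φ, hU, hqU, hφ, hg, h1, h2, h3⟩ := hΩ q hq
  obtain ⟨ρ, hρ, hs⟩ := Metric.isOpen_iff.1 hU q hqU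
  have a1 : ∀ y ∈ ball q ρ, (y ∈ Ω ↔ φ y < 0) := fun y hy => by
    have := Set.ext_iff.1 h1 y
    simpa [hs hy] using this
  have a2 : ∀ y ∈ ball q ρ, (y ∈ frontier Ω ↔ φ y = 0) := fun y hy => by
    have := Set.ext_iff.1 h2 y
    simpa [hs hy] using this
  refine ⟨φ, ρ, hρ, hφ.mono hs, fun y hy => hg y (hs hy), a1, a2, ?_, fun y hy hyf =>
    h3 y ⟨hyf, hs hy⟩⟩
  intro y hy
  rw [closure_eq_self_union_frontier, mem_union, a1 y hy, a2 y hy, le_iff_lt_or_eq]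

lemma norm_normal (hΩo : IsOpen Ω) (hΩ : IsC2DomainWithInnerNormal Ω ν)
    {q : EuclideanSpace ℝ (Fin n)} (hq : q ∈ frontier Ω) : ‖ν q‖ = 1 := by
  obtain ⟨φ, ρ, h⟩ := exists_localDef hΩo hΩ hq
  rw [h.normal q (mem_ball_self h.pos) hq, norm_neg, norm_smul, norm_inv, norm_norm,
    inv_mul_cancel₀ (norm_ne_zero_iff.2 (h.grad_ne q (mem_ball_self h.pos)))]

lemma LocalDef.contDiffAt {q : EuclideanSpace ℝ (Fin n)} {φ : EuclideanSpace ℝ (Fin n) → ℝ}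
    {ρ : ℝ} (h : LocalDef Ω ν q φ ρ) {y : EuclideanSpace ℝ (Fin n)} (hy : y ∈ ball q ρ) :
    ContDiffAt ℝ 2 φ y := h.smooth.contDiffAt (isOpen_ball.mem_nhds hy)

lemma LocalDef.hasFDerivAt {q : EuclideanSpace ℝ (Fin n)} {φ : EuclideanSpace ℝ (Fin n) → ℝ}
    {ρ : ℝ} (h : LocalDef Ω ν q φ ρ) {y : EuclideanSpace ℝ (Fin n)} (hy : y ∈ ball q ρ) :
    HasFDerivAt φ (fderiv ℝ φ y) y := ((h.contDiffAt hy).differentiableAt (by simp)).hasFDerivAt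

lemma LocalDef.fderiv_eq {q : EuclideanSpace ℝ (Fin n)} {φ : EuclideanSpace ℝ (Fin n) → ℝ}
    {ρ : ℝ} (h : LocalDef Ω ν q φ ρ) {y : EuclideanSpace ℝ (Fin n)} (hy : y ∈ ball q ρ)
    (hyf : y ∈ frontier Ω) (v : EuclideanSpace ℝ (Fin n)) :
    fderiv ℝ φ y v = -‖gradient φ y‖ * ⟪ν y, v⟫ := by
  have h1 : fderiv ℝ φ y v = ⟪gradient φ y, v⟫ := by
    rw [gradient, InnerProductSpace.toDual_symm_apply]
  have h2 := norm_ne_zero_iff.2 (h.grad_ne y hy)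
  rw [h1, h.normal y hy hyf, inner_neg_left, inner_smul_left]
  simp only [conj_trivial]
  field_simp

lemma differentiableAt_gradient {φ : EuclideanSpace ℝ (Fin n) → ℝ} {y : EuclideanSpace ℝ (Fin n)}
    (h : ContDiffAt ℝ 2 φ y) : DifferentiableAt ℝ (gradient φ) y := by
  have hb : IsBoundedLinearMap ℝ
      (fun L => (InnerProductSpace.toDual ℝ (EuclideanSpace ℝ (Fin n))).symm L) := by
    refine ⟨⟨fun a b => map_add _ a b, fun c a => ?_⟩, 1, one_pos, fun a => ?_⟩
    · rw [map_smulₛₗ]; simp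
    · rw [LinearIsometryEquiv.norm_map, one_mul]
  exact hb.differentiableAt.comp y
    ((h.fderiv_right (m := 1) (by norm_num)).differentiableAt (by simp))

lemma LocalDef.differentiableAt_normal {q : EuclideanSpace ℝ (Fin n)}
    {φ : EuclideanSpace ℝ (Fin n) → ℝ}
    {ρ : ℝ} (h : LocalDef Ω ν q φ ρ) :
    DifferentiableAt ℝ (fun y => -(‖gradient φ y‖⁻¹ • gradient φ y)) q := by
  have hq := mem_ball_self (x := q) h.pos
  have h1 := differentiableAt_gradient (h.contDiffAt hq)
  have h2 := h1.norm ℝ (h.grad_ne q hq)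
  exact ((h2.inv (norm_ne_zero_iff.2 (h.grad_ne q hq))).smul h1).neg

lemma continuousOn_normal (hΩo : IsOpen Ω) (hΩ : IsC2DomainWithInnerNormal Ω ν) :
    ContinuousOn ν (frontier Ω) := by
  intro q hq
  obtain ⟨φ, ρ, h⟩ := exists_localDef hΩo hΩ hq
  have h1 := h.differentiableAt_normal.continuousAt.continuousWithinAt (s := frontier Ω)
  refine h1.congr_of_eventuallyEq ?_ (h.normal q (mem_ball_self h.pos) hq)
  filter_upwards [self_mem_nhdsWithin,
    nhdsWithin_le_nhds (isOpen_ball.mem_nhds (mem_ball_self h.pos))] with y h1 h2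
  exact h.normal y h2 h1

lemma LocalDef.grad_pos {q : EuclideanSpace ℝ (Fin n)} {φ : EuclideanSpace ℝ (Fin n) → ℝ}
    {ρ : ℝ} (h : LocalDef Ω ν q φ ρ) : 0 < ‖gradient φ q‖ :=
  norm_pos_iff.2 (h.grad_ne q (mem_ball_self h.pos))

lemma LocalDef.slope {q : EuclideanSpace ℝ (Fin n)} {φ : EuclideanSpace ℝ (Fin n) → ℝ}
    {ρ : ℝ} (h : LocalDef Ω ν q φ ρ) (hq : q ∈ frontier Ω) (d : EuclideanSpace ℝ (Fin n)) :
    Tendsto (fun τ : ℝ => φ (q + τ • d) / τ) (𝓝[>] 0) (𝓝 (-‖gradient φ q‖ * ⟪ν q, d⟫)) := by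
  have hqb := mem_ball_self (x := q) h.pos
  have := slope_tendsto (v := d) (h.hasFDerivAt hqb).hasFDerivWithinAt (S := univ) (by simp)
  rw [h.fderiv_eq hqb hq, (h.frontier_iff q hqb).1 hq] at this
  simpa using this

lemma ray_mem_ball (q d : EuclideanSpace ℝ (Fin n)) {ρ : ℝ} (hρ : 0 < ρ) :
    ∀ᶠ τ in 𝓝[>] (0:ℝ), q + τ • d ∈ ball q ρ := by
  have : Continuous (fun τ : ℝ => q + τ • d) := by fun_prop
  exact nhdsWithin_le_nhds ((this.tendsto' 0 q (by simp)).eventually (ball_mem_nhds q hρ))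

lemma ray_mem (hΩo : IsOpen Ω) (hΩ : IsC2DomainWithInnerNormal Ω ν)
    {q d : EuclideanSpace ℝ (Fin n)} (hq : q ∈ frontier Ω) (hd : 0 < ⟪ν q, d⟫) :
    ∀ᶠ τ in 𝓝[>] (0:ℝ), q + τ • d ∈ Ω := by
  obtain ⟨φ, ρ, h⟩ := exists_localDef hΩo hΩ hq
  have h1 := (h.slope hq d).eventually
    (gt_mem_nhds (show -‖gradient φ q‖ * ⟪ν q, d⟫ < 0 by nlinarith [mul_pos h.grad_pos hd]))
  filter_upwards [h1, ray_mem_ball q d h.pos, self_mem_nhdsWithin] with τ a1 a2 a3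
  rw [h.mem_iff _ a2]
  have a3 : 0 < τ := a3
  rwa [div_lt_iff₀ a3, zero_mul] at a1

lemma ray_not_mem (hΩo : IsOpen Ω) (hΩ : IsC2DomainWithInnerNormal Ω ν)
    {q d : EuclideanSpace ℝ (Fin n)} (hq : q ∈ frontier Ω) (hd : ⟪ν q, d⟫ < 0) :
    ∀ᶠ τ in 𝓝[>] (0:ℝ), q + τ • d ∉ closure Ω := by
  obtain ⟨φ, ρ, h⟩ := exists_localDef hΩo hΩ hq
  have h1 := (h.slope hq d).eventually
    (lt_mem_nhds (show 0 < -‖gradient φ q‖ * ⟪ν q, d⟫ by nlinarith [mul_pos h.grad_pos (neg_pos.2 hd)]))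
  filter_upwards [h1, ray_mem_ball q d h.pos, self_mem_nhdsWithin] with τ a1 a2 a3
  rw [h.closure_iff _ a2, not_le]
  have a3 : 0 < τ := a3
  rwa [lt_div_iff₀ a3, zero_mul] at a1

/-- A `C²` domain lies on one side of its boundary: it is regular open. -/
lemma interior_closure_subset (hΩo : IsOpen Ω) (hΩ : IsC2DomainWithInnerNormal Ω ν) :
    interior (closure Ω) ⊆ Ω := by
  intro x hx
  by_contra hxn
  have hxf : x ∈ frontier Ω := by
    rw [hΩo.frontier_eq]; exact ⟨interior_subset hx, hxn⟩
  have h1 := ray_not_mem (d := -ν x) hΩo hΩ hxf (by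
    rw [inner_neg_right, real_inner_self_eq_norm_sq, norm_normal hΩo hΩ hxf]; norm_num)
  have c : Continuous (fun τ : ℝ => x + τ • (-ν x)) := by fun_prop
  have h2 : ∀ᶠ τ in 𝓝[>] (0:ℝ), x + τ • (-ν x) ∈ interior (closure Ω) :=
    nhdsWithin_le_nhds ((c.tendsto' 0 x (by simp)).eventually (isOpen_interior.mem_nhds hx))
  obtain ⟨τ, h3, h4⟩ := (h1.and h2).exists
  exact h3 (interior_subset h4)

/-- First-order expansion of a defining function at a boundary point, with quadratic error. -/
lemma LocalDef.quadratic {q : EuclideanSpace ℝ (Fin n)} {φ : EuclideanSpace ℝ (Fin n) → ℝ}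
    {ρ : ℝ} (h : LocalDef Ω ν q φ ρ) (hq : q ∈ frontier Ω) :
    ∃ M > 0, ∃ ρ' > 0, ρ' ≤ ρ ∧ ∀ v, ‖v‖ < ρ' →
      |φ (q + v) + ‖gradient φ q‖ * ⟪ν q, v⟫| ≤ M * ‖v‖ ^ 2 := by
  have hqb := mem_ball_self (x := q) h.pos
  obtain ⟨K, t, ht, hK⟩ :=
    ((h.contDiffAt hqb).fderiv_right (m := 1) (by norm_num)).exists_lipschitzOnWith
  obtain ⟨ρ', hρ', hs⟩ := Metric.mem_nhds_iff.1 ht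
  refine ⟨K + 1, by positivity, min ρ' ρ, lt_min hρ' h.pos, min_le_right _ _, fun v hv => ?_⟩
  have hsub : closedBall q ‖v‖ ⊆ ball q ρ' ∩ ball q ρ := fun z hz =>
    ⟨mem_ball.2 ((mem_closedBall.1 hz).trans_lt (hv.trans_le (min_le_left _ _))),
     mem_ball.2 ((mem_closedBall.1 hz).trans_lt (hv.trans_le (min_le_right _ _)))⟩
  have := (convex_closedBall q ‖v‖).norm_image_sub_le_of_norm_hasFDerivWithin_le'
    (f := φ) (f' := fderiv ℝ φ) (φ := fderiv ℝ φ q) (C := K * ‖v‖)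
    (fun z hz => (h.hasFDerivAt (hsub hz).2).hasFDerivWithinAt)
    (fun z hz => by
      have h1 := hK.dist_le_mul z (hs (hsub hz).1) q (mem_of_mem_nhds ht)
      rw [dist_eq_norm] at h1
      refine h1.trans ?_
      gcongr
      exact hz)
    (mem_closedBall_self (norm_nonneg v)) (y := q + v) (by simp)
  rw [(h.frontier_iff q hqb).1 hq, add_sub_cancel_left, h.fderiv_eq hqb hq] at this
  simp only [sub_zero, Real.norm_eq_abs] at this
  have e1 : φ (q + v) - -‖gradient φ q‖ * ⟪ν q, v⟫ = φ (q + v) + ‖gradient φ q‖ * ⟪ν q, v⟫ := by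
    ring
  rw [e1] at this
  nlinarith [sq_nonneg ‖v‖]

/-- Interior ball condition at a boundary point, for all small radii. -/
lemma interior_ball (hΩo : IsOpen Ω) (hΩ : IsC2DomainWithInnerNormal Ω ν)
    {q : EuclideanSpace ℝ (Fin n)} (hq : q ∈ frontier Ω) :
    ∃ r₀ > 0, ∀ r, 0 < r → r ≤ r₀ → ∀ x ∈ closedBall (q + r • ν q) r, x ≠ q → x ∈ Ω := by
  obtain ⟨φ, ρ, h⟩ := exists_localDef hΩo hΩ hq
  obtain ⟨M, hM, ρ', hρ', hρρ, hquad⟩ := h.quadratic hq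
  have hk := h.grad_pos
  set k := ‖gradient φ q‖
  refine ⟨min (ρ' / 3) (k / (4 * M)), by positivity, fun r hr hr0 x hx hxq => ?_⟩
  have hr1 : r ≤ ρ' / 3 := hr0.trans (min_le_left _ _)
  have hr2 : r * (4 * M) ≤ k := by
    have := hr0.trans (min_le_right _ _)
    rwa [le_div_iff₀ (by positivity)] at this
  have hν := norm_normal hΩo hΩ hq
  rw [mem_closedBall_iff_norm] at hx
  obtain ⟨v, rfl⟩ : ∃ v, x = q + v := ⟨x - q, by abel⟩
  have hv0 : 0 < ‖v‖ := norm_pos_iff.2 (by simpa using hxq)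
  have e1 : q + v - (q + r • ν q) = v - r • ν q := by abel
  rw [e1] at hx
  have hvn : ‖v‖ < ρ' := by
    have : v = (v - r • ν q) + r • ν q := by abel
    have h2 := norm_add_le (v - r • ν q) (r • ν q)
    rw [← this, norm_smul, hν, Real.norm_eq_abs, abs_of_pos hr] at h2
    linarith
  have hsq : ‖v‖ ^ 2 ≤ 2 * r * ⟪ν q, v⟫ := by
    have h2 : ‖v - r • ν q‖ ^ 2 ≤ r ^ 2 := by gcongr
    rw [norm_sub_sq_real, inner_smul_right, norm_smul, hν, real_inner_comm, Real.norm_eq_abs,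
      mul_one, sq_abs] at h2
    linarith
  rw [h.mem_iff (q + v) (by rw [mem_ball_iff_norm]; simpa using hvn.trans_le hρρ)]
  have h3 := (abs_le.1 (hquad v hvn)).2
  have hI : 0 < ⟪ν q, v⟫ := by
    have : 0 < 2 * r * ⟪ν q, v⟫ := lt_of_lt_of_le (by positivity) hsq
    exact pos_of_mul_pos_right this (by positivity)
  have h4 : M * ‖v‖ ^ 2 ≤ M * (2 * r * ⟪ν q, v⟫) := by gcongr
  nlinarith

lemma uniqueDiffOn_closure (hΩo : IsOpen Ω) (hΩ : IsC2DomainWithInnerNormal Ω ν) :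
    UniqueDiffOn ℝ (closure Ω) := by
  intro q hq
  by_cases hqΩ : q ∈ Ω
  · exact (hΩo.uniqueDiffWithinAt hqΩ).mono subset_closure
  have hqf : q ∈ frontier Ω := by rw [hΩo.frontier_eq]; exact ⟨hq, hqΩ⟩
  obtain ⟨r, hr, h⟩ := interior_ball hΩo hΩ hqf
  have h1 : UniqueDiffWithinAt ℝ (closedBall (q + r • ν q) r) q := by
    refine uniqueDiffOn_convex (convex_closedBall _ _) ?_ q ?_
    · rw [interior_closedBall _ hr.ne']; exact ⟨_, mem_ball_self hr⟩
    · rw [mem_closedBall_iff_norm]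
      simp [norm_smul, norm_normal hΩo hΩ hqf, abs_of_pos hr]
  refine h1.mono fun x hx => ?_
  by_cases hxq : x = q
  · rw [hxq]; exact hq
  · exact subset_closure (h r hr le_rfl x hx hxq)

/-- Every tangent vector at a boundary point is the velocity of a curve in the boundary, along
which the normal is differentiable. -/
lemma exists_tangent_curve (hΩo : IsOpen Ω) (hΩ : IsC2DomainWithInnerNormal Ω ν)
    {q v : EuclideanSpace ℝ (Fin n)} (hq : q ∈ frontier Ω) (hv : ⟪ν q, v⟫ = 0) :
    ∃ γ : ℝ → EuclideanSpace ℝ (Fin n), γ 0 = q ∧ HasDerivAt γ v 0 ∧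
      (∀ᶠ τ in 𝓝 0, γ τ ∈ frontier Ω) ∧ DifferentiableAt ℝ (fun τ => ν (γ τ)) 0 := by
  obtain ⟨φ, ρ, h⟩ := exists_localDef hΩo hΩ hq
  obtain ⟨M, hM, ρ', hρ', hρρ, hquad⟩ := h.quadratic hq
  have hk := h.grad_pos
  set k := ‖gradient φ q‖
  have hν := norm_normal hΩo hΩ hq
  set B := (2 * M * ‖v‖ ^ 2 + 1) / k with hB
  have hB0 : 0 < B := by positivity
  have hkB : k * B = 2 * M * ‖v‖ ^ 2 + 1 := by rw [hB]; field_simp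
  -- the intermediate value theorem in the normal direction
  have hroot : ∀ᶠ τ in 𝓝 (0:ℝ), ∃ s, |s| ≤ B * τ ^ 2 ∧ q + (τ • v + s • ν q) ∈ ball q ρ ∧
      φ (q + (τ • v + s • ν q)) = 0 := by
    have c1 : Tendsto (fun τ : ℝ => 2 * M * B ^ 2 * τ ^ 2) (𝓝 0) (𝓝 0) :=
      Continuous.tendsto' (by fun_prop) _ _ (by simp)
    have c2 : Tendsto (fun τ : ℝ => |τ| * ‖v‖ + B * τ ^ 2) (𝓝 0) (𝓝 0) :=
      Continuous.tendsto' (by fun_prop) _ _ (by simp)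
    filter_upwards [c1.eventually (gt_mem_nhds one_pos), c2.eventually (gt_mem_nhds hρ')] with τ h1 h2
    have hnorm : ∀ s, |s| ≤ B * τ ^ 2 → ‖τ • v + s • ν q‖ < ρ' := by
      intro s hs
      have := norm_add_le (τ • v) (s • ν q)
      rw [norm_smul, norm_smul, hν, Real.norm_eq_abs, Real.norm_eq_abs] at this
      linarith
    have hin : ∀ s, |s| ≤ B * τ ^ 2 → q + (τ • v + s • ν q) ∈ ball q ρ := fun s hs => by
      rw [mem_ball_iff_norm]; simpa using (hnorm s hs).trans_le hρρ
    have hinner : ∀ s : ℝ, ⟪ν q, τ • v + s • ν q⟫ = s := fun s => by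
      rw [inner_add_right, inner_smul_right, inner_smul_right, hv, real_inner_self_eq_norm_sq, hν]
      simp
    have hsq : ∀ s : ℝ, ‖τ • v + s • ν q‖ ^ 2 = τ ^ 2 * ‖v‖ ^ 2 + s ^ 2 := fun s => by
      rw [norm_add_sq_real, inner_smul_left, inner_smul_right, real_inner_comm, hv, norm_smul,
        norm_smul, hν, mul_pow, mul_pow, Real.norm_eq_abs, Real.norm_eq_abs, sq_abs, sq_abs]
      simp
    have hBτ : 0 ≤ B * τ ^ 2 := by positivity
    have hcont : ContinuousOn (fun s : ℝ => φ (q + (τ • v + s • ν q)))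
        (Icc (-(B * τ ^ 2)) (B * τ ^ 2)) := by
      refine h.smooth.continuousOn.comp (by fun_prop) fun s hs => hin s (abs_le.2 hs)
    have b1 : φ (q + (τ • v + (B * τ ^ 2) • ν q)) ≤ 0 := by
      have := (abs_le.1 (hquad _ (hnorm _ (abs_of_nonneg hBτ).le))).2
      rw [hinner, hsq] at this
      nlinarith [mul_le_mul_of_nonneg_right h1.le (sq_nonneg τ), sq_nonneg (τ * ‖v‖)]
    have b2 : 0 ≤ φ (q + (τ • v + (-(B * τ ^ 2)) • ν q)) := by
      have := (abs_le.1 (hquad _ (hnorm (-(B * τ ^ 2)) (by rw [abs_neg, abs_of_nonneg hBτ])))).1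
      rw [hinner, hsq] at this
      nlinarith [mul_le_mul_of_nonneg_right h1.le (sq_nonneg τ), sq_nonneg (τ * ‖v‖)]
    obtain ⟨s, hs, hs0⟩ := intermediate_value_Icc' (by linarith) hcont ⟨b1, b2⟩
    exact ⟨s, abs_le.2 hs, hin s (abs_le.2 hs), hs0⟩
  have hch : ∀ τ : ℝ, ∃ s, (∃ s, |s| ≤ B * τ ^ 2 ∧ q + (τ • v + s • ν q) ∈ ball q ρ ∧
      φ (q + (τ • v + s • ν q)) = 0) → (|s| ≤ B * τ ^ 2 ∧ q + (τ • v + s • ν q) ∈ ball q ρ ∧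
      φ (q + (τ • v + s • ν q)) = 0) := fun τ => by
    by_cases hτ : ∃ s, |s| ≤ B * τ ^ 2 ∧ q + (τ • v + s • ν q) ∈ ball q ρ ∧
      φ (q + (τ • v + s • ν q)) = 0
    · obtain ⟨s, hs⟩ := hτ
      exact ⟨s, fun _ => hs⟩
    · exact ⟨0, fun h => absurd h hτ⟩
  choose s hs using hch
  have hs' : ∀ᶠ τ in 𝓝 (0:ℝ), |s τ| ≤ B * τ ^ 2 ∧ q + (τ • v + s τ • ν q) ∈ ball q ρ ∧
      φ (q + (τ • v + s τ • ν q)) = 0 := hroot.mono fun τ hτ => hs τ hτ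
  have hs0 : s 0 = 0 := by
    have := hs'.self_of_nhds.1
    simpa using this
  have hsd : HasDerivAt s 0 0 := by
    have : s =O[𝓝 0] fun x => ‖x - 0‖ ^ 2 := by
      refine Asymptotics.IsBigO.of_bound B (hs'.mono fun τ hτ => ?_)
      simpa using hτ.1
    have := this.hasFDerivAt (𝕜 := ℝ) (by norm_num)
    simpa using this.hasDerivAt
  have hγ : HasDerivAt (fun τ => q + (τ • v + s τ • ν q)) v 0 := by
    have := (((hasDerivAt_id (0:ℝ)).smul_const v).add (hsd.smul_const (ν q))).const_add q
    simpa using this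
  have hγ0 : q + ((0:ℝ) • v + s 0 • ν q) = q := by simp [hs0]
  have hfr : ∀ᶠ τ in 𝓝 (0:ℝ), q + (τ • v + s τ • ν q) ∈ frontier Ω :=
    hs'.mono fun τ hτ => (h.frontier_iff _ hτ.2.1).2 hτ.2.2
  refine ⟨fun τ => q + (τ • v + s τ • ν q), hγ0, hγ, hfr, ?_⟩
  have hd : DifferentiableAt ℝ (fun τ : ℝ => (fun y => -(‖gradient φ y‖⁻¹ • gradient φ y))
      (q + (τ • v + s τ • ν q))) 0 := by
    refine DifferentiableAt.comp (0:ℝ) (g := fun y => -(‖gradient φ y‖⁻¹ • gradient φ y))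
      (f := fun τ : ℝ => q + (τ • v + s τ • ν q)) ?_ hγ.differentiableAt
    simp only [hγ0]
    exact h.differentiableAt_normal
  refine hd.congr_of_eventuallyEq ?_
  filter_upwards [hs', hfr] with τ h1 h2
  exact h.normal _ h1.2.1 h2

/-- Near a boundary point at which `e` points outwards, the domain lies locally below a defining
function that strictly increases in the direction `e`. -/
lemma exists_monotone_def (hΩo : IsOpen Ω) (hΩ : IsC2DomainWithInnerNormal Ω ν)
    {q e : EuclideanSpace ℝ (Fin n)} (hq : q ∈ frontier Ω) (he : ⟪ν q, e⟫ < 0) :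
    ∃ φ ρ, LocalDef Ω ν q φ ρ ∧ ∀ x (τ : ℝ), 0 < τ → x ∈ ball q ρ → x + τ • e ∈ ball q ρ →
      φ x < φ (x + τ • e) := by
  obtain ⟨φ, ρ, h⟩ := exists_localDef hΩo hΩ hq
  have hqb := mem_ball_self (x := q) h.pos
  have hd : 0 < fderiv ℝ φ q e := by
    rw [h.fderiv_eq hqb hq]; nlinarith [mul_pos h.grad_pos (neg_pos.2 he)]
  have hc : ContinuousAt (fun x => fderiv ℝ φ x e) q :=
    (((h.contDiffAt hqb).fderiv_right (m := 1) (by norm_num)).continuousAt).clm_apply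
      continuousAt_const
  obtain ⟨η, hη, hs⟩ := Metric.eventually_nhds_iff_ball.1 (hc.eventually (lt_mem_nhds hd))
  have hsub : ball q (min η ρ) ⊆ ball q ρ := ball_subset_ball (min_le_right _ _)
  refine ⟨φ, min η ρ, ⟨lt_min hη h.pos, h.smooth.mono hsub, fun y hy => h.grad_ne y (hsub hy),
    fun y hy => h.mem_iff y (hsub hy), fun y hy => h.frontier_iff y (hsub hy),
    fun y hy => h.closure_iff y (hsub hy), fun y hy => h.normal y (hsub hy)⟩, ?_⟩
  intro x τ hτ hx hxτ
  have hseg : ∀ σ ∈ Icc (0:ℝ) τ, x + σ • e ∈ ball q (min η ρ) := by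
    intro σ hσ
    have := (convex_ball q (min η ρ)).add_smul_mem hx hxτ
      (t := σ / τ) ⟨div_nonneg hσ.1 hτ.le, (div_le_one hτ).2 hσ.2⟩
    rwa [smul_smul, div_mul_cancel₀ _ hτ.ne'] at this
  have hl : ∀ σ : ℝ, HasDerivAt (fun σ : ℝ => x + σ • e) e σ := fun σ => by
    simpa using ((hasDerivAt_id σ).smul_const e).const_add x
  have hder : ∀ σ ∈ Icc (0:ℝ) τ, HasDerivAt (fun σ : ℝ => φ (x + σ • e))
      (fderiv ℝ φ (x + σ • e) e) σ := fun σ hσ =>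
    HasFDerivAt.comp_hasDerivAt σ (f := fun σ : ℝ => x + σ • e) (l := φ)
      (h.hasFDerivAt (hsub (hseg σ hσ))) (hl σ)
  have := strictMonoOn_of_deriv_pos (convex_Icc 0 τ) (f := fun σ : ℝ => φ (x + σ • e))
    (fun σ hσ => (hder σ hσ).continuousAt.continuousWithinAt)
    (fun σ hσ => by
      rw [(hder σ (interior_subset hσ)).deriv]
      exact hs _ (ball_subset_ball (min_le_left _ _) (hseg σ (interior_subset hσ))))
    (left_mem_Icc.2 hτ.le) (right_mem_Icc.2 hτ.le) hτ
  simpa using this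

end Domain

/-! ### Positive solutions up to the boundary -/

/-- `u` is a positive `C²` solution of `-Δu = f(u)` in the bounded `C²` domain `Ω` (with inner normal
`ν`), vanishing on `∂Ω`, with `f` the sum of a locally Lipschitz and a non-decreasing function. -/
structure PosSol {n : ℕ} (Ω : Set (EuclideanSpace ℝ (Fin n)))
    (ν : EuclideanSpace ℝ (Fin n) → EuclideanSpace ℝ (Fin n))
    (u : EuclideanSpace ℝ (Fin n) → ℝ) (f : ℝ → ℝ) : Prop where
  isOpen : IsOpen Ω
  bdd : IsBounded Ω
  c2 : IsC2DomainWithInnerNormal Ω ν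
  smooth : ContDiffOn ℝ 2 u (closure Ω)
  pos : ∀ x ∈ Ω, 0 < u x
  zero : ∀ x ∈ frontier Ω, u x = 0
  eq : ∀ x ∈ Ω, lap u x = -(f (u x))
  split : ∃ g h : ℝ → ℝ, f = g + h ∧ LocallyLipschitz g ∧ Monotone h

/-- The differential of `u` on `closure Ω`, up to the boundary. -/
abbrev dOn {n : ℕ} (Ω : Set (EuclideanSpace ℝ (Fin n))) (u : EuclideanSpace ℝ (Fin n) → ℝ) :
    EuclideanSpace ℝ (Fin n) → EuclideanSpace ℝ (Fin n) →L[ℝ] ℝ :=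
  fderivWithin ℝ u (closure Ω)

/-- The second differential of `u` on `closure Ω`, up to the boundary. -/
abbrev ddOn {n : ℕ} (Ω : Set (EuclideanSpace ℝ (Fin n))) (u : EuclideanSpace ℝ (Fin n) → ℝ) :
    EuclideanSpace ℝ (Fin n) → EuclideanSpace ℝ (Fin n) →L[ℝ] EuclideanSpace ℝ (Fin n) →L[ℝ] ℝ :=
  fderivWithin ℝ (dOn Ω u) (closure Ω)

lemma hasDerivAt_comp_of_eventually {E G : Type*} [NormedAddCommGroup E] [NormedSpace ℝ E]
    [NormedAddCommGroup G] [NormedSpace ℝ G] {S : Set E} {u : E → G} {L : E →L[ℝ] G} {γ : ℝ → E}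
    {v : E} {q : E} (hu : HasFDerivWithinAt u L S q) (h0 : γ 0 = q) (hγ : HasDerivAt γ v 0)
    (hS : ∀ᶠ τ in 𝓝 (0:ℝ), γ τ ∈ S) : HasDerivAt (fun τ => u (γ τ)) (L v) 0 := by
  have h1 := hu.comp_hasDerivWithinAt_of_eq (0:ℝ) (hγ.hasDerivWithinAt (s := {τ | γ τ ∈ S}))
    (fun τ hτ => hτ) h0.symm
  exact h1.hasDerivAt hS

namespace PosSol

variable {n : ℕ} {Ω : Set (EuclideanSpace ℝ (Fin n))}
  {ν : EuclideanSpace ℝ (Fin n) → EuclideanSpace ℝ (Fin n)}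
  {u : EuclideanSpace ℝ (Fin n) → ℝ} {f : ℝ → ℝ}

lemma isCompact (hs : PosSol Ω ν u f) : IsCompact (closure Ω) := hs.bdd.isCompact_closure

lemma mem_frontier (hs : PosSol Ω ν u f) {x : EuclideanSpace ℝ (Fin n)} :
    x ∈ frontier Ω ↔ x ∈ closure Ω ∧ x ∉ Ω := by
  rw [hs.isOpen.frontier_eq]; rfl

lemma mem_or_frontier (hs : PosSol Ω ν u f) {x : EuclideanSpace ℝ (Fin n)} (hx : x ∈ closure Ω) :
    x ∈ Ω ∨ x ∈ frontier Ω := by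
  by_cases h : x ∈ Ω
  · exact Or.inl h
  · exact Or.inr (hs.mem_frontier.2 ⟨hx, h⟩)

lemma frontier_sub {x : EuclideanSpace ℝ (Fin n)} (hx : x ∈ frontier Ω) : x ∈ closure Ω :=
  frontier_subset_closure hx

lemma nonneg (hs : PosSol Ω ν u f) {x : EuclideanSpace ℝ (Fin n)} (hx : x ∈ closure Ω) :
    0 ≤ u x := by
  rcases hs.mem_or_frontier hx with h | h
  · exact (hs.pos x h).le
  · exact (hs.zero x h).ge

lemma mem_of_pos (hs : PosSol Ω ν u f) {x : EuclideanSpace ℝ (Fin n)} (hx : x ∈ closure Ω)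
    (h : 0 < u x) : x ∈ Ω := by
  rcases hs.mem_or_frontier hx with h1 | h1
  · exact h1
  · rw [hs.zero x h1] at h; exact absurd h (lt_irrefl _)

lemma continuousOn (hs : PosSol Ω ν u f) : ContinuousOn u (closure Ω) := hs.smooth.continuousOn

lemma unique (hs : PosSol Ω ν u f) : UniqueDiffOn ℝ (closure Ω) :=
  uniqueDiffOn_closure hs.isOpen hs.c2

lemma nhds (hs : PosSol Ω ν u f) {x : EuclideanSpace ℝ (Fin n)} (hx : x ∈ Ω) :
    closure Ω ∈ 𝓝 x := mem_of_superset (hs.isOpen.mem_nhds hx) subset_closure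

lemma contDiffAt (hs : PosSol Ω ν u f) {x : EuclideanSpace ℝ (Fin n)} (hx : x ∈ Ω) :
    ContDiffAt ℝ 2 u x := hs.smooth.contDiffAt (hs.nhds hx)

lemma hasFDeriv (hs : PosSol Ω ν u f) {x : EuclideanSpace ℝ (Fin n)} (hx : x ∈ closure Ω) :
    HasFDerivWithinAt u (dOn Ω u x) (closure Ω) x :=
  ((hs.smooth x hx).differentiableWithinAt (by simp)).hasFDerivWithinAt

lemma contDiffOn_d (hs : PosSol Ω ν u f) : ContDiffOn ℝ 1 (dOn Ω u) (closure Ω) :=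
  hs.smooth.fderivWithin hs.unique (by norm_num)

lemma hasFDeriv2 (hs : PosSol Ω ν u f) {x : EuclideanSpace ℝ (Fin n)} (hx : x ∈ closure Ω) :
    HasFDerivWithinAt (dOn Ω u) (ddOn Ω u x) (closure Ω) x :=
  ((hs.contDiffOn_d x hx).differentiableWithinAt (by simp)).hasFDerivWithinAt

lemma continuousOn_d (hs : PosSol Ω ν u f) : ContinuousOn (dOn Ω u) (closure Ω) :=
  hs.contDiffOn_d.continuousOn

lemma continuousOn_dd (hs : PosSol Ω ν u f) : ContinuousOn (ddOn Ω u) (closure Ω) :=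
  hs.contDiffOn_d.continuousOn_fderivWithin hs.unique (by norm_num)

lemma dd_symm (hs : PosSol Ω ν u f) {x : EuclideanSpace ℝ (Fin n)} (hx : x ∈ closure Ω)
    (v w : EuclideanSpace ℝ (Fin n)) : ddOn Ω u x v w = ddOn Ω u x w v := by
  refine (hs.smooth x hx).isSymmSndFDerivWithinAt (by simp) hs.unique ?_ hx v w
  exact closure_mono (hs.isOpen.subset_interior_iff.2 subset_closure) hx

lemma d_eq (hs : PosSol Ω ν u f) {x : EuclideanSpace ℝ (Fin n)} (hx : x ∈ Ω) :
    dOn Ω u x = fderiv ℝ u x := fderivWithin_of_mem_nhds (hs.nhds hx)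

lemma lap_eq_dd (hs : PosSol Ω ν u f) {x : EuclideanSpace ℝ (Fin n)} (hx : x ∈ Ω) :
    lap u x = ∑ i, ddOn Ω u x (EuclideanSpace.single i 1) (EuclideanSpace.single i 1) := by
  have h1 : ddOn Ω u x = fderiv ℝ (fderiv ℝ u) x := by
    rw [ddOn, fderivWithin_of_mem_nhds (hs.nhds hx)]
    refine Filter.EventuallyEq.fderiv_eq ?_
    filter_upwards [hs.isOpen.mem_nhds hx] with y hy using hs.d_eq hy
  unfold lap
  refine Finset.sum_congr rfl fun i _ => ?_
  rw [h1, iteratedFDeriv_two_apply]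
  simp

/-- One constant `L` for which differences of values of the solution satisfy a linear inequality,
and for which either `Δu ≤ L u` in `Ω`, or `Δu` is bounded below by a positive constant
near `∂Ω`. -/
lemma exists_const (hs : PosSol Ω ν u f) : ∃ L ≥ 0,
    (∀ x ∈ closure Ω, ∀ y ∈ closure Ω, u x ≤ u y → f (u x) - f (u y) ≤ L * (u y - u x)) ∧
    ((∀ x ∈ Ω, lap u x ≤ L * u x) ∨ ∃ κ > 0, ∃ η > 0, ∀ x ∈ Ω, u x < η → κ ≤ lap u x) := by
  obtain ⟨g, h, rfl, hg, hh⟩ := hs.split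
  obtain ⟨K, hK⟩ := (hg.locallyLipschitzOn
    (s := insert 0 (u '' closure Ω))).exists_lipschitzOnWith_of_compact
    ((hs.isCompact.image_of_continuousOn hs.continuousOn).insert 0)
  have hKd : ∀ a ∈ insert 0 (u '' closure Ω), ∀ b ∈ insert 0 (u '' closure Ω), a ≤ b →
      |g a - g b| ≤ K * (b - a) := fun a ha b hb hab => by
    have := hK.dist_le_mul a ha b hb
    rwa [Real.dist_eq, Real.dist_eq, abs_sub_comm a b, abs_of_nonneg (sub_nonneg.2 hab)] at this
  have him : ∀ x ∈ closure Ω, u x ∈ insert 0 (u '' closure Ω) := fun x hx =>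
    mem_insert_of_mem _ (mem_image_of_mem _ hx)
  refine ⟨K, K.2, fun x hx y hy hxy => ?_, ?_⟩
  · have h1 := (abs_le.1 (hKd _ (him x hx) _ (him y hy) hxy)).2
    have h2 := hh hxy
    simp only [Pi.add_apply]; linarith
  · by_cases hc : ∀ t > 0, 0 ≤ g 0 + h t
    · left
      intro x hx
      have h1 := (abs_le.1 (hKd 0 (mem_insert _ _) _ (him x (subset_closure hx))
        (hs.pos x hx).le)).2
      have h2 := hc _ (hs.pos x hx)
      rw [hs.eq x hx]
      simp only [Pi.add_apply]; linarith
    · right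
      push Not at hc
      obtain ⟨t, ht, hneg⟩ := hc
      have hcont : Tendsto (fun s => g s + h t) (𝓝 0) (𝓝 (g 0 + h t)) :=
        (hg.continuous.add continuous_const).tendsto 0
      obtain ⟨η, hη, hb⟩ := Metric.eventually_nhds_iff_ball.1
        (hcont.eventually (gt_mem_nhds (show g 0 + h t < (g 0 + h t) / 2 by linarith)))
      refine ⟨-(g 0 + h t) / 2, by linarith, min η t, lt_min hη ht, fun x hx hux => ?_⟩
      have h1 := hb (u x) (by
        rw [mem_ball_zero_iff, Real.norm_eq_abs, abs_of_pos (hs.pos x hx)]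
        exact hux.trans_le (min_le_left _ _))
      have h2 := hh (hux.le.trans (min_le_right _ _))
      rw [hs.eq x hx]
      simp only [Pi.add_apply]; linarith

lemma d_tangent (hs : PosSol Ω ν u f) {q v : EuclideanSpace ℝ (Fin n)} (hq : q ∈ frontier Ω)
    (hv : ⟪ν q, v⟫ = 0) : dOn Ω u q v = 0 := by
  obtain ⟨γ, h0, hγ, hf, -⟩ := exists_tangent_curve hs.isOpen hs.c2 hq hv
  have h1 := hasDerivAt_comp_of_eventually (hs.hasFDeriv (frontier_sub hq)) h0 hγ
    (hf.mono fun τ h => frontier_sub h)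
  have h2 : HasDerivAt (fun τ => u (γ τ)) 0 0 :=
    (hasDerivAt_const (0:ℝ) (0:ℝ)).congr_of_eventuallyEq (hf.mono fun τ h => hs.zero _ h)
  exact h1.unique h2

lemma inner_tangent (hs : PosSol Ω ν u f) {q : EuclideanSpace ℝ (Fin n)} (hq : q ∈ frontier Ω)
    (v : EuclideanSpace ℝ (Fin n)) : ⟪ν q, v - ⟪ν q, v⟫ • ν q⟫ = 0 := by
  rw [inner_sub_right, inner_smul_right, real_inner_self_eq_norm_sq,
    norm_normal hs.isOpen hs.c2 hq]
  simp

lemma d_eq_normal (hs : PosSol Ω ν u f) {q : EuclideanSpace ℝ (Fin n)} (hq : q ∈ frontier Ω)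
    (v : EuclideanSpace ℝ (Fin n)) : dOn Ω u q v = dOn Ω u q (ν q) * ⟪ν q, v⟫ := by
  have := hs.d_tangent hq (hs.inner_tangent hq v)
  rw [map_sub, map_smul, smul_eq_mul] at this
  linarith

lemma normal_ray (hs : PosSol Ω ν u f) {q : EuclideanSpace ℝ (Fin n)} (hq : q ∈ frontier Ω) :
    ∀ᶠ τ in 𝓝[>] (0:ℝ), q + τ • ν q ∈ Ω :=
  ray_mem hs.isOpen hs.c2 hq (by
    rw [real_inner_self_eq_norm_sq, norm_normal hs.isOpen hs.c2 hq]; norm_num)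

lemma normal_nonneg (hs : PosSol Ω ν u f) {q : EuclideanSpace ℝ (Fin n)} (hq : q ∈ frontier Ω) :
    0 ≤ dOn Ω u q (ν q) := by
  refine le_deriv_of_growth (hs.hasFDeriv (frontier_sub hq))
    ((hs.normal_ray hq).mono fun τ h => subset_closure h) ?_
  filter_upwards [hs.normal_ray hq] with τ h
  rw [hs.zero q hq]
  linarith [hs.pos _ h]

/-- Hopf's lemma at the boundary, when `Δu ≤ L u`. -/
lemma normal_pos (hs : PosSol Ω ν u f) {q : EuclideanSpace ℝ (Fin n)} (hq : q ∈ frontier Ω)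
    {L : ℝ} (hL : 0 ≤ L) (hlap : ∀ x ∈ Ω, lap u x ≤ L * u x) : 0 < dOn Ω u q (ν q) := by
  obtain ⟨r, hr, hb⟩ := interior_ball hs.isOpen hs.c2 hq
  have hν := norm_normal hs.isOpen hs.c2 hq
  have hb' := hb r hr le_rfl
  have hsub : ∀ x ∈ ball (q + r • ν q) r, x ∈ Ω := fun x hx => by
    refine hb' x (ball_subset_closedBall hx) ?_
    rintro rfl
    rw [mem_ball_iff_norm] at hx
    simp [norm_smul, hν, abs_of_pos hr] at hx
  obtain ⟨κ, hκ, hg⟩ := hopf_normal hr hL hν (w := u)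
    (hs.continuousOn.mono fun x hx => by
      by_cases h : x = q
      · rw [h]; exact frontier_sub hq
      · exact subset_closure (hb' x hx h))
    (fun x hx => hs.contDiffAt (hsub x hx)) (fun x hx => hs.pos x (hsub x hx))
    (fun x hx => hlap x (hsub x hx))
  refine hκ.trans_le (le_deriv_of_growth (hs.hasFDeriv (frontier_sub hq))
    ((hs.normal_ray hq).mono fun τ h => subset_closure h) ?_)
  rw [hs.zero q hq]
  simpa using hg

/-- At a boundary point where the normal derivative vanishes, the second differential vanishes in
tangential directions: along a boundary curve the nonnegative derivative in an inward direction `w` has a minimum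
there. -/
lemma dd_tangent (hs : PosSol Ω ν u f) {q v : EuclideanSpace ℝ (Fin n)} (hq : q ∈ frontier Ω)
    (h0 : dOn Ω u q (ν q) = 0) (hv : ⟪ν q, v⟫ = 0) (w : EuclideanSpace ℝ (Fin n)) :
    ddOn Ω u q v w = 0 := by
  obtain ⟨γ, hγ0, hγ, hf, hνd⟩ := exists_tangent_curve hs.isOpen hs.c2 hq hv
  have key : ∀ w, 0 < ⟪ν q, w⟫ → ddOn Ω u q v w = 0 := by
    intro w hw
    have h1 := hasDerivAt_comp_of_eventually (hs.hasFDeriv2 (frontier_sub hq)) hγ0 hγ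
      (hf.mono fun τ h => frontier_sub h)
    have h2 := h1.clm_apply (hasDerivAt_const (0:ℝ) w)
    simp only [map_zero, add_zero] at h2
    refine IsLocalMin.hasDerivAt_eq_zero ?_ h2
    have hc : ContinuousAt (fun τ => ⟪ν (γ τ), w⟫) 0 :=
      hνd.continuousAt.inner continuousAt_const
    have hp := hc.eventually (lt_mem_nhds (show 0 < ⟪ν (γ 0), w⟫ by rwa [hγ0]))
    filter_upwards [hf, hp] with τ a1 a2
    rw [hγ0, hs.d_eq_normal hq, h0, zero_mul, hs.d_eq_normal a1]
    exact mul_nonneg (hs.normal_nonneg a1) a2.le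
  have hνν : ⟪ν q, ν q⟫ = 1 := by
    rw [real_inner_self_eq_norm_sq, norm_normal hs.isOpen hs.c2 hq]; norm_num
  have k1 := key (ν q) (by rw [hνν]; norm_num)
  have k2 := key (w + (|⟪ν q, w⟫| + 1) • ν q) (by
    rw [inner_add_right, inner_smul_right, hνν]
    linarith [neg_abs_le ⟪ν q, w⟫])
  rw [map_add, map_smul, k1] at k2
  simpa using k2

lemma dd_eq_of_normal_zero (hs : PosSol Ω ν u f) {q : EuclideanSpace ℝ (Fin n)}
    (hq : q ∈ frontier Ω) (h0 : dOn Ω u q (ν q) = 0) (a b : EuclideanSpace ℝ (Fin n)) :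
    ddOn Ω u q a b = ddOn Ω u q (ν q) (ν q) * (⟪ν q, a⟫ * ⟪ν q, b⟫) := by
  have h1 : ∀ a b, ddOn Ω u q a b = ⟪ν q, a⟫ * ddOn Ω u q (ν q) b := by
    intro a b
    have := hs.dd_tangent hq h0 (hs.inner_tangent hq a) b
    rw [map_sub, map_smul, sub_apply, smul_apply,
      smul_eq_mul] at this
    linarith
  rw [h1 a b, hs.dd_symm (frontier_sub hq), h1 b]
  ring

/-- The normal derivative can vanish at a boundary point only if `f 0 < 0` in the sense that `Δu` is
bounded below by a positive constant near `∂Ω`; then `u` is strictly convex in the normal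
direction. -/
lemma dd_normal_pos (hs : PosSol Ω ν u f) {q : EuclideanSpace ℝ (Fin n)}
    (hq : q ∈ frontier Ω) (h0 : dOn Ω u q (ν q) = 0) : 0 < ddOn Ω u q (ν q) (ν q) := by
  obtain ⟨L, hL, -, hA | ⟨κ, hκ, η, hη, hB⟩⟩ := hs.exists_const
  · exact absurd h0 (hs.normal_pos hq hL hA).ne'
  have hqc := frontier_sub hq
  have hray := hs.normal_ray hq
  have ht : Tendsto (fun τ : ℝ => q + τ • ν q) (𝓝[>] 0) (𝓝[closure Ω] q) := by
    refine tendsto_nhdsWithin_iff.2 ⟨?_, hray.mono fun τ h => subset_closure h⟩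
    have : Continuous (fun τ : ℝ => q + τ • ν q) := by fun_prop
    exact (this.tendsto' 0 q (by simp)).mono_left nhdsWithin_le_nhds
  have hc1 : Tendsto (fun τ : ℝ => u (q + τ • ν q)) (𝓝[>] 0) (𝓝 (u q)) :=
    (hs.continuousOn q hqc).tendsto.comp ht
  have hc2 : ContinuousWithinAt (fun x => ∑ i, ddOn Ω u x (EuclideanSpace.single i 1)
      (EuclideanSpace.single i 1)) (closure Ω) q := by
    refine tendsto_finsetSum _ fun i _ => ?_
    exact ((hs.continuousOn_dd q hqc).clm_apply continuousWithinAt_const).clm_apply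
      continuousWithinAt_const
  have hc3 := hc2.tendsto.comp ht
  have hle : κ ≤ ∑ i, ddOn Ω u q (EuclideanSpace.single i 1) (EuclideanSpace.single i 1) := by
    refine ge_of_tendsto hc3 ?_
    rw [hs.zero q hq] at hc1
    filter_upwards [hray, hc1.eventually (gt_mem_nhds hη)] with τ a1 a2
    have := hB _ a1 a2
    rwa [hs.lap_eq_dd a1] at this
  have htr : ∑ i, ddOn Ω u q (EuclideanSpace.single i 1) (EuclideanSpace.single i 1) =
      ddOn Ω u q (ν q) (ν q) := by
    simp_rw [hs.dd_eq_of_normal_zero hq h0 (EuclideanSpace.single _ 1)]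
    rw [← Finset.mul_sum]
    have : ∑ i, ⟪ν q, EuclideanSpace.single i (1:ℝ)⟫ * ⟪ν q, EuclideanSpace.single i (1:ℝ)⟫ = 1 := by
      have h2 := EuclideanSpace.real_norm_sq_eq (ν q)
      rw [norm_normal hs.isOpen hs.c2 hq] at h2
      simp only [EuclideanSpace.inner_single_right]
      simp only [one_mul, conj_trivial, ← pow_two]
      linarith
    rw [this, mul_one]
  linarith

/-- Near a boundary point at which `e` points outwards, the solution strictly decreases in the
direction `e`. -/
lemma deriv_neg_near (hs : PosSol Ω ν u f) {q e : EuclideanSpace ℝ (Fin n)}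
    (hq : q ∈ frontier Ω) (he1 : ‖e‖ = 1) (he : ⟪ν q, e⟫ < 0) :
    ∃ δ > 0, ∀ x ∈ Ω, x ∈ ball q δ → fderiv ℝ u x e < 0 := by
  have hqc := frontier_sub hq
  rcases (hs.normal_nonneg hq).lt_or_eq with hpos | h0
  · have hc : ContinuousWithinAt (fun x => dOn Ω u x e) (closure Ω) q :=
      (hs.continuousOn_d q hqc).clm_apply continuousWithinAt_const
    have hneg : dOn Ω u q e < 0 := by
      rw [hs.d_eq_normal hq]; nlinarith
    obtain ⟨δ, hδ, hb⟩ := Metric.mem_nhdsWithin_iff.1 (hc.tendsto.eventually (gt_mem_nhds hneg))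
    refine ⟨δ, hδ, fun x hx hxb => ?_⟩
    have : dOn Ω u x e < 0 := hb ⟨hxb, subset_closure hx⟩
    rwa [hs.d_eq hx] at this
  have h0 := h0.symm
  have hc : ContinuousWithinAt (fun x => ddOn Ω u x e e) (closure Ω) q :=
    ((hs.continuousOn_dd q hqc).clm_apply continuousWithinAt_const).clm_apply
      continuousWithinAt_const
  have hpos : 0 < ddOn Ω u q e e := by
    rw [hs.dd_eq_of_normal_zero hq h0 e e]
    have := hs.dd_normal_pos hq h0
    have : 0 < ⟪ν q, e⟫ * ⟪ν q, e⟫ := mul_pos_of_neg_of_neg he he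
    positivity
  obtain ⟨δ₁, hδ₁, hb₁⟩ := Metric.mem_nhdsWithin_iff.1 (hc.tendsto.eventually (lt_mem_nhds hpos))
  have hcν : ContinuousWithinAt (fun x => ⟪ν x, e⟫) (frontier Ω) q :=
    (continuousOn_normal hs.isOpen hs.c2 q hq).inner continuousWithinAt_const
  obtain ⟨δ₂, hδ₂, hb₂⟩ := Metric.mem_nhdsWithin_iff.1 (hcν.tendsto.eventually (gt_mem_nhds he))
  obtain ⟨φ, ρ, hφ, hmono⟩ := exists_monotone_def hs.isOpen hs.c2 hq he
  set R := min ρ (min δ₁ δ₂) with hR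
  have hR0 : 0 < R := lt_min hφ.pos (lt_min hδ₁ hδ₂)
  have hRρ : ball q R ⊆ ball q ρ := ball_subset_ball (min_le_left _ _)
  have hR1 : ball q R ⊆ ball q δ₁ :=
    ball_subset_ball ((min_le_right _ _).trans (min_le_left _ _))
  have hR2 : ball q R ⊆ ball q δ₂ :=
    ball_subset_ball ((min_le_right _ _).trans (min_le_right _ _))
  set t := R / 2 with ht
  have ht0 : 0 < t := by positivity
  have hin : ∀ x ∈ ball q t, ∀ σ ∈ Icc (0:ℝ) t, x + σ • e ∈ ball q R := by
    intro x hx σ hσ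
    rw [mem_ball_iff_norm] at hx ⊢
    have e1 : x + σ • e - q = (x - q) + σ • e := by abel
    have e2 := norm_add_le (x - q) (σ • e)
    rw [e1]
    rw [norm_smul, he1, Real.norm_eq_abs, abs_of_nonneg hσ.1] at e2
    linarith [hσ.2]
  have hφt : 0 < φ (q + t • e) := by
    have := hmono q t ht0 (mem_ball_self hφ.pos)
      (hRρ (hin q (mem_ball_self ht0) t ⟨ht0.le, le_rfl⟩))
    rwa [(hφ.frontier_iff q (mem_ball_self hφ.pos)).1 hq] at this
  have hcφ : ContinuousAt (fun x => φ (x + t • e)) q := by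
    refine ContinuousAt.comp (g := φ) (f := fun x => x + t • e) ?_ (by fun_prop)
    exact (hφ.contDiffAt (hRρ (hin q (mem_ball_self ht0) t ⟨ht0.le, le_rfl⟩))).continuousAt
  obtain ⟨δ₃, hδ₃, hb₃⟩ := Metric.eventually_nhds_iff_ball.1
    (hcφ.eventually (lt_mem_nhds hφt))
  refine ⟨min δ₃ t, lt_min hδ₃ ht0, fun x hx hxb => ?_⟩
  have hxt : x ∈ ball q t := ball_subset_ball (min_le_right _ _) hxb
  have hφx : φ x < 0 := (hφ.mem_iff x (hRρ (by simpa using hin x hxt 0 ⟨le_rfl, ht0.le⟩))).1 hx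
  have hcs : ContinuousOn (fun σ : ℝ => φ (x + σ • e)) (Icc 0 t) :=
    hφ.smooth.continuousOn.comp (by fun_prop) fun σ hσ => hRρ (hin x hxt σ hσ)
  obtain ⟨σ₀, hσ₀, hz⟩ := intermediate_value_Icc ht0.le hcs
    (show (0:ℝ) ∈ Icc (φ (x + (0:ℝ) • e)) (φ (x + t • e)) from
      ⟨by simpa using hφx.le, (hb₃ x (ball_subset_ball (min_le_left _ _) hxb)).le⟩)
  have hσ0 : 0 < σ₀ := by
    rcases hσ₀.1.lt_or_eq with h | h
    · exact h
    · rw [← h] at hz; simp at hz; linarith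
  have hin' : ∀ σ ∈ Icc (0:ℝ) σ₀, x + σ • e ∈ ball q R := fun σ hσ =>
    hin x hxt σ ⟨hσ.1, hσ.2.trans hσ₀.2⟩
  have hlt : ∀ σ, 0 ≤ σ → σ < σ₀ → x + σ • e ∈ Ω := by
    intro σ h1 h2
    have e1 : x + σ₀ • e = (x + σ • e) + (σ₀ - σ) • e := by module
    have := hmono (x + σ • e) (σ₀ - σ) (by linarith) (hRρ (hin' σ ⟨h1, h2.le⟩))
      (by rw [← e1]; exact hRρ (hin' σ₀ ⟨hσ0.le, le_rfl⟩))
    rw [← e1] at this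
    rw [hφ.mem_iff _ (hRρ (hin' σ ⟨h1, h2.le⟩))]
    exact this.trans_eq hz
  have hend : x + σ₀ • e ∈ frontier Ω :=
    (hφ.frontier_iff _ (hRρ (hin' σ₀ ⟨hσ0.le, le_rfl⟩))).2 hz
  have hcl : ∀ σ ∈ Icc (0:ℝ) σ₀, x + σ • e ∈ closure Ω := by
    intro σ hσ
    rcases hσ.2.lt_or_eq with h | h
    · exact subset_closure (hlt σ hσ.1 h)
    · rw [h]; exact frontier_sub hend
  have hend_le : dOn Ω u (x + σ₀ • e) e ≤ 0 := by
    rw [hs.d_eq_normal hend]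
    have h1 := hs.normal_nonneg hend
    have h2 : ⟪ν (x + σ₀ • e), e⟫ < 0 := hb₂ ⟨hR2 (hin' σ₀ ⟨hσ0.le, le_rfl⟩), hend⟩
    nlinarith
  have hsm := strictMonoOn_of_deriv_pos (convex_Icc 0 σ₀)
    (f := fun σ : ℝ => dOn Ω u (x + σ • e) e)
    ((hs.continuousOn_d.comp (by fun_prop) hcl).clm_apply continuousOn_const)
    (fun σ hσ => by
      rw [interior_Icc] at hσ
      have hm := hlt σ hσ.1.le hσ.2
      have hl : HasDerivAt (fun σ : ℝ => x + σ • e) e σ := by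
        simpa using ((hasDerivAt_id σ).smul_const e).const_add x
      have h1 := HasFDerivAt.comp_hasDerivAt σ (f := fun σ : ℝ => x + σ • e) (l := dOn Ω u)
        ((hs.hasFDeriv2 (subset_closure hm)).hasFDerivAt (hs.nhds hm)) hl
      have h2 := h1.clm_apply (hasDerivAt_const σ e)
      simp only [map_zero, add_zero, Function.comp_def] at h2
      rw [h2.deriv]
      exact hb₁ ⟨hR1 (hin' σ ⟨hσ.1.le, hσ.2.le⟩), hcl σ ⟨hσ.1.le, hσ.2.le⟩⟩)
  have := hsm (left_mem_Icc.2 hσ0.le) (right_mem_Icc.2 hσ0.le) hσ0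
  simp only [zero_smul, add_zero] at this
  rw [hs.d_eq hx] at this
  linarith

end PosSol

/-! ### The moving plane -/

section Plane

variable {n : ℕ} {Ω : Set (EuclideanSpace ℝ (Fin n))}
  {ν : EuclideanSpace ℝ (Fin n) → EuclideanSpace ℝ (Fin n)}
  {e : EuclideanSpace ℝ (Fin n)} {l : ℝ}

lemma PosSol.diff_contDiffAt {u : EuclideanSpace ℝ (Fin n) → ℝ} {f : ℝ → ℝ}
    (hs : PosSol Ω ν u f) {x : EuclideanSpace ℝ (Fin n)} (hx : x ∈ Ω)
    (hx' : planeRefl e l x ∈ Ω) :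
    ContDiffAt ℝ 2 (fun y => u (planeRefl e l y) - u y) x :=
  ((hs.contDiffAt hx').comp x contDiff_refl.contDiffAt).sub (hs.contDiffAt hx)

/-- The difference of the reflected and the original solution is a supersolution of a linear equation
wherever it is nonnegative; the monotone part of `f` has the favourable sign. -/
lemma PosSol.diff_lap {u : EuclideanSpace ℝ (Fin n) → ℝ} {f : ℝ → ℝ}
    (hs : PosSol Ω ν u f) (he : ‖e‖ = 1) {L : ℝ}
    (hL : ∀ x ∈ closure Ω, ∀ y ∈ closure Ω, u x ≤ u y → f (u x) - f (u y) ≤ L * (u y - u x))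
    {x : EuclideanSpace ℝ (Fin n)} (hx : x ∈ Ω)
    (hx' : planeRefl e l x ∈ Ω) (hle : u x ≤ u (planeRefl e l x)) :
    lap (fun y => u (planeRefl e l y) - u y) x ≤ L * (u (planeRefl e l x) - u x) := by
  have h1 : ContDiffAt ℝ 2 (fun y => u (planeRefl e l y)) x :=
    (hs.contDiffAt hx').comp x contDiff_refl.contDiffAt
  rw [lap_sub h1 (hs.contDiffAt hx), lap_refl he (hs.contDiffAt hx'), hs.eq _ hx, hs.eq _ hx']
  have := hL x (subset_closure hx) _ (subset_closure hx') hle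
  linarith

/-- Hopf's lemma at an interior point of the plane: the solution decreases strictly across it. -/
lemma PosSol.deriv_neg_on_plane {u : EuclideanSpace ℝ (Fin n) → ℝ} {f : ℝ → ℝ}
    (hs : PosSol Ω ν u f) (he : ‖e‖ = 1)
    (h : ∀ y ∈ Ω, l < ⟪y, e⟫ → planeRefl e l y ∈ Ω ∧ u y < u (planeRefl e l y))
    {x : EuclideanSpace ℝ (Fin n)} (hx : x ∈ Ω) (hxl : ⟪x, e⟫ = l) : fderiv ℝ u x e < 0 := by
  obtain ⟨L, hL, hLL, -⟩ := hs.exists_const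
  have hrx := refl_of_mem (e := e) hxl
  have hO : IsOpen (Ω ∩ planeRefl e l ⁻¹' Ω) := hs.isOpen.inter (hs.isOpen.preimage continuous_refl)
  obtain ⟨ρ, hρ, hb⟩ := Metric.isOpen_iff.1 hO x ⟨hx, by rw [mem_preimage, hrx]; exact hx⟩
  have hside : ∀ y, 0 < ⟪y - x, e⟫ → l < ⟪y, e⟫ := fun y hy => by
    rw [inner_sub_left, hxl] at hy; linarith
  have h1 := hopf_flat (w := fun y => u (planeRefl e l y) - u y) hρ hL he
    (fun y hy => hs.diff_contDiffAt (hb hy).1 (hb hy).2)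
    (fun y hy hy2 => sub_pos.2 (h y (hb hy).1 (hside y hy2)).2)
    (fun y hy hy2 => hs.diff_lap he hLL (hb hy).1 (hb hy).2 (h y (hb hy).1 (hside y hy2)).2.le)
    (by simp [hrx])
  have hdw : HasFDerivAt (fun y => u (planeRefl e l y) - u y)
      (fderiv ℝ (fun y => u (planeRefl e l y) - u y) x) x :=
    ((hs.diff_contDiffAt hx (by rwa [hrx])).differentiableAt (by simp)).hasFDerivAt
  have hdu : HasFDerivAt u (fderiv ℝ u x) x :=
    ((hs.contDiffAt hx).differentiableAt (by simp)).hasFDerivAt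
  have hl : ∀ v, HasDerivAt (fun σ : ℝ => x + σ • v) v 0 := fun v => by
    simpa using ((hasDerivAt_id (0:ℝ)).smul_const v).const_add x
  have k1 := HasFDerivAt.comp_hasDerivAt_of_eq (0:ℝ) hdw (hl e) (by simp)
  have k2 := (HasFDerivAt.comp_hasDerivAt_of_eq (0:ℝ) hdu (hl (-e)) (by simp)).sub
    (HasFDerivAt.comp_hasDerivAt_of_eq (0:ℝ) hdu (hl e) (by simp))
  have hre : reflDir e e = -e := by
    simp only [reflDir, real_inner_self_eq_norm_sq, he]; module
  have k3 := k1.unique (k2.congr_of_eventuallyEq (Eventually.of_forall fun τ => by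
    simp only [Function.comp_apply, Pi.sub_apply, refl_add_smul, hrx, hre]))
  rw [k3, map_neg] at h1
  linarith

lemma PosSol.lt_of_deriv_neg {u : EuclideanSpace ℝ (Fin n) → ℝ} {f : ℝ → ℝ}
    (hs : PosSol Ω ν u f) {z : EuclideanSpace ℝ (Fin n)} {s : ℝ} (hs0 : 0 < s)
    (hcl : ∀ σ ∈ Icc (0:ℝ) s, z + σ • e ∈ closure Ω)
    (hneg : ∀ σ ∈ Ioo (0:ℝ) s, z + σ • e ∈ Ω ∧ fderiv ℝ u (z + σ • e) e < 0) :
    u (z + s • e) < u z := by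
  have := strictAntiOn_of_deriv_neg (convex_Icc 0 s) (f := fun σ : ℝ => u (z + σ • e))
    (hs.continuousOn.comp (by fun_prop) hcl)
    (fun σ hσ => by
      rw [interior_Icc] at hσ
      have hl : HasDerivAt (fun σ : ℝ => z + σ • e) e σ := by
        simpa using ((hasDerivAt_id σ).smul_const e).const_add z
      have h1 := HasFDerivAt.comp_hasDerivAt σ (f := fun σ : ℝ => z + σ • e) (l := u)
        ((hs.contDiffAt (hneg σ hσ).1).differentiableAt (by simp)).hasFDerivAt hl
      rw [Function.comp_def] at h1
      rw [h1.deriv]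
      exact (hneg σ hσ).2)
    (left_mem_Icc.2 hs0.le) (right_mem_Icc.2 hs0.le) hs0
  simpa using this

variable {m : ℕ} {u : Fin m → EuclideanSpace ℝ (Fin n) → ℝ} {f : Fin m → ℝ → ℝ}

/-- The open condition propagated by the moving plane `{⟪x, e⟫ = μ}`: the part of `closure Ω` beyond
the plane reflects into `Ω` with strictly larger values of all `u i`, and the plane crosses `∂Ω`
with `e` pointing strictly outwards. -/
def GoodPlane (Ω : Set (EuclideanSpace ℝ (Fin n)))
    (ν : EuclideanSpace ℝ (Fin n) → EuclideanSpace ℝ (Fin n))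
    (u : Fin m → EuclideanSpace ℝ (Fin n) → ℝ) (e : EuclideanSpace ℝ (Fin n)) (μ : ℝ) : Prop :=
  ∀ y ∈ closure Ω,
    (μ < ⟪y, e⟫ → planeRefl e μ y ∈ Ω ∧ ∀ i, u i y < u i (planeRefl e μ y)) ∧
    (y ∈ frontier Ω → ⟪y, e⟫ = μ → ⟪ν y, e⟫ < 0)

/-- At a point of a good plane all `u i` decrease in the direction `e` nearby, and nearby chords in
the direction `e` that end in `closure Ω` start in `Ω`. -/
lemma GoodPlane.local_structure (hs : ∀ i, PosSol Ω ν (u i) (f i)) (j : Fin m) (he : ‖e‖ = 1)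
    (hG : GoodPlane Ω ν u e l) {y : EuclideanSpace ℝ (Fin n)} (hy : y ∈ closure Ω)
    (hyl : ⟪y, e⟫ = l) :
    ∃ R > 0, (∀ x ∈ Ω, x ∈ ball y R → ∀ i, fderiv ℝ (u i) x e < 0) ∧
      ∀ z (τ : ℝ), 0 < τ → z ∈ ball y R → z + τ • e ∈ ball y R → z + τ • e ∈ closure Ω → z ∈ Ω := by
  have hs0 := hs j
  rcases hs0.mem_or_frontier hy with hyΩ | hyf
  · have hev : ∀ i, ∀ᶠ x in 𝓝 y, fderiv ℝ (u i) x e < 0 := fun i => by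
      have hc : ContinuousAt (fun x => fderiv ℝ (u i) x e) y :=
        ((((hs i).contDiffAt hyΩ).fderiv_right (m := 1) (by norm_num)).continuousAt).clm_apply
          continuousAt_const
      refine hc.eventually (gt_mem_nhds ((hs i).deriv_neg_on_plane he (fun z hz hzl => ?_) hyΩ hyl))
      have := (hG z (subset_closure hz)).1 hzl
      exact ⟨this.1, this.2 i⟩
    obtain ⟨R, hR, hb⟩ := Metric.eventually_nhds_iff_ball.1
      ((eventually_all.2 hev).and (hs0.isOpen.mem_nhds hyΩ))
    exact ⟨R, hR, fun x _ hx => (hb x hx).1, fun z τ _ hz _ _ => (hb z hz).2⟩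
  · have hneg := (hG y hy).2 hyf hyl
    have hev : ∀ i, ∀ᶠ x in 𝓝 y, x ∈ Ω → fderiv ℝ (u i) x e < 0 := fun i => by
      obtain ⟨δ, hδ, h⟩ := (hs i).deriv_neg_near hyf he hneg
      filter_upwards [ball_mem_nhds y hδ] with x hx hxΩ using h x hxΩ hx
    obtain ⟨φ, ρ, hφ, hmono⟩ := exists_monotone_def hs0.isOpen hs0.c2 hyf hneg
    obtain ⟨R, hR, hb⟩ := Metric.eventually_nhds_iff_ball.1
      ((eventually_all.2 hev).and (ball_mem_nhds y hφ.pos))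
    refine ⟨R, hR, fun x hxΩ hx i => (hb x hx).1 i hxΩ, fun z τ hτ hz hzτ hc => ?_⟩
    have h1 := hmono z τ hτ (hb z hz).2 (hb _ hzτ).2
    have h2 := (hφ.closure_iff _ (hb _ hzτ).2).1 hc
    exact (hφ.mem_iff z (hb z hz).2).2 (h1.trans_le h2)

/-- Good positions of the plane form an open set; the condition is local in `y` and `closure Ω` is
compact. -/
lemma GoodPlane.eventually (hs : ∀ i, PosSol Ω ν (u i) (f i)) (j : Fin m) (he : ‖e‖ = 1)
    (hG : GoodPlane Ω ν u e l) : ∀ᶠ μ in 𝓝 l, GoodPlane Ω ν u e μ := by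
  have hs0 := hs j
  have key : ∀ y ∈ closure Ω, ∀ᶠ z : ℝ × EuclideanSpace ℝ (Fin n) in 𝓝 (l, y),
      (fun (μ : ℝ) (y : EuclideanSpace ℝ (Fin n)) => y ∈ closure Ω →
        (μ < ⟪y, e⟫ → planeRefl e μ y ∈ Ω ∧ ∀ i, u i y < u i (planeRefl e μ y)) ∧
        (y ∈ frontier Ω → ⟪y, e⟫ = μ → ⟪ν y, e⟫ < 0)) z.1 z.2 := by
    intro y hy
    have hcR : ContinuousAt (fun z : ℝ × EuclideanSpace ℝ (Fin n) => planeRefl e z.1 z.2) (l, y) :=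
      (continuous_refl_prod e).continuousAt
    have hci : Continuous (fun z : ℝ × EuclideanSpace ℝ (Fin n) => ⟪z.2, e⟫ - z.1) := by fun_prop
    rcases lt_trichotomy ⟪y, e⟫ l with hlt | heq | hgt
    · have : ∀ᶠ z : ℝ × EuclideanSpace ℝ (Fin n) in 𝓝 (l, y), ⟪z.2, e⟫ - z.1 < 0 :=
        (hci.tendsto (l, y)).eventually (gt_mem_nhds (by simpa using hlt))
      filter_upwards [this] with z hz _
      exact ⟨fun h => by linarith, fun _ h => by linarith⟩
    · obtain ⟨R, hR, hd, hch⟩ := hG.local_structure hs j he hy heq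
      have hrefl : planeRefl e l y = y := refl_of_mem heq
      have a1 : ∀ᶠ z : ℝ × EuclideanSpace ℝ (Fin n) in 𝓝 (l, y), planeRefl e z.1 z.2 ∈ ball y R :=
        hcR.eventually (by simp only [hrefl]; exact ball_mem_nhds y hR)
      have a2 : ∀ᶠ z : ℝ × EuclideanSpace ℝ (Fin n) in 𝓝 (l, y), z.2 ∈ ball y R :=
        (continuous_snd.tendsto (l, y)).eventually (ball_mem_nhds y hR)
      have a3 : ∀ᶠ z : ℝ × EuclideanSpace ℝ (Fin n) in 𝓝 (l, y),
          z.2 ∈ frontier Ω → ⟪ν z.2, e⟫ < 0 := by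
        have a4 : ∀ᶠ x in 𝓝 y, x ∈ frontier Ω → ⟪ν x, e⟫ < 0 := by
          rcases hs0.mem_or_frontier hy with hyΩ | hyf
          · filter_upwards [hs0.isOpen.mem_nhds hyΩ] with x hx hxf
            exact absurd hx (hs0.mem_frontier.1 hxf).2
          · have hcν : ContinuousWithinAt (fun x => ⟪ν x, e⟫) (frontier Ω) y :=
              (continuousOn_normal hs0.isOpen hs0.c2 y hyf).inner continuousWithinAt_const
            exact eventually_nhdsWithin_iff.1
              (hcν.tendsto.eventually (gt_mem_nhds ((hG y hy).2 hyf heq)))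
        exact (continuous_snd.tendsto (l, y)).eventually a4
      filter_upwards [a1, a2, a3] with z h1 h2 h3 hz
      refine ⟨fun hlt => ?_, fun hf _ => h3 hf⟩
      set s := 2 * (⟪z.2, e⟫ - z.1) with hsdef
      have hs0' : 0 < s := by rw [hsdef]; linarith
      have hzs : planeRefl e z.1 z.2 + s • e = z.2 := by
        rw [refl_eq_sub]; module
      have hseg : ∀ σ ∈ Icc (0:ℝ) s, planeRefl e z.1 z.2 + σ • e ∈ ball y R := by
        intro σ hσ
        have := (convex_ball y R).add_smul_mem h1 (y := s • e) (by rwa [hzs])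
          (t := σ / s) ⟨div_nonneg hσ.1 hs0'.le, (div_le_one hs0').2 hσ.2⟩
        rwa [smul_smul, div_mul_cancel₀ _ hs0'.ne'] at this
      have hin : ∀ σ, 0 ≤ σ → σ < s → planeRefl e z.1 z.2 + σ • e ∈ Ω := by
        intro σ k1 k2
        have e1 : planeRefl e z.1 z.2 + σ • e + (s - σ) • e = z.2 := by
          rw [add_assoc, ← add_smul, add_sub_cancel, hzs]
        exact hch _ (s - σ) (by linarith) (hseg σ ⟨k1, k2.le⟩) (by rwa [e1]) (by rwa [e1])
      refine ⟨by simpa using hin 0 le_rfl hs0', fun i => ?_⟩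
      have := (hs i).lt_of_deriv_neg (e := e) (z := planeRefl e z.1 z.2) hs0' (fun σ hσ => ?_)
        (fun σ hσ => ⟨hin σ hσ.1.le hσ.2, hd _ (hin σ hσ.1.le hσ.2) (hseg σ ⟨hσ.1.le, hσ.2.le⟩) i⟩)
      · rwa [hzs] at this
      · rcases hσ.2.lt_or_eq with h | h
        · exact subset_closure (hin σ hσ.1 h)
        · rw [h, hzs]; exact hz
    · obtain ⟨hrΩ, hlt⟩ := (hG y hy).1 hgt
      have a0 : ∀ᶠ z : ℝ × EuclideanSpace ℝ (Fin n) in 𝓝 (l, y), 0 < ⟪z.2, e⟫ - z.1 :=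
        (hci.tendsto (l, y)).eventually (lt_mem_nhds (by simpa using hgt))
      have a1 : ∀ᶠ z : ℝ × EuclideanSpace ℝ (Fin n) in 𝓝 (l, y), planeRefl e z.1 z.2 ∈ Ω :=
        hcR.eventually (hs0.isOpen.mem_nhds hrΩ)
      have a2 : ∀ i, ∀ᶠ z : ℝ × EuclideanSpace ℝ (Fin n) in 𝓝 (l, y), z.2 ∈ closure Ω →
          u i z.2 < u i (planeRefl e z.1 z.2) := by
        intro i
        obtain ⟨c, hc1, hc2⟩ := exists_between (hlt i)
        have b1 : ∀ᶠ x in 𝓝 y, x ∈ closure Ω → u i x < c := eventually_nhdsWithin_iff.1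
          (((hs i).continuousOn y hy).tendsto.eventually (gt_mem_nhds hc1))
        have b2 : ∀ᶠ x in 𝓝 (planeRefl e l y), c < u i x :=
          ((hs i).contDiffAt hrΩ).continuousAt.eventually (lt_mem_nhds hc2)
        have b3 : ∀ᶠ z : ℝ × EuclideanSpace ℝ (Fin n) in 𝓝 (l, y), z.2 ∈ closure Ω → u i z.2 < c :=
          (continuous_snd.tendsto (l, y)).eventually b1
        filter_upwards [b3, hcR.eventually b2] with z k1 k2 hz using (k1 hz).trans k2
      filter_upwards [a0, a1, eventually_all.2 a2] with z h0 h1 h2 hz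
      exact ⟨fun _ => ⟨h1, fun i => h2 i hz⟩, fun _ h => by linarith⟩
  have := hs0.isCompact.eventually_forall_of_forall_eventually (P := fun (μ : ℝ)
      (y : EuclideanSpace ℝ (Fin n)) => y ∈ closure Ω →
        (μ < ⟪y, e⟫ → planeRefl e μ y ∈ Ω ∧ ∀ i, u i y < u i (planeRefl e μ y)) ∧
        (y ∈ frontier Ω → ⟪y, e⟫ = μ → ⟪ν y, e⟫ < 0)) key
  exact this.mono fun μ h y hy => h y hy hy

lemma exists_critical (hs : ∀ i, PosSol Ω ν (u i) (f i)) (j : Fin m) (he : ‖e‖ = 1)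
    (hne : Ω.Nonempty) :
    ∃ l, ¬ GoodPlane Ω ν u e l ∧ ∀ μ > l, GoodPlane Ω ν u e μ := by
  have hs0 := hs j
  obtain ⟨M, hM⟩ := hs0.isCompact.isBounded.exists_norm_le
  have hin : ∀ x ∈ closure Ω, |⟪x, e⟫| ≤ M := fun x hx => by
    have := abs_real_inner_le_norm x e
    rw [he, mul_one] at this
    exact this.trans (hM x hx)
  obtain ⟨y, hy⟩ := hne
  have hbig : ∀ μ, M < μ → GoodPlane Ω ν u e μ := fun μ hμ x hx => by
    have := (abs_le.1 (hin x hx)).2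
    exact ⟨fun h => by linarith, fun _ h => by linarith⟩
  have hclosed : IsClosed {μ | ¬ GoodPlane Ω ν u e μ} := by
    rw [← isOpen_compl_iff, isOpen_iff_mem_nhds]
    intro μ hμ
    have hμ' : GoodPlane Ω ν u e μ := by simpa using hμ
    filter_upwards [hμ'.eventually hs j he] with a ha
    simpa using ha
  have hbdd : BddAbove {μ | ¬ GoodPlane Ω ν u e μ} := by
    refine ⟨M, fun μ hμ => ?_⟩
    by_contra h
    rw [mem_ofPred_eq] at hμ
    exact hμ (hbig μ (not_le.1 h))
  have hnonempty : {μ | ¬ GoodPlane Ω ν u e μ}.Nonempty := by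
    refine ⟨⟪y, e⟫ - M - 1, ?_⟩
    show ¬ GoodPlane Ω ν u e _
    intro hG
    have h0 := abs_le.1 (hin y (subset_closure hy))
    have h1 := ((hG y (subset_closure hy)).1 (by linarith)).1
    have h2 := abs_le.1 (hin _ (subset_closure h1))
    rw [inner_refl he] at h2
    linarith
  refine ⟨sSup {μ | ¬ GoodPlane Ω ν u e μ}, hclosed.csSup_mem hnonempty hbdd, fun μ hμ => ?_⟩
  by_contra h
  exact absurd (le_csSup hbdd (show μ ∈ {μ | ¬ GoodPlane Ω ν u e μ} from h)) (not_le.2 hμ)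

/-- The information at the critical position obtained as a limit of good planes. -/
lemma limit_position (hs : ∀ i, PosSol Ω ν (u i) (f i)) (j : Fin m) (he : ‖e‖ = 1)
    (hG : ∀ μ > l, GoodPlane Ω ν u e μ) :
    (∀ x ∈ closure Ω, l ≤ ⟪x, e⟫ → planeRefl e l x ∈ closure Ω ∧
      ∀ i, u i x ≤ u i (planeRefl e l x)) ∧
    (∀ x ∈ Ω, l ≤ ⟪x, e⟫ → planeRefl e l x ∈ Ω) ∧
    (∀ x ∈ Ω, l < ⟪x, e⟫ → ∀ i, fderiv ℝ (u i) x e < 0) := by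
  have hs0 := hs j
  have h1 : ∀ x ∈ closure Ω, l ≤ ⟪x, e⟫ → planeRefl e l x ∈ closure Ω ∧
      ∀ i, u i x ≤ u i (planeRefl e l x) := by
    intro x hx hxl
    rcases hxl.eq_or_lt with h | h
    · rw [refl_of_mem h.symm]; exact ⟨hx, fun i => le_rfl⟩
    have hev : ∀ᶠ μ in 𝓝[>] l, planeRefl e μ x ∈ Ω ∧ ∀ i, u i x < u i (planeRefl e μ x) := by
      filter_upwards [self_mem_nhdsWithin, nhdsWithin_le_nhds (gt_mem_nhds h)] with μ k1 k2
      exact ((hG μ k1) x hx).1 k2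
    have hc : Continuous (fun μ : ℝ => planeRefl e μ x) :=
      (continuous_refl_prod e).comp (continuous_id.prodMk continuous_const)
    have ht : Tendsto (fun μ : ℝ => planeRefl e μ x) (𝓝[>] l) (𝓝 (planeRefl e l x)) :=
      hc.continuousAt.tendsto.mono_left nhdsWithin_le_nhds
    have hm : planeRefl e l x ∈ closure Ω :=
      mem_closure_of_tendsto ht (hev.mono fun μ h => h.1)
    refine ⟨hm, fun i => ?_⟩
    have ht' : Tendsto (fun μ : ℝ => planeRefl e μ x) (𝓝[>] l) (𝓝[closure Ω] (planeRefl e l x)) :=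
      tendsto_nhdsWithin_iff.2 ⟨ht, hev.mono fun μ h => subset_closure h.1⟩
    exact ge_of_tendsto (((hs i).continuousOn _ hm).tendsto.comp ht')
      (hev.mono fun μ h => (h.2 i).le)
  refine ⟨h1, fun x hx hxl => ?_, fun x hx hxl i => ?_⟩
  · rcases hxl.eq_or_lt with h | h
    · rw [refl_of_mem h.symm]; exact hx
    refine interior_closure_subset hs0.isOpen hs0.c2 ?_
    have hO : IsOpen (planeRefl e l ⁻¹' Ω ∩ {y | ⟪y, e⟫ < l}) :=
      (hs0.isOpen.preimage continuous_refl).inter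
        (isOpen_lt (f := fun y : EuclideanSpace ℝ (Fin n) => ⟪y, e⟫) (by fun_prop) continuous_const)
    refine mem_interior.2 ⟨_, fun y hy => ?_, hO, ?_⟩
    · obtain ⟨hy1, hy2⟩ := hy
      rw [mem_ofPred_eq] at hy2
      have := (h1 _ (subset_closure hy1) (by rw [inner_refl he]; linarith)).1
      rwa [refl_refl he] at this
    · refine ⟨?_, ?_⟩
      · rw [mem_preimage, refl_refl he]; exact hx
      · rw [mem_ofPred_eq, inner_refl he]; linarith
  · refine (hs i).deriv_neg_on_plane he (l := ⟪x, e⟫) (fun y hy hyl => ?_) hx rfl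
    have := ((hG _ hxl) y (subset_closure hy)).1 hyl
    exact ⟨this.1, this.2 i⟩

end Plane

/-! ### The critical position and the Neumann condition -/

/-- The structural hypotheses on the function in the overdetermined condition. -/
structure NeumannFun {m : ℕ} (F : (Fin m → ℝ) → ℝ) (j : Fin m) : Prop where
  smooth : ContDiffOn ℝ 1 F {y : Fin m → ℝ | ∀ i, 0 < y i}
  mono : ∀ (i : Fin m) (y : Fin m → ℝ), (∀ k, 0 ≤ y k) → ∀ t > (0 : ℝ),
      F y ≤ F (Function.update y i (y i + t))
  strict : ∀ y : Fin m → ℝ, (∀ k, 0 < y k) → 0 < fderiv ℝ F y (Pi.single j 1)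

namespace NeumannFun

variable {m : ℕ} {F : (Fin m → ℝ) → ℝ} {j : Fin m}

lemma hasFDerivAt (hF : NeumannFun F j) {y : Fin m → ℝ} (hy : ∀ i, 0 < y i) :
    HasFDerivAt F (fderiv ℝ F y) y := by
  have hO : IsOpen {y : Fin m → ℝ | ∀ i, 0 < y i} := by
    have : {y : Fin m → ℝ | ∀ i, 0 < y i} = ⋂ i, {y | 0 < y i} := by ext; simp
    rw [this]
    exact isOpen_iInter_of_finite fun i => isOpen_lt continuous_const (continuous_apply i)
  exact ((hF.smooth.contDiffAt (hO.mem_nhds hy)).differentiableAt (by simp)).hasFDerivAt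

/-- Monotonicity in each variable separately gives monotonicity for the product order. -/
lemma le_of_le (hF : NeumannFun F j) {a b : Fin m → ℝ} (ha : ∀ k, 0 ≤ a k) (hab : ∀ k, a k ≤ b k) :
    F a ≤ F b := by
  classical
  have key : ∀ s : Finset (Fin m), F a ≤ F (fun k => if k ∈ s then b k else a k) := by
    intro s
    induction s using Finset.induction_on with
    | empty => simp
    | insert i s hi ih =>
      refine ih.trans ?_
      set y : Fin m → ℝ := fun k => if k ∈ s then b k else a k with hy
      have hup : (fun k => if k ∈ insert i s then b k else a k) =
          Function.update y i (y i + (b i - a i)) := by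
        ext k
        by_cases hk : k = i
        · subst hk; simp [hy, hi]
        · simp [hy, hk]
      rw [hup]
      rcases (hab i).eq_or_lt with h | h
      · rw [h]; simp
      · refine hF.mono i y (fun k => ?_) _ (sub_pos.2 h)
        by_cases hk : k ∈ s
        · simp only [hy, hk, if_true]; exact (ha k).trans (hab k)
        · simp only [hy, hk, if_false]; exact ha k
  simpa using key Finset.univ

/-- The intermediate point `(a + b) / 2` lies in the open orthant, where the strict monotonicity in
the `j`-th variable is available even if `a` does not. -/
lemma lt_of_lt (hF : NeumannFun F j) {a b : Fin m → ℝ} (ha : ∀ k, 0 ≤ a k)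
    (hab : ∀ k, a k < b k) : F a < F b := by
  set c : Fin m → ℝ := fun k => (a k + b k) / 2 with hc
  have hc0 : ∀ k, 0 < c k := fun k => by simp only [hc]; linarith [ha k, hab k]
  have hac : ∀ k, a k ≤ c k := fun k => by simp only [hc]; linarith [hab k]
  have hcb : ∀ k, c k < b k := fun k => by simp only [hc]; linarith [hab k]
  have hpos : ∀ t ∈ Icc (0:ℝ) (b j - c j), ∀ k, 0 < (c + t • Pi.single j (1:ℝ) : Fin m → ℝ) k := by
    intro t ht k
    by_cases hk : k = j
    · subst hk; simp; linarith [hc0 k, ht.1]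
    · simp [hk, hc0 k]
  have hder : ∀ t ∈ Icc (0:ℝ) (b j - c j), HasDerivAt
      (fun t : ℝ => F (c + t • Pi.single j (1:ℝ)))
      (fderiv ℝ F (c + t • Pi.single j (1:ℝ)) (Pi.single j 1)) t := by
    intro t ht
    have hl : HasDerivAt (fun t : ℝ => c + t • (Pi.single j (1:ℝ) : Fin m → ℝ))
        (Pi.single j (1:ℝ)) t := by
      simpa using ((hasDerivAt_id t).smul_const (Pi.single j (1:ℝ) : Fin m → ℝ)).const_add c
    exact HasFDerivAt.comp_hasDerivAt t (l := F)
      (f := fun t : ℝ => c + t • (Pi.single j (1:ℝ) : Fin m → ℝ)) (hF.hasFDerivAt (hpos t ht)) hl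
  have hlt : 0 < b j - c j := sub_pos.2 (hcb j)
  have h1 := strictMonoOn_of_deriv_pos (convex_Icc 0 (b j - c j))
    (f := fun t : ℝ => F (c + t • Pi.single j (1:ℝ)))
    (fun t ht => (hder t ht).continuousAt.continuousWithinAt)
    (fun t ht => by
      rw [(hder t (interior_subset ht)).deriv]
      exact hF.strict _ (hpos t (interior_subset ht)))
    (left_mem_Icc.2 hlt.le) (right_mem_Icc.2 hlt.le) hlt
  simp only [zero_smul, add_zero] at h1
  refine ((hF.le_of_le ha hac).trans_lt h1).trans_le (hF.le_of_le (fun k => ?_) fun k => ?_)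
  · exact (hpos _ (right_mem_Icc.2 hlt.le) k).le
  · by_cases hk : k = j
    · subst hk; simp
    · simp [hk, (hcb k).le]

/-- The derivative of `F` is negative in directions with all components negative. -/
lemma fderiv_neg (hF : NeumannFun F j) {a v : Fin m → ℝ} (ha : ∀ k, 0 < a k)
    (hv : ∀ k, v k < 0) : fderiv ℝ F a v < 0 := by
  have hnn : ∀ z : Fin m → ℝ, (∀ k, 0 ≤ z k) → 0 ≤ fderiv ℝ F a z := by
    intro z hz
    have hl : HasDerivAt (fun t : ℝ => a + t • z) z 0 := by
      simpa using ((hasDerivAt_id (0:ℝ)).smul_const z).const_add a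
    have h1 := HasFDerivAt.comp_hasDerivAt_of_eq (0:ℝ) (hF.hasFDerivAt ha) hl (by simp)
    have h2 := h1.tendsto_slope_zero_right
    refine ge_of_tendsto h2 ?_
    filter_upwards [self_mem_nhdsWithin] with t ht
    have ht : 0 < t := ht
    simp only [zero_add, Function.comp_apply, zero_smul, add_zero, smul_eq_mul]
    refine mul_nonneg (inv_nonneg.2 ht.le) (sub_nonneg.2 ?_)
    refine hF.le_of_le (fun k => (ha k).le) fun k => ?_
    simp only [Pi.add_apply, Pi.smul_apply, smul_eq_mul]
    nlinarith [hz k]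
  have h1 := hnn (v j • Pi.single j (1:ℝ) - v) (fun k => by
    by_cases hk : k = j
    · subst hk; simp
    · simp [hk, (hv k).le])
  rw [map_sub, map_smul, smul_eq_mul] at h1
  nlinarith [hF.strict a ha, hv j]

end NeumannFun

section Critical

variable {n m : ℕ} {Ω : Set (EuclideanSpace ℝ (Fin n))}
  {ν : EuclideanSpace ℝ (Fin n) → EuclideanSpace ℝ (Fin n)}
  {e : EuclideanSpace ℝ (Fin n)} {l : ℝ}
  {u : Fin m → EuclideanSpace ℝ (Fin n) → ℝ} {f : Fin m → ℝ → ℝ}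
  {F : (Fin m → ℝ) → ℝ} {j : Fin m} {c : ℝ}

lemma inner_reflDir (v w : EuclideanSpace ℝ (Fin n)) : ⟪v, reflDir e w⟫ = ⟪reflDir e v, w⟫ := by
  simp only [reflDir, inner_sub_left, inner_sub_right, inner_smul_left, inner_smul_right,
    conj_trivial, real_inner_comm]
  ring

lemma eventually_side (x v : EuclideanSpace ℝ (Fin n)) (hx : l < ⟪x, e⟫) :
    ∀ᶠ τ in 𝓝[>] (0:ℝ), l < ⟪x + τ • v, e⟫ := by
  have : Continuous (fun τ : ℝ => ⟪x + τ • v, e⟫) := by fun_prop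
  exact nhdsWithin_le_nhds ((this.tendsto' 0 ⟪x, e⟫ (by simp)).eventually (lt_mem_nhds hx))

/-- Where the reflected boundary touches the boundary, the normals correspond. -/
lemma normal_refl {u : EuclideanSpace ℝ (Fin n) → ℝ} {f : ℝ → ℝ} (hs : PosSol Ω ν u f)
    (he : ‖e‖ = 1) (hR : ∀ x ∈ Ω, l ≤ ⟪x, e⟫ → planeRefl e l x ∈ Ω)
    {p : EuclideanSpace ℝ (Fin n)} (hp : p ∈ frontier Ω) (hpl : l < ⟪p, e⟫)
    (hp' : planeRefl e l p ∈ frontier Ω) : ν (planeRefl e l p) = reflDir e (ν p) := by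
  by_contra hne
  set N := reflDir e (ν p) with hN
  have hN1 : ‖N‖ = 1 := by rw [hN, norm_reflDir he, norm_normal hs.isOpen hs.c2 hp]
  have hν1 : ‖ν (planeRefl e l p)‖ = 1 := norm_normal hs.isOpen hs.c2 hp'
  have hlt : ⟪N, ν (planeRefl e l p)⟫ < 1 :=
    inner_lt_one_iff_real_of_norm_eq_one hN1 hν1 |>.2 (fun h => hne h.symm)
  have d1 : 0 < ⟪ν p, reflDir e (N - ν (planeRefl e l p))⟫ := by
    rw [inner_reflDir, ← hN, inner_sub_right, real_inner_self_eq_norm_sq, hN1]; linarith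
  have d2 : ⟪ν (planeRefl e l p), N - ν (planeRefl e l p)⟫ < 0 := by
    rw [inner_sub_right, real_inner_self_eq_norm_sq, hν1, real_inner_comm]; linarith
  obtain ⟨τ, ⟨a1, a2⟩, a3⟩ := (((ray_mem hs.isOpen hs.c2 hp d1).and
    (eventually_side p (reflDir e (N - ν (planeRefl e l p))) hpl)).and
      (ray_not_mem hs.isOpen hs.c2 hp' d2)).exists
  refine a3 (subset_closure ?_)
  have := hR _ a1 a2.le
  rw [refl_add_smul] at this
  have hinv : ∀ v, reflDir e (reflDir e v) = v := fun v => by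
    simp only [reflDir_eq he, Submodule.reflection_reflection]
  rwa [hinv] at this

lemma interior_ball_self {u : EuclideanSpace ℝ (Fin n) → ℝ} {f : ℝ → ℝ} (hs : PosSol Ω ν u f)
    {p : EuclideanSpace ℝ (Fin n)} (hp : p ∈ frontier Ω) {r : ℝ} (hr : 0 < r) :
    p ∉ ball (p + r • ν p) r := by
  intro hx
  rw [mem_ball_iff_norm] at hx
  simp [norm_smul, norm_normal hs.isOpen hs.c2 hp, abs_of_pos hr] at hx

/-- Internal tangency: the normal derivative at the reflected point is strictly larger. -/
lemma normal_lt {u : EuclideanSpace ℝ (Fin n) → ℝ} {f : ℝ → ℝ} (hs : PosSol Ω ν u f)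
    (he : ‖e‖ = 1) (hR : ∀ x ∈ Ω, l ≤ ⟪x, e⟫ → planeRefl e l x ∈ Ω)
    (hcl : ∀ x ∈ closure Ω, l ≤ ⟪x, e⟫ → planeRefl e l x ∈ closure Ω)
    (hlt : ∀ x ∈ Ω, l < ⟪x, e⟫ → u x < u (planeRefl e l x))
    {p : EuclideanSpace ℝ (Fin n)} (hp : p ∈ frontier Ω) (hpl : l < ⟪p, e⟫)
    (hp' : planeRefl e l p ∈ frontier Ω) :
    dOn Ω u p (ν p) < dOn Ω u (planeRefl e l p) (ν (planeRefl e l p)) := by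
  obtain ⟨L, hL, hLL, -⟩ := hs.exists_const
  obtain ⟨r₀, hr₀, hb⟩ := interior_ball hs.isOpen hs.c2 hp
  have hν := norm_normal hs.isOpen hs.c2 hp
  -- a ball small enough to stay beyond the plane
  set r := min r₀ ((⟪p, e⟫ - l) / 4) with hr
  have hr0 : 0 < r := lt_min hr₀ (by linarith)
  have hrl : r ≤ (⟪p, e⟫ - l) / 4 := min_le_right _ _
  have hb' := hb r hr0 (min_le_left _ _)
  have hside : ∀ x ∈ closedBall (p + r • ν p) r, l < ⟪x, e⟫ := by
    intro x hx
    rw [mem_closedBall_iff_norm] at hx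
    have e1 : ⟪x, e⟫ = ⟪p, e⟫ + ⟪x - (p + r • ν p), e⟫ + r * ⟪ν p, e⟫ := by
      simp only [inner_sub_left, inner_add_left, inner_smul_left, conj_trivial]; ring
    have e2 := abs_le.1 (abs_real_inner_le_norm (x - (p + r • ν p)) e)
    have e3 := abs_le.1 (abs_real_inner_le_norm (ν p) e)
    rw [he, mul_one] at e2 e3
    rw [hν] at e3
    nlinarith [e2.1, e3.1]
  have hclB : ∀ x ∈ closedBall (p + r • ν p) r, x ∈ closure Ω := fun x hx => by
    by_cases h : x = p
    · rw [h]; exact PosSol.frontier_sub hp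
    · exact subset_closure (hb' x hx h)
  have hin : ∀ x ∈ ball (p + r • ν p) r, x ∈ Ω := fun x hx =>
    hb' x (ball_subset_closedBall hx) fun h => interior_ball_self hs hp hr0 (h ▸ hx)
  have hsd : ∀ x ∈ ball (p + r • ν p) r, l < ⟪x, e⟫ := fun x hx =>
    hside x (ball_subset_closedBall hx)
  obtain ⟨κ, hκ, hg⟩ := hopf_normal hr0 hL hν (w := fun y => u (planeRefl e l y) - u y)
    ((hs.continuousOn.comp continuous_refl.continuousOn
      (fun x hx => hcl x (hclB x hx) (hside x hx).le)).sub (hs.continuousOn.mono hclB))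
    (fun x hx => hs.diff_contDiffAt (hin x hx) (hR x (hin x hx) (hsd x hx).le))
    (fun x hx => sub_pos.2 (hlt x (hin x hx) (hsd x hx)))
    (fun x hx => hs.diff_lap he hLL (hin x hx) (hR x (hin x hx) (hsd x hx).le)
      (hlt x (hin x hx) (hsd x hx)).le)
  have s1 := slope_tendsto (hs.hasFDeriv (PosSol.frontier_sub hp))
    ((hs.normal_ray hp).mono fun τ h => subset_closure h)
  have s2 := slope_tendsto (hs.hasFDeriv (PosSol.frontier_sub hp'))
    ((hs.normal_ray hp').mono fun τ h => subset_closure h)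
  have h1 := ge_of_tendsto (s2.sub s1) (b := κ) (by
    filter_upwards [hg, self_mem_nhdsWithin] with τ k1 k2
    have k2 : 0 < τ := k2
    rw [hs.zero _ hp, hs.zero _ hp', sub_zero, sub_zero, ← sub_div, le_div_iff₀ k2]
    rw [refl_add_smul, ← normal_refl hs he hR hp hpl hp'] at k1
    exact k1)
  linarith

/-- Serrin's corner argument: where the plane meets `∂Ω` orthogonally, the mixed second derivative
is strictly negative. -/
lemma mixed_neg {u : EuclideanSpace ℝ (Fin n) → ℝ} {f : ℝ → ℝ} (hs : PosSol Ω ν u f)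
    (he : ‖e‖ = 1) (hlt : ∀ x ∈ Ω, l < ⟪x, e⟫ → u x < u (planeRefl e l x))
    {q : EuclideanSpace ℝ (Fin n)} (hq : q ∈ frontier Ω) (hql : ⟪q, e⟫ = l)
    (hqe : ⟪ν q, e⟫ = 0) : ddOn Ω u q e (ν q) < 0 := by
  obtain ⟨L, hL, hLL, -⟩ := hs.exists_const
  obtain ⟨r, hr, hb⟩ := interior_ball hs.isOpen hs.c2 hq
  have hν := norm_normal hs.isOpen hs.c2 hq
  have hb' := hb r hr le_rfl
  have hqc := PosSol.frontier_sub hq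
  have hclB : ∀ x ∈ closedBall (q + r • ν q) r, x ∈ closure Ω := fun x hx => by
    by_cases h : x = q
    · rw [h]; exact hqc
    · exact subset_closure (hb' x hx h)
  have hin : ∀ x ∈ ball (q + r • ν q) r, x ∈ Ω := fun x hx =>
    hb' x (ball_subset_closedBall hx) fun h => interior_ball_self hs hq hr (h ▸ hx)
  have hye : ⟪q + r • ν q, e⟫ = l := by
    rw [inner_add_left, inner_smul_left, hqe, hql]; simp
  have hside : ∀ x, ⟪x - (q + r • ν q), e⟫ = ⟪x, e⟫ - l := fun x => by
    rw [inner_sub_left, hye]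
  -- the ball is symmetric about the plane
  have hnorm : ∀ x, ‖planeRefl e l x - (q + r • ν q)‖ = ‖x - (q + r • ν q)‖ := fun x => by
    conv_lhs => rw [← refl_of_mem hye, refl_sub_refl, norm_reflDir he]
  have hRc : ∀ x ∈ closedBall (q + r • ν q) r, planeRefl e l x ∈ closedBall (q + r • ν q) r :=
    fun x hx => by rw [mem_closedBall_iff_norm] at hx ⊢; rwa [hnorm]
  have hRo : ∀ x ∈ ball (q + r • ν q) r, planeRefl e l x ∈ ball (q + r • ν q) r :=
    fun x hx => by rw [mem_ball_iff_norm] at hx ⊢; rwa [hnorm]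
  obtain ⟨ε, hε, hcor⟩ := hopf_corner hr hL he (w := fun y => u (planeRefl e l y) - u y)
    ((hs.continuousOn.comp continuous_refl.continuousOn
      (fun x hx => hclB _ (hRc x hx))).sub (hs.continuousOn.mono hclB))
    (fun x hx => hs.diff_contDiffAt (hin x hx) (hin _ (hRo x hx)))
    (fun x hx h => sub_pos.2 (hlt x (hin x hx) (by rw [hside] at h; linarith)))
    (fun x hx h => hs.diff_lap he hLL (hin x hx) (hin _ (hRo x hx))
      (hlt x (hin x hx) (by rw [hside] at h; linarith)).le)
    (fun x hx h => by
      rw [hside] at h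
      simp [refl_of_mem (show ⟪x, e⟫ = l by linarith)])
  have hνν : ⟪ν q, ν q⟫ = 1 := by rw [real_inner_self_eq_norm_sq, hν]; norm_num
  have hν1 : 0 < ⟪ν q, ν q + e⟫ := by rw [inner_add_right, hνν, hqe]; norm_num
  have hν2 : 0 < ⟪ν q, ν q - e⟫ := by rw [inner_sub_right, hνν, hqe]; norm_num
  have t1 := taylor_seg (closure Ω) u (dOn Ω u) (ddOn Ω u q) q (ν q + e) hqc
    ((ray_mem hs.isOpen hs.c2 hq hν1).mono fun τ h => subset_closure h)
    (fun y hy => hs.hasFDeriv hy) (hs.hasFDeriv2 hqc)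
  have t2 := taylor_seg (closure Ω) u (dOn Ω u) (ddOn Ω u q) q (ν q - e) hqc
    ((ray_mem hs.isOpen hs.c2 hq hν2).mono fun τ h => subset_closure h)
    (fun y hy => hs.hasFDeriv hy) (hs.hasFDeriv2 hqc)
  have hde : dOn Ω u q e = 0 := hs.d_tangent hq hqe
  have hrd : reflDir e (ν q + e) = ν q - e := by
    simp only [reflDir, inner_add_left, hqe, real_inner_self_eq_norm_sq, he]; module
  have h1 := ge_of_tendsto (t2.sub t1) (b := ε * r) (by
    filter_upwards [self_mem_nhdsWithin, nhdsWithin_le_nhds (gt_mem_nhds (half_pos hr))]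
      with τ k1 k2
    have k1 : 0 < τ := k1
    have e1 : ⟪q + τ • (ν q + e) - (q + r • ν q), e⟫ = τ := by
      rw [hside, inner_add_left, inner_smul_left, inner_add_left, hqe,
        real_inner_self_eq_norm_sq, he, hql]
      simp
    have e2 : ‖q + τ • (ν q + e) - (q + r • ν q)‖ ^ 2 = (τ - r) ^ 2 + τ ^ 2 := by
      have : q + τ • (ν q + e) - (q + r • ν q) = (τ - r) • ν q + τ • e := by module
      rw [this, norm_add_sq_real, inner_smul_left, inner_smul_right, hqe, norm_smul, norm_smul,
        hν, he, Real.norm_eq_abs, Real.norm_eq_abs]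
      simp
    have e3 : q + τ • (ν q + e) ∈ closedBall (q + r • ν q) r := by
      rw [mem_closedBall_iff_norm]
      refine abs_le_of_sq_le_sq' ?_ hr.le |>.2
      rw [e2]; nlinarith
    have h2 := hcor _ e3 (by rw [e1]; exact k1.le)
    rw [e1, e2, refl_add_smul, hrd, refl_of_mem hql] at h2
    rw [← sub_div, le_div_iff₀ (by positivity), map_add, map_sub, hde]
    have h3 : ε * r * τ ^ 2 ≤ ε * (τ * (r ^ 2 - ((τ - r) ^ 2 + τ ^ 2))) := by
      have : r * τ ^ 2 ≤ τ * (r ^ 2 - ((τ - r) ^ 2 + τ ^ 2)) := by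
        nlinarith [mul_pos k1 k1, mul_nonneg (mul_pos k1 k1).le (show 0 ≤ r - 2 * τ by linarith)]
      nlinarith
    linarith)
  simp only [map_add, map_sub, add_apply, sub_apply] at h1
  rw [hs.dd_symm hqc (ν q) e] at h1
  nlinarith [mul_pos hε hr]

/-- At the critical position the reflected solution touches the solution at an interior point.
Otherwise either the reflected boundary touches `∂Ω` from inside, where `normal_lt` contradicts the
Neumann condition, or the plane meets `∂Ω` orthogonally at some `y`. In the second case the Neumann
condition is differentiated along a boundary curve through `y` with velocity `e`; by `mixed_neg` all
normal derivatives decrease strictly along it, which is impossible. -/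
lemma exists_touching (hs : ∀ i, PosSol Ω ν (u i) (f i)) (hF : NeumannFun F j) (he : ‖e‖ = 1)
    (hneu : ∀ x ∈ frontier Ω, F (fun i => dOn Ω (u i) x (ν x)) = c)
    (hG : ∀ μ > l, GoodPlane Ω ν u e μ) (hnG : ¬ GoodPlane Ω ν u e l) :
    ∃ i, ∃ y ∈ Ω, l < ⟪y, e⟫ ∧ u i (planeRefl e l y) = u i y := by
  have hs0 := hs j
  obtain ⟨hcl, hR, -⟩ := limit_position hs j he hG
  by_contra hcon
  push Not at hcon
  have hlt : ∀ i, ∀ x ∈ Ω, l < ⟪x, e⟫ → u i x < u i (planeRefl e l x) := fun i x hx hxl =>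
    lt_of_le_of_ne ((hcl x (subset_closure hx) hxl.le).2 i) (hcon i x hx hxl).symm
  refine hnG fun y hy => ⟨fun hyl => ?_, fun hyf hyl => ?_⟩
  · rcases hs0.mem_or_frontier hy with hyΩ | hyf
    · exact ⟨hR y hyΩ hyl.le, fun i => hlt i y hyΩ hyl⟩
    rcases hs0.mem_or_frontier (hcl y hy hyl.le).1 with hrΩ | hrf
    · exact ⟨hrΩ, fun i => by rw [(hs i).zero y hyf]; exact (hs i).pos _ hrΩ⟩
    exfalso
    have h1 := hF.lt_of_lt (a := fun i => dOn Ω (u i) y (ν y))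
      (b := fun i => dOn Ω (u i) (planeRefl e l y) (ν (planeRefl e l y)))
      (fun i => (hs i).normal_nonneg hyf)
      (fun i => normal_lt (hs i) he hR (fun x hx h => (hcl x hx h).1) (hlt i) hyf hyl hrf)
    rw [hneu y hyf, hneu _ hrf] at h1
    exact lt_irrefl _ h1
  · by_contra hge
    rcases (not_lt.1 hge).lt_or_eq with hpos | h0
    · obtain ⟨τ, ⟨a1, a2⟩, a3⟩ := (((ray_mem hs0.isOpen hs0.c2 hyf hpos).and
        self_mem_nhdsWithin).and
        (ray_not_mem (d := -e) hs0.isOpen hs0.c2 hyf (by rw [inner_neg_right]; linarith))).exists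
      have a2 : 0 < τ := a2
      have h1 := hR _ a1 (by
        rw [inner_add_left, inner_smul_left, real_inner_self_eq_norm_sq, he, hyl]
        simp [a2.le])
      have hre : reflDir e e = -e := by
        simp only [reflDir, real_inner_self_eq_norm_sq, he]; module
      rw [refl_add_smul, refl_of_mem hyl, hre] at h1
      exact a3 (subset_closure h1)
    · have h0 := h0.symm
      have hyc := PosSol.frontier_sub hyf
      have hmix : ∀ i, ddOn Ω (u i) y e (ν y) < 0 := fun i => mixed_neg (hs i) he (hlt i) hyf hyl h0
      obtain ⟨γ, hγ0, hγ, hf, hνd⟩ := exists_tangent_curve hs0.isOpen hs0.c2 hyf h0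
      -- `ν` has constant length, so its derivative is tangential
      have hν' : ⟪ν y, deriv (fun τ => ν (γ τ)) 0⟫ = 0 := by
        have k1 := hνd.hasDerivAt.inner ℝ hνd.hasDerivAt
        have k2 : HasDerivAt (fun τ => ⟪ν (γ τ), ν (γ τ)⟫) 0 0 :=
          (hasDerivAt_const (0:ℝ) (1:ℝ)).congr_of_eventuallyEq (hf.mono fun τ h => by
            show ⟪ν (γ τ), ν (γ τ)⟫ = 1
            rw [real_inner_self_eq_norm_sq, norm_normal hs0.isOpen hs0.c2 h]; norm_num)
        have k3 := k1.unique k2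
        rw [hγ0, real_inner_comm (ν y)] at k3
        linarith
      have hA : ∀ i, HasDerivAt (fun τ => dOn Ω (u i) (γ τ) (ν (γ τ))) (ddOn Ω (u i) y e (ν y)) 0 := by
        intro i
        have k1 := hasDerivAt_comp_of_eventually ((hs i).hasFDeriv2 hyc) hγ0 hγ
          (hf.mono fun τ h => PosSol.frontier_sub h)
        have k2 := k1.clm_apply hνd.hasDerivAt
        rwa [hγ0, (hs i).d_tangent hyf hν', add_zero] at k2
      by_cases hz : ∃ i, dOn Ω (u i) y (ν y) = 0
      · obtain ⟨i, hi⟩ := hz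
        have hmin : IsLocalMin (fun τ => dOn Ω (u i) (γ τ) (ν (γ τ))) 0 := by
          filter_upwards [hf] with τ h
          rw [hγ0, hi]
          exact (hs i).normal_nonneg h
        exact (hmix i).ne (hmin.hasDerivAt_eq_zero (hA i))
      · push Not at hz
        have hpos : ∀ i, 0 < dOn Ω (u i) y (ν y) := fun i =>
          lt_of_le_of_ne ((hs i).normal_nonneg hyf) (hz i).symm
        have k1 := HasFDerivAt.comp_hasDerivAt_of_eq (0:ℝ) (hF.hasFDerivAt hpos)
          (hasDerivAt_pi.2 hA) (by simp only [hγ0])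
        have k2 : HasDerivAt (F ∘ fun τ i => dOn Ω (u i) (γ τ) (ν (γ τ))) 0 0 :=
          (hasDerivAt_const (0:ℝ) c).congr_of_eventuallyEq (hf.mono fun τ h => hneu _ h)
        have k3 := hF.fderiv_neg hpos hmix
        rw [k1.unique k2] at k3
        exact lt_irrefl _ k3

end Critical

/-! ### Symmetry in a fixed direction -/

section Symmetry

variable {n : ℕ} {Ω : Set (EuclideanSpace ℝ (Fin n))}
  {ν : EuclideanSpace ℝ (Fin n) → EuclideanSpace ℝ (Fin n)} {e : EuclideanSpace ℝ (Fin n)} {l : ℝ}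

/-- Reflections are isometries fixing the points of the mirror, so they preserve balls centred
on it. -/
lemma dist_refl_of_mem (he : ‖e‖ = 1) {x : EuclideanSpace ℝ (Fin n)} (hx : ⟪x, e⟫ = l)
    (y : EuclideanSpace ℝ (Fin n)) : dist (planeRefl e l y) x = dist y x := by
  conv_lhs => rw [← refl_of_mem (e := e) hx]
  rw [dist_eq_norm, refl_sub_refl, norm_reflDir he, dist_eq_norm]

/-- Strong maximum principle for the reflected difference: its zeros in the cap are interior
to its zero set. -/
lemma PosSol.eventually_zero {u : EuclideanSpace ℝ (Fin n) → ℝ} {f : ℝ → ℝ}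
    (hs : PosSol Ω ν u f) (he : ‖e‖ = 1)
    (hR : ∀ x ∈ Ω, l ≤ ⟪x, e⟫ → planeRefl e l x ∈ Ω)
    (hle : ∀ x ∈ Ω, l ≤ ⟪x, e⟫ → u x ≤ u (planeRefl e l x))
    {x : EuclideanSpace ℝ (Fin n)} (hx : x ∈ Ω) (hxl : l < ⟪x, e⟫)
    (h0 : u (planeRefl e l x) = u x) :
    ∀ᶠ z in 𝓝 x, planeRefl e l z ∈ Ω ∧ u (planeRefl e l z) = u z := by
  obtain ⟨L, hL, hLL, -⟩ := hs.exists_const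
  have hO : IsOpen (Ω ∩ {y | l < ⟪y, e⟫}) := hs.isOpen.inter
    (isOpen_lt (g := fun y : EuclideanSpace ℝ (Fin n) => ⟪y, e⟫) continuous_const (by fun_prop))
  obtain ⟨ρ, hρ, hb⟩ := Metric.isOpen_iff.1 hO x ⟨hx, hxl⟩
  have hb' : ball x (2 * (ρ / 2)) ⊆ Ω ∩ {y | l < ⟪y, e⟫} := by
    rwa [mul_div_cancel₀ ρ (two_ne_zero)]
  have hRb : ∀ y ∈ ball x (2 * (ρ / 2)), planeRefl e l y ∈ Ω := fun y hy =>
    hR y (hb' hy).1 (hb' hy).2.le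
  have key := strong_max (w := fun y => u (planeRefl e l y) - u y) hL
    (fun y hy => hs.diff_contDiffAt (hb' hy).1 (hRb y hy))
    (fun y hy => sub_nonneg.2 (hle y (hb' hy).1 (hb' hy).2.le))
    (fun y hy => hs.diff_lap he hLL (hb' hy).1 (hRb y hy) (hle y (hb' hy).1 (hb' hy).2.le))
    (by rw [h0, sub_self])
  filter_upwards [ball_mem_nhds x (half_pos hρ)] with z hz
  exact ⟨hRb z (ball_subset_ball (by linarith) hz), sub_eq_zero.1 (key z hz)⟩

/-- If the reflected function touches `u` at one interior point of the cap, then `Ω` is symmetric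
about the mirror. The set of points near which `u` is symmetric is open and, by the strong maximum
principle, relatively closed in the connected set `Ω`. -/
lemma PosSol.symmetric_of_touching {u : EuclideanSpace ℝ (Fin n) → ℝ} {f : ℝ → ℝ}
    (hs : PosSol Ω ν u f) (hconn : IsConnected Ω) (he : ‖e‖ = 1)
    (hR : ∀ x ∈ Ω, l ≤ ⟪x, e⟫ → planeRefl e l x ∈ Ω)
    (hle : ∀ x ∈ Ω, l ≤ ⟪x, e⟫ → u x ≤ u (planeRefl e l x))
    {y : EuclideanSpace ℝ (Fin n)} (hy : y ∈ Ω) (hyl : l < ⟪y, e⟫)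
    (h0 : u (planeRefl e l y) = u y) : ∀ x ∈ Ω, planeRefl e l x ∈ Ω := by
  set Z : Set (EuclideanSpace ℝ (Fin n)) :=
    {x | ∀ᶠ z in 𝓝 x, planeRefl e l z ∈ Ω ∧ u (planeRefl e l z) = u z} with hZ
  have hZo : IsOpen Z := isOpen_iff_mem_nhds.2 fun x hx => by
    have hx : ∀ᶠ z in 𝓝 x, planeRefl e l z ∈ Ω ∧ u (planeRefl e l z) = u z := hx
    exact hx.eventually_nhds
  have hZself : ∀ x ∈ Z, planeRefl e l x ∈ Ω ∧ u (planeRefl e l x) = u x := fun x hx => by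
    have hx : ∀ᶠ z in 𝓝 x, planeRefl e l z ∈ Ω ∧ u (planeRefl e l z) = u z := hx
    exact hx.self_of_nhds
  have hloc : ∀ x ∈ Ω, l < ⟪x, e⟫ → u (planeRefl e l x) = u x → x ∈ Z :=
    fun x hx hxl h => hs.eventually_zero he hR hle hx hxl h
  suffices hsub : Ω ⊆ Z from fun x hx => (hZself x (hsub hx)).1
  refine hconn.isPreconnected.subset_of_closure_inter_subset hZo ⟨y, hy, hloc y hy hyl h0⟩ ?_
  rintro x ⟨hxZ, hx⟩
  have hfr : ∃ᶠ z in 𝓝 x, z ∈ Z := mem_closure_iff_frequently.1 hxZ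
  have hxR : planeRefl e l x ∈ closure Ω := by
    refine mem_closure_iff_frequently.2 ?_
    exact (continuous_refl (e := e) (l := l)).continuousAt.frequently
      (hfr.mono fun z hz => (hZself z hz).1)
  have hxu : u (planeRefl e l x) = u x := by
    have hc1 : Tendsto (fun z => u (planeRefl e l z)) (𝓝[Z] x) (𝓝 (u (planeRefl e l x))) := by
      refine (hs.continuousOn _ hxR).tendsto.comp (tendsto_nhdsWithin_iff.2 ⟨?_, ?_⟩)
      · exact ((continuous_refl (e := e) (l := l)).tendsto x).mono_left nhdsWithin_le_nhds
      · filter_upwards [self_mem_nhdsWithin] with z hz using subset_closure (hZself z hz).1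
    have hc2 : Tendsto (fun z => u z) (𝓝[Z] x) (𝓝 (u x)) :=
      ((hs.contDiffAt hx).continuousAt.tendsto).mono_left nhdsWithin_le_nhds
    have : (𝓝[Z] x).NeBot := mem_closure_iff_nhdsWithin_neBot.1 hxZ
    refine tendsto_nhds_unique hc1 (hc2.congr' ?_)
    filter_upwards [self_mem_nhdsWithin] with z hz using (hZself z hz).2.symm
  have hxR' : planeRefl e l x ∈ Ω := hs.mem_of_pos hxR (by rw [hxu]; exact hs.pos x hx)
  rcases lt_trichotomy l ⟪x, e⟫ with hlt | heq | hgt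
  · exact hloc x hx hlt hxu
  · -- near a point of the mirror: the zero set is propagated through a half ball
    have hO : IsOpen (Ω ∩ planeRefl e l ⁻¹' Ω) :=
      hs.isOpen.inter (hs.isOpen.preimage continuous_refl)
    obtain ⟨ρ, hρ, hb⟩ := Metric.isOpen_iff.1 hO x ⟨hx, hxR'⟩
    have hbR : ∀ z ∈ ball x ρ, planeRefl e l z ∈ ball x ρ := fun z hz => by
      rw [mem_ball, dist_refl_of_mem he heq.symm]; exact hz
    set V := ball x ρ ∩ {z | l < ⟪z, e⟫} with hV
    have hVc : IsPreconnected V := by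
      refine ((convex_ball x ρ).inter ?_).isPreconnected
      have h := convex_halfSpace_gt (𝕜 := ℝ) (f := fun z : EuclideanSpace ℝ (Fin n) => ⟪z, e⟫)
        ⟨fun a b => inner_add_left a b e, fun c a => by simp [inner_smul_left]⟩ l
      exact h
    have hne : (V ∩ Z).Nonempty := by
      obtain ⟨z, hzZ, hzb⟩ := (hfr.and_eventually (ball_mem_nhds x hρ)).exists
      have hev : ∀ᶠ τ in 𝓝[>] (0:ℝ), z + τ • e ∈ Z ∩ ball x ρ := by
        have hc : Continuous (fun τ : ℝ => z + τ • e) := by fun_prop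
        exact nhdsWithin_le_nhds ((hc.tendsto' 0 z (by simp)).eventually
          ((hZo.inter isOpen_ball).mem_nhds ⟨hzZ, hzb⟩))
      rcases le_or_gt l ⟪z, e⟫ with h1 | h1
      · obtain ⟨τ, ⟨k1, k2⟩, k3⟩ := (hev.and self_mem_nhdsWithin).exists
        have k3 : 0 < τ := k3
        refine ⟨z + τ • e, ⟨k2, ?_⟩, k1⟩
        have : ⟪z + τ • e, e⟫ = ⟪z, e⟫ + τ := by
          rw [inner_add_left, inner_smul_left, real_inner_self_eq_norm_sq, he]; simp
        show l < ⟪z + τ • e, e⟫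
        rw [this]; linarith
      · have h2 : l < ⟪planeRefl e l z, e⟫ := by rw [inner_refl he]; linarith
        refine ⟨planeRefl e l z, ⟨hbR z hzb, h2⟩, hloc _ (hb (hbR z hzb)).1 h2 ?_⟩
        rw [refl_refl he, (hZself z hzZ).2]
    have hVZ : V ⊆ Z := by
      refine hVc.subset_of_closure_inter_subset hZo hne ?_
      rintro z ⟨hzZ, hzV⟩
      refine hloc z (hb hzV.1).1 hzV.2 ?_
      have : (𝓝[Z] z).NeBot := mem_closure_iff_nhdsWithin_neBot.1 hzZ
      have hc : ContinuousAt (fun y => u (planeRefl e l y) - u y) z :=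
        (hs.diff_contDiffAt (hb hzV.1).1 (hb hzV.1).2).continuousAt
      have hc' : Tendsto (fun y => u (planeRefl e l y) - u y) (𝓝[Z] z)
          (𝓝 (u (planeRefl e l z) - u z)) := hc.tendsto.mono_left nhdsWithin_le_nhds
      refine sub_eq_zero.1 (tendsto_nhds_unique hc'
        (tendsto_const_nhds.congr' (f₁ := fun _ => (0:ℝ)) ?_))
      filter_upwards [self_mem_nhdsWithin] with a ha
      rw [(hZself a ha).2, sub_self]
    show ∀ᶠ z in 𝓝 x, planeRefl e l z ∈ Ω ∧ u (planeRefl e l z) = u z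
    filter_upwards [ball_mem_nhds x hρ] with z hz
    refine ⟨(hb hz).2, ?_⟩
    rcases lt_trichotomy l ⟪z, e⟫ with h1 | h1 | h1
    · exact (hZself z (hVZ ⟨hz, h1⟩)).2
    · rw [refl_of_mem h1.symm]
    · have h2 : l < ⟪planeRefl e l z, e⟫ := by rw [inner_refl he]; linarith
      have := (hZself _ (hVZ ⟨hbR z hz, h2⟩)).2
      rw [refl_refl he] at this
      exact this.symm
  · have h2 : l < ⟪planeRefl e l x, e⟫ := by rw [inner_refl he]; linarith
    have h3 : planeRefl e l x ∈ Z := hloc _ hxR' h2 (by rw [refl_refl he, hxu])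
    have h4 : ∀ᶠ z in 𝓝 x, planeRefl e l z ∈ Z :=
      (continuous_refl (e := e) (l := l)).continuousAt.eventually (hZo.mem_nhds h3)
    show ∀ᶠ z in 𝓝 x, planeRefl e l z ∈ Ω ∧ u (planeRefl e l z) = u z
    filter_upwards [h4, (continuous_refl (e := e) (l := l)).continuousAt.eventually
      (hs.isOpen.mem_nhds hxR')] with z hz hz2
    have := (hZself _ hz).2
    rw [refl_refl he] at this
    exact ⟨hz2, this.symm⟩

end Symmetry

/-! ### Radial symmetry -/

section Radial

variable {n m : ℕ} {Ω : Set (EuclideanSpace ℝ (Fin n))}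
  {ν : EuclideanSpace ℝ (Fin n) → EuclideanSpace ℝ (Fin n)} {e : EuclideanSpace ℝ (Fin n)}
  {u : Fin m → EuclideanSpace ℝ (Fin n) → ℝ} {f : Fin m → ℝ → ℝ}
  {F : (Fin m → ℝ) → ℝ} {j : Fin m} {c : ℝ}

/-- The outcome of the moving plane procedure in a fixed direction. -/
lemma exists_symmetry (hs : ∀ i, PosSol Ω ν (u i) (f i)) (hconn : IsConnected Ω)
    (hF : NeumannFun F j) (he : ‖e‖ = 1)
    (hneu : ∀ x ∈ frontier Ω, F (fun i => dOn Ω (u i) x (ν x)) = c) :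
    ∃ l, (∀ x ∈ Ω, planeRefl e l x ∈ Ω) ∧
      (∀ x ∈ Ω, l ≤ ⟪x, e⟫ → ∀ i, u i x ≤ u i (planeRefl e l x)) ∧
      (∀ x ∈ Ω, l < ⟪x, e⟫ → ∀ i, fderiv ℝ (u i) x e < 0) := by
  obtain ⟨l, hnG, hG⟩ := exists_critical hs j he hconn.nonempty
  obtain ⟨hcl, hR, hd⟩ := limit_position hs j he hG
  obtain ⟨i, y, hy, hyl, h0⟩ := exists_touching hs hF he hneu hG hnG
  have hle : ∀ x ∈ Ω, l ≤ ⟪x, e⟫ → ∀ i, u i x ≤ u i (planeRefl e l x) := fun x hx hxl =>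
    (hcl x (subset_closure hx) hxl).2
  exact ⟨l, (hs i).symmetric_of_touching hconn he hR (fun x hx hxl => hle x hx hxl i) hy hyl h0,
    hle, hd⟩

/-- A nonempty bounded set has at most one symmetry plane with given normal: the composition of two
such reflections is a translation. -/
lemma symmetry_unique (he : ‖e‖ = 1) (hb : IsBounded Ω) (hne : Ω.Nonempty) {l l' : ℝ}
    (h : ∀ x ∈ Ω, planeRefl e l x ∈ Ω) (h' : ∀ x ∈ Ω, planeRefl e l' x ∈ Ω) : l = l' := by
  obtain ⟨M, hM⟩ := hb.exists_norm_le
  obtain ⟨x, hx⟩ := hne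
  by_contra hll
  have key : ∀ k : ℕ, ∃ y ∈ Ω, ⟪y, e⟫ = ⟪x, e⟫ + k * (2 * (l - l')) := by
    intro k
    induction k with
    | zero => exact ⟨x, hx, by simp⟩
    | succ k ih =>
      obtain ⟨y, hy, hyk⟩ := ih
      refine ⟨_, h _ (h' y hy), ?_⟩
      rw [inner_refl he, inner_refl he, hyk]; push_cast; ring
  have hin : ∀ y ∈ Ω, |⟪y, e⟫| ≤ M := fun y hy => by
    have := abs_real_inner_le_norm y e
    rw [he, mul_one] at this
    exact this.trans (hM y hy)
  have hd : 0 < |2 * (l - l')| := abs_pos.2 (mul_ne_zero two_ne_zero (sub_ne_zero.2 hll))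
  obtain ⟨k, hk⟩ := Archimedean.arch (2 * M + 1) hd
  obtain ⟨y, hy, hyk⟩ := key k
  have h1 : k * (2 * (l - l')) = ⟪y, e⟫ - ⟪x, e⟫ := by rw [hyk]; ring
  have h2 : (k : ℝ) * |2 * (l - l')| ≤ 2 * M := by
    rw [← Nat.abs_cast k, ← abs_mul, h1]
    exact (abs_sub _ _).trans (by linarith [hin y hy, hin x hx])
  rw [nsmul_eq_mul] at hk
  linarith

/-- All symmetry planes pass through a maximum point of the `j`-th component. -/
lemma exists_center (hs : ∀ i, PosSol Ω ν (u i) (f i)) (hconn : IsConnected Ω)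
    (hF : NeumannFun F j)
    (hneu : ∀ x ∈ frontier Ω, F (fun i => dOn Ω (u i) x (ν x)) = c) :
    ∃ x₀ ∈ Ω, ∀ e : EuclideanSpace ℝ (Fin n), ‖e‖ = 1 →
      (∀ x ∈ Ω, planeRefl e ⟪x₀, e⟫ x ∈ Ω ∧ ∀ i, u i (planeRefl e ⟪x₀, e⟫ x) = u i x) ∧
      (∀ x ∈ Ω, ⟪x₀, e⟫ < ⟪x, e⟫ → ∀ i, fderiv ℝ (u i) x e < 0) := by
  have hs0 := hs j
  obtain ⟨a, ha⟩ := hconn.nonempty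
  obtain ⟨x₀, hx₀, hmax⟩ := hs0.isCompact.exists_isMaxOn ⟨a, subset_closure ha⟩ hs0.continuousOn
  have hx₀Ω : x₀ ∈ Ω :=
    hs0.mem_of_pos hx₀ ((hs0.pos a ha).trans_le (hmax (subset_closure ha)))
  have hcrit : fderiv ℝ (u j) x₀ = 0 := by
    refine IsLocalMax.fderiv_eq_zero ?_
    filter_upwards [hs0.isOpen.mem_nhds hx₀Ω] with z hz using hmax (subset_closure hz)
  refine ⟨x₀, hx₀Ω, fun e he => ?_⟩
  obtain ⟨l, hl1, hl2, hl3⟩ := exists_symmetry hs hconn hF he hneu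
  have he' : ‖-e‖ = 1 := by rw [norm_neg, he]
  obtain ⟨l', hl1', hl2', hl3'⟩ := exists_symmetry hs hconn hF he' hneu
  have hneg : ∀ x, planeRefl (-e) l' x = planeRefl e (-l') x := fun x => by
    simp only [planeRefl, inner_neg_right, smul_neg, ← neg_smul]
    congr 2; ring
  simp only [hneg] at hl1' hl2'
  obtain rfl := symmetry_unique he hs0.bdd hconn.nonempty hl1 hl1'
  have k1 : ⟪x₀, e⟫ ≤ -l' := by
    by_contra! hlt
    simpa [hcrit] using hl3 x₀ hx₀Ω hlt j
  have k2 : -l' ≤ ⟪x₀, e⟫ := by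
    by_contra! hlt
    simpa [hcrit] using hl3' x₀ hx₀Ω (by rw [inner_neg_right]; linarith) j
  obtain hl : -l' = ⟪x₀, e⟫ := le_antisymm k2 k1
  rw [hl] at hl1 hl2 hl3 hl2'
  have hle : ∀ x ∈ Ω, ∀ i, u i x ≤ u i (planeRefl e ⟪x₀, e⟫ x) := fun x hx i => by
    rcases le_total ⟪x₀, e⟫ ⟪x, e⟫ with h | h
    · exact hl2 x hx h i
    · exact hl2' x hx (by rw [inner_neg_right]; linarith) i
  refine ⟨fun x hx => ⟨hl1 x hx, fun i => le_antisymm ?_ (hle x hx i)⟩, hl3⟩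
  have := hle _ (hl1 x hx) i
  rwa [refl_refl he] at this

/-- Points equidistant from `x₀` are exchanged by a reflection in a plane through `x₀`. -/
lemma exists_refl_eq {x₀ x y : EuclideanSpace ℝ (Fin n)} (hne : x ≠ y)
    (h : ‖y - x₀‖ = ‖x - x₀‖) :
    ∃ e : EuclideanSpace ℝ (Fin n), ‖e‖ = 1 ∧ planeRefl e ⟪x₀, e⟫ x = y := by
  have hd : 0 < ‖x - y‖ := norm_pos_iff.2 (sub_ne_zero.2 hne)
  refine ⟨‖x - y‖⁻¹ • (x - y), ?_, ?_⟩
  · rw [norm_smul, norm_inv, norm_norm, inv_mul_cancel₀ hd.ne']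
  · have h1 : 2 * ⟪x - x₀, x - y⟫ = ‖x - y‖ ^ 2 := by
      have e1 : x - y = (x - x₀) - (y - x₀) := by abel
      have e2 := norm_sub_sq_real (x - x₀) (y - x₀)
      rw [← e1, h] at e2
      rw [e2, e1, inner_sub_right, real_inner_self_eq_norm_sq]; ring
    have h2 : 2 * (⟪x₀, ‖x - y‖⁻¹ • (x - y)⟫ - ⟪x, ‖x - y‖⁻¹ • (x - y)⟫) = -‖x - y‖ := by
      rw [← inner_sub_left, ← neg_sub x x₀, inner_neg_left, inner_smul_right]
      have : ⟪x - x₀, x - y⟫ = ‖x - y‖ ^ 2 / 2 := by linarith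
      rw [this]; field_simp
    rw [planeRefl, h2, smul_smul, neg_mul, mul_inv_cancel₀ hd.ne', neg_one_smul]
    abel

/-- A bounded connected open set that is radially symmetric about one of its points is a ball. -/
lemma eq_ball_of_radial (hn : 0 < n) (ho : IsOpen Ω) (hconn : IsConnected Ω) (hb : IsBounded Ω)
    {x₀ : EuclideanSpace ℝ (Fin n)} (hx₀ : x₀ ∈ Ω)
    (hrad : ∀ x ∈ Ω, ∀ y, ‖y - x₀‖ = ‖x - x₀‖ → y ∈ Ω) : ∃ R, 0 < R ∧ Ω = ball x₀ R := by
  set N : EuclideanSpace ℝ (Fin n) → ℝ := fun x => ‖x - x₀‖ with hN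
  have hNc : Continuous N := by fun_prop
  have hbdd : BddAbove (N '' Ω) := by
    obtain ⟨M, hM⟩ := hb.exists_norm_le
    refine ⟨M + ‖x₀‖, ?_⟩
    rintro _ ⟨x, hx, rfl⟩
    exact (norm_sub_le x x₀).trans (by linarith [hM x hx])
  -- openness: from every point of `Ω` one can move slightly further away from `x₀`
  have hfar : ∀ x ∈ Ω, ∃ y ∈ Ω, N x < N y := by
    intro x hx
    obtain ⟨v, hv, hvx⟩ : ∃ v : EuclideanSpace ℝ (Fin n), ‖v‖ = 1 ∧ ‖x - x₀‖ • v = x - x₀ := by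
      by_cases h : x = x₀
      · exact ⟨EuclideanSpace.single ⟨0, hn⟩ 1, by simp, by simp [h]⟩
      · have hd : 0 < ‖x - x₀‖ := norm_pos_iff.2 (sub_ne_zero.2 h)
        refine ⟨‖x - x₀‖⁻¹ • (x - x₀), ?_, ?_⟩
        · rw [norm_smul, norm_inv, norm_norm, inv_mul_cancel₀ hd.ne']
        · rw [smul_smul, mul_inv_cancel₀ hd.ne', one_smul]
    have hc : Continuous (fun τ : ℝ => x + τ • v) := by fun_prop
    have hev : ∀ᶠ τ in 𝓝[>] (0:ℝ), x + τ • v ∈ Ω :=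
      nhdsWithin_le_nhds ((hc.tendsto' 0 x (by simp)).eventually (ho.mem_nhds hx))
    obtain ⟨τ, k1, k2⟩ := (hev.and self_mem_nhdsWithin).exists
    have k2 : 0 < τ := k2
    refine ⟨_, k1, ?_⟩
    have e1 : x + τ • v - x₀ = (‖x - x₀‖ + τ) • v := by
      rw [add_smul, hvx]; abel
    simp only [hN]
    rw [e1, norm_smul, hv, mul_one, Real.norm_of_nonneg (by positivity)]
    linarith
  have hlt : ∀ x ∈ Ω, N x < sSup (N '' Ω) := fun x hx => by
    obtain ⟨y, hy, hxy⟩ := hfar x hx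
    exact hxy.trans_le (le_csSup hbdd ⟨y, hy, rfl⟩)
  refine ⟨sSup (N '' Ω), (norm_nonneg _).trans_lt (hlt x₀ hx₀), ?_⟩
  ext x
  rw [mem_ball_iff_norm]
  refine ⟨hlt x, fun hx => ?_⟩
  obtain ⟨_, ⟨z, hz, rfl⟩, hxz⟩ := exists_lt_of_lt_csSup (Nonempty.image N ⟨x₀, hx₀⟩) hx
  obtain ⟨w, hw, hwx⟩ := hconn.isPreconnected.intermediate_value hx₀ hz hNc.continuousOn
    (show N x ∈ Icc (N x₀) (N z) from ⟨by simp [hN], hxz.le⟩)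
  exact hrad w hw x hwx.symm

end Radial

/-- **Serrin-type theorem for elliptic systems with a generalized Neumann condition.**
If `u_1, …, u_m ∈ C²(cl Ω)` are positive solutions of `-Δu_i = f_i(u_i)` in `Ω`, `u_i = 0` on
`∂Ω`, overdetermined with `F(∂u₁/∂ν, …, ∂u_m/∂ν) = c` on `∂Ω`, where each `f_i = g_i + h_i`
with `g_i` locally Lipschitz and `h_i` non-decreasing, `F` is `C¹` on `(0,∞)^m`,
non-decreasing in each variable on `[0,∞)^m`, and `∂F/∂x_j > 0` on `(0,∞)^m` for some `j`,
then `Ω` is a ball, each `u_i` is radially symmetric about its center and has strictly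
negative radial derivative in the punctured ball. -/
theorem serrin_type_system {n m : ℕ} (hn : 0 < n)
    (Ω : Set (EuclideanSpace ℝ (Fin n)))
    (ν : EuclideanSpace ℝ (Fin n) → EuclideanSpace ℝ (Fin n))
    (hΩo : IsOpen Ω) (hΩconn : IsConnected Ω) (hΩb : IsBounded Ω)
    (hΩbd : IsC2DomainWithInnerNormal Ω ν)
    (u : Fin m → EuclideanSpace ℝ (Fin n) → ℝ)
    (f g h : Fin m → ℝ → ℝ) (F : (Fin m → ℝ) → ℝ) (c : ℝ)
    (hu : ∀ i, ContDiffOn ℝ 2 (u i) (closure Ω))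
    (hupos : ∀ i, ∀ x ∈ Ω, 0 < u i x)
    (heq : ∀ i, ∀ x ∈ Ω, lap (u i) x = -(f i (u i x)))
    (hdir : ∀ i, ∀ x ∈ frontier Ω, u i x = 0)
    (hneu : ∀ x ∈ frontier Ω,
      F (fun i => fderivWithin ℝ (u i) (closure Ω) x (ν x)) = c)
    (hfgh : ∀ i, f i = g i + h i)
    (hg : ∀ i, LocallyLipschitz (g i))
    (hh : ∀ i, Monotone (h i))
    (hF1 : ContDiffOn ℝ 1 F {y : Fin m → ℝ | ∀ i, 0 < y i})
    (hFmono : ∀ (i : Fin m) (y : Fin m → ℝ), (∀ k, 0 ≤ y k) → ∀ t > (0 : ℝ),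
      F y ≤ F (Function.update y i (y i + t)))
    (hFj : ∃ j : Fin m, ∀ y : Fin m → ℝ, (∀ k, 0 < y k) →
      0 < fderiv ℝ F y (Pi.single j 1)) :
    ∃ (x₀ : EuclideanSpace ℝ (Fin n)) (R : ℝ), 0 < R ∧ Ω = Metric.ball x₀ R ∧
      ∀ i, (∃ U : ℝ → ℝ, ∀ x ∈ closure Ω, u i x = U ‖x - x₀‖) ∧
        ∀ x ∈ Ω, x ≠ x₀ → fderiv ℝ (u i) x (‖x - x₀‖⁻¹ • (x - x₀)) < 0 := by
  obtain ⟨j, hj⟩ := hFj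
  have hs : ∀ i, PosSol Ω ν (u i) (f i) := fun i =>
    ⟨hΩo, hΩb, hΩbd, hu i, hupos i, hdir i, heq i, g i, h i, hfgh i, hg i, hh i⟩
  have hF : NeumannFun F j := ⟨hF1, hFmono, hj⟩
  obtain ⟨x₀, hx₀, hsym⟩ := exists_center hs hΩconn hF hneu
  have hrad : ∀ x ∈ Ω, ∀ y, ‖y - x₀‖ = ‖x - x₀‖ → y ∈ Ω ∧ ∀ i, u i y = u i x := by
    intro x hx y hxy
    by_cases hne : x = y
    · subst hne; exact ⟨hx, fun _ => rfl⟩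
    · obtain ⟨e, he, rfl⟩ := exists_refl_eq hne hxy
      exact (hsym e he).1 x hx
  obtain ⟨R, hR, hball⟩ := eq_ball_of_radial hn hΩo hΩconn hΩb hx₀
    (fun x hx y hxy => (hrad x hx y hxy).1)
  refine ⟨x₀, R, hR, hball, fun i => ⟨?_, fun x hx hne => ?_⟩⟩
  · classical
    refine ⟨fun r => if hr : ∃ x ∈ Ω, ‖x - x₀‖ = r then u i hr.choose else 0, fun x hx => ?_⟩
    by_cases hr : ∃ z ∈ Ω, ‖z - x₀‖ = ‖x - x₀‖
    · simp only [dif_pos hr]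
      exact (hrad _ hr.choose_spec.1 x hr.choose_spec.2.symm).2 i
    · simp only [dif_neg hr]
      rcases (hs i).mem_or_frontier hx with h | h
      · exact absurd ⟨x, h, rfl⟩ hr
      · exact hdir i x h
  · have hd : 0 < ‖x - x₀‖ := norm_pos_iff.2 (sub_ne_zero.2 hne)
    refine (hsym _ ?_).2 x hx ?_ i
    · rw [norm_smul, norm_inv, norm_norm, inv_mul_cancel₀ hd.ne']
    · rw [← sub_pos, ← inner_sub_left, inner_smul_right, real_inner_self_eq_norm_sq]
      positivity
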